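/- arXiv:2409.05952 — 3 statements merged into one kernel-verified Lean document; each statement's English description precedes it below -/
import Mathlib

section
/- Fix an integer d ≥ 2 and reals C > 0 and ε > 0. There exists a constant C' > 0 such that for every integer N ≥ 2, every polynomial P ∈ ℤ[x] of degree d with no repeated roots (i.e. P is squarefree as a polynomial) all of whose coefficients have absolute value at most N^C, and all integers a, b with 1 ≤ a, b ≤ N^C and a ≠ b, the number of pairs of integers (x, y) with 1 ≤ x, y ≤ N and a·P(x) = b·P(y) is at most C' · N^{1/3 + ε}. -/
theorem divisor_bound (δ : ℝ) (hδ : 0 < δ) :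
    ∃ K : ℝ, 1 ≤ K ∧ ∀ n : ℕ, n ≠ 0 → (n.divisors.card : ℝ) ≤ K * (n : ℝ) ^ δ := by
  have hl2 : 0 < Real.log 2 := Real.log_pos (by norm_num)
  set c : ℝ := max 1 (1 / (δ * Real.log 2)) with hc
  have hc1 : 1 ≤ c := le_max_left _ _
  have hc2 : 1 ≤ c * (δ * Real.log 2) := by
    have : 1 / (δ * Real.log 2) ≤ c := le_max_right _ _
    have h0 : 0 < δ * Real.log 2 := by positivity
    rwa [div_le_iff₀ h0] at this
  set P0 : ℕ := ⌈(2:ℝ) ^ (1/δ)⌉₊ with hP0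
  refine ⟨c ^ P0, one_le_pow₀ hc1, ?_⟩
  intro n hn
  rw [Nat.card_divisors hn]
  have key : ∀ p ∈ n.primeFactors, ((n.factorization p + 1 : ℕ) : ℝ) ≤
      (if p < P0 then c else 1) * ((p : ℝ) ^ (n.factorization p)) ^ δ := by
    intro p hp
    have hpp := Nat.prime_of_mem_primeFactors hp
    set k := n.factorization p
    have hp2 : (2:ℝ) ≤ p := by exact_mod_cast hpp.two_le
    rw [← Real.rpow_natCast, ← Real.rpow_mul (by positivity)]
    split_ifs with h
    · have h1 : (2:ℝ) ^ ((k:ℝ) * δ) ≤ (p:ℝ) ^ ((k:ℝ) * δ) :=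
        Real.rpow_le_rpow (by norm_num) hp2 (by positivity)
      have h2 : 1 + (k:ℝ) * δ * Real.log 2 ≤ (2:ℝ) ^ ((k:ℝ) * δ) := by
        rw [Real.rpow_def_of_pos (by norm_num)]
        have := Real.add_one_le_exp (Real.log 2 * (k * δ))
        linarith
      have h3 : c * (1 + (k:ℝ) * δ * Real.log 2) ≤ c * (p:ℝ) ^ ((k:ℝ) * δ) := by
        gcongr; linarith
      have : (0:ℝ) ≤ k := by positivity
      push_cast
      nlinarith
    · push Not at h
      have h1 : (2:ℝ) ^ (1/δ) ≤ p := (Nat.le_ceil _).trans (by exact_mod_cast h)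
      have h2 : (2:ℝ) ≤ (p:ℝ) ^ δ := by
        calc (2:ℝ) = ((2:ℝ) ^ (1/δ)) ^ δ := by
              rw [← Real.rpow_mul (by norm_num)]; field_simp; simp
          _ ≤ _ := Real.rpow_le_rpow (by positivity) h1 hδ.le
      rw [mul_comm (k:ℝ) δ, Real.rpow_mul (by positivity), Real.rpow_natCast, one_mul]
      calc ((k+1:ℕ):ℝ) ≤ (2:ℝ)^k := by exact_mod_cast Nat.lt_two_pow_self
        _ ≤ _ := by gcongr
  push_cast at key ⊢
  calc ∏ x ∈ n.primeFactors, ((n.factorization x : ℝ) + 1)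
      ≤ ∏ p ∈ n.primeFactors, (if p < P0 then c else 1) * ((p : ℝ) ^ (n.factorization p)) ^ δ :=
        Finset.prod_le_prod (fun i _ => by positivity) key
    _ = (∏ p ∈ n.primeFactors, (if p < P0 then c else 1)) * (n : ℝ) ^ δ := by
        rw [Finset.prod_mul_distrib, Real.finsetProd_rpow _ _ (fun i _ => by positivity)]
        congr 2
        conv_rhs => rw [← Nat.factorization_prod_pow_eq_self hn]
        rw [Finsupp.prod]
        push_cast
        rfl
    _ ≤ _ := by
        gcongr
        rw [Finset.prod_ite]
        simp only [Finset.prod_const, one_pow, mul_one]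
        apply pow_le_pow_right₀ hc1
        calc _ ≤ (Finset.range P0).card := Finset.card_le_card (by intro x; simp)
          _ = P0 := by simp


theorem pell_count (D : ℤ) (hD : D ≠ 0) (hsq : Squarefree D) (L : ℕ) (S : Finset (ℤ × ℤ))
    (hS : ∀ s ∈ S, s.1 ^ 2 - D * s.2 ^ 2 = 1 ∧ |s.1| ≤ 2 ^ L) : S.card ≤ 4 * L + 9 := by
  classical
  by_cases hcase : 1 < D
  · have hns : ¬ IsSquare D := by
      rintro ⟨r, hr⟩
      have := hsq r ⟨1, by rw [hr]; ring⟩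
      rcases Int.isUnit_iff.1 this with h | h <;> subst h <;> omega
    obtain ⟨a, ha⟩ := Pell.IsFundamental.exists_of_not_isSquare (by omega) hns
    have hax : 2 ≤ a.x := by have := ha.1; omega
    have hgrow : ∀ n : ℕ, (2:ℤ) ^ n ≤ (a ^ n).x := by
      intro n
      induction n with
      | zero => simp
      | succ n ih =>
        have hy : 0 ≤ (a ^ n).y := by
          cases n with
          | zero => simp
          | succ n => exact (Pell.Solution₁.y_pow_succ_pos (by omega) ha.2.1 n).le
        have hp : (0:ℤ) < 2 ^ n := by positivity
        rw [pow_succ', pow_succ', Pell.Solution₁.x_mul]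
        have h1 : 0 ≤ D * (a.y * (a^n).y) :=
          mul_nonneg (by omega) (mul_nonneg ha.2.1.le hy)
        nlinarith
    have hgz : ∀ n : ℤ, (2:ℤ) ^ n.natAbs ≤ (a ^ n).x := by
      intro n
      rcases Int.natAbs_eq n with h | h
      · conv_rhs => rw [h]
        rw [zpow_natCast]; exact hgrow _
      · conv_rhs => rw [h]
        rw [zpow_neg, zpow_natCast, Pell.Solution₁.x_inv]; exact hgrow _
    have hsub : S ⊆ (Finset.Icc (-(L:ℤ)) L).image (fun n => ((a ^ n).x, (a ^ n).y)) ∪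
        (Finset.Icc (-(L:ℤ)) L).image (fun n => (-(a ^ n).x, -(a ^ n).y)) := by
      intro s hs
      obtain ⟨h1, h2⟩ := hS s hs
      have hb : ∀ n : ℤ, |(a^n).x| ≤ 2 ^ L → n ∈ Finset.Icc (-(L:ℤ)) L := by
        intro n hn
        have h3 := (hgz n).trans ((le_abs_self _).trans hn)
        have h4 := (pow_le_pow_iff_right₀ (by norm_num : (1:ℤ) < 2)).1 h3
        rw [Finset.mem_Icc]; omega
      rw [Finset.mem_union, Finset.mem_image, Finset.mem_image]
      obtain ⟨n, hn⟩ := ha.eq_zpow_or_neg_zpow (Pell.Solution₁.mk s.1 s.2 h1)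
      rcases hn with hn | hn
      · left
        have e1 := congrArg Pell.Solution₁.x hn
        have e2 := congrArg Pell.Solution₁.y hn
        simp at e1 e2
        exact ⟨n, hb n (by rw [← e1]; exact h2), by ext <;> simp [e1, e2]⟩
      · right
        have e1 := congrArg Pell.Solution₁.x hn
        have e2 := congrArg Pell.Solution₁.y hn
        simp at e1 e2
        exact ⟨n, hb n (by rw [← abs_neg, ← e1]; exact h2), by ext <;> simp [e1, e2]⟩
    calc S.card ≤ _ := Finset.card_le_card hsub
      _ ≤ _ := Finset.card_union_le _ _
      _ ≤ (Finset.Icc (-(L:ℤ)) L).card + (Finset.Icc (-(L:ℤ)) L).card :=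
        add_le_add Finset.card_image_le Finset.card_image_le
      _ ≤ _ := by simp; omega
  · have hsub : S ⊆ (Finset.Icc (-1:ℤ) 1) ×ˢ (Finset.Icc (-1:ℤ) 1) := by
      intro s hs
      obtain ⟨h1, h2⟩ := hS s hs
      have hxy : s.1 ^ 2 ≤ 1 ∧ s.2 ^ 2 ≤ 1 := by
        rcases (by omega : D = 1 ∨ D ≤ -1) with h | h
        · subst h
          have h3 : (s.1 - s.2) * (s.1 + s.2) = 1 := by linarith
          rcases Int.mul_eq_one_iff_eq_one_or_neg_one.1 h3 with h | h
          · obtain ⟨h, h'⟩ := h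
            have : s.2 = 0 := by omega
            have : s.1 = 1 := by omega
            simp [*]
          · obtain ⟨h, h'⟩ := h
            have : s.2 = 0 := by omega
            have : s.1 = -1 := by omega
            simp [*]
        · constructor <;> nlinarith [sq_nonneg s.1, sq_nonneg s.2]
      simp only [Finset.mem_product, Finset.mem_Icc]
      refine ⟨⟨?_, ?_⟩, ?_, ?_⟩ <;> nlinarith [hxy.1, hxy.2]
    calc S.card ≤ _ := Finset.card_le_card hsub
      _ = 9 := by simp
      _ ≤ _ := by omega

theorem sqrt_count (D : ℤ) (hsq : Squarefree D) (n : ℕ) (hn : n ≠ 0) (Z : Finset ℤ)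
    (hZ : ∀ z ∈ Z, 0 ≤ z ∧ z < n ∧ (n : ℤ) ∣ z ^ 2 - D) : Z.card ≤ 2 * n.divisors.card := by
  classical
  rcases Z.eq_empty_or_nonempty with rfl | ⟨z0, hz0⟩
  · simp
  have hmap : ∀ z ∈ Z, Int.gcd (z - z0) n ∈ n.divisors := by
    intro z hz
    rw [Nat.mem_divisors]
    exact ⟨by exact_mod_cast Int.gcd_dvd_right (z - z0) (n:ℤ), hn⟩
  rw [mul_comm]
  refine (Finset.card_le_mul_card_image_of_maps_to (n := 2) hmap ?_).trans (by rw [mul_comm])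
  intro g hg
  by_contra hcon
  push Not at hcon
  obtain ⟨p, hp, q, hq, r, hr, hpq, hpr, hqr⟩ := Finset.two_lt_card.1 hcon
  simp only [Finset.mem_filter] at hp hq hr
  obtain ⟨⟨g', hgg⟩, -⟩ := Nat.mem_divisors.1 hg
  have hg0 : g ≠ 0 := by rintro rfl; simp at hgg; omega
  have hdiv : ∀ z ∈ Z, Int.gcd (z - z0) n = g → (g:ℤ) ∣ z - z0 ∧ (g':ℤ) ∣ z + z0 := by
    intro z hz h
    refine ⟨h ▸ Int.gcd_dvd_left _ _, ?_⟩
    have h1 : (n:ℤ) ∣ (z - z0) * (z + z0) := by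
      have := dvd_sub (hZ z hz).2.2 (hZ z0 hz0).2.2
      rw [show (z - z0) * (z + z0) = (z^2-D) - (z0^2-D) by ring]; exact this
    obtain ⟨w, hw⟩ : (g:ℤ) ∣ z - z0 := h ▸ Int.gcd_dvd_left _ _
    have hg0' : (g:ℤ) ≠ 0 := by exact_mod_cast hg0
    have hcop : IsCoprime (g':ℤ) w := by
      rw [Int.isCoprime_iff_gcd_eq_one]
      have h2 : Int.gcd ((g:ℤ) * w) ((g:ℤ) * g') = g := by
        rw [← hw]; rw [hgg] at h; push_cast at h; exact h
      rw [Int.gcd_mul_left] at h2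
      rw [Int.natAbs_natCast] at h2
      rw [Int.gcd_comm]
      exact Nat.eq_of_mul_eq_mul_left (by omega : 0 < g) (by rw [h2, mul_one])
    have h3 : (g':ℤ) ∣ w * (z + z0) := by
      rw [hw, hgg] at h1; push_cast at h1
      rw [mul_assoc] at h1
      exact (mul_dvd_mul_iff_left hg0').1 h1
    exact hcop.dvd_of_dvd_mul_left h3
  obtain ⟨hdp1, hdp2⟩ := hdiv p hp.1 hp.2
  -- h = gcd g g'
  set h := Nat.gcd g g' with hh
  have hh2 : h ∣ 2 := by
    have a1 : (h:ℤ) ∣ p - z0 := (Int.natCast_dvd_natCast.2 (Nat.gcd_dvd_left g g')).trans hdp1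
    have a2 : (h:ℤ) ∣ p + z0 := (Int.natCast_dvd_natCast.2 (Nat.gcd_dvd_right g g')).trans hdp2
    have a3 : (h:ℤ) ∣ 2 * z0 := by
      rw [show 2 * z0 = (p + z0) - (p - z0) by ring]; exact dvd_sub a2 a1
    have a4 : (h:ℤ) * h ∣ (2 * z0) * (2 * z0) := mul_dvd_mul a3 a3
    have a5 : (h:ℤ) * h ∣ z0 ^ 2 - D := by
      refine dvd_trans ?_ (hZ z0 hz0).2.2
      rw [hgg]; push_cast
      exact mul_dvd_mul (Int.natCast_dvd_natCast.2 (Nat.gcd_dvd_left g g'))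
        (Int.natCast_dvd_natCast.2 (Nat.gcd_dvd_right g g'))
    have a6 : (h:ℤ) * h ∣ 4 * D := by
      have := dvd_sub a4 (Dvd.dvd.mul_left a5 4)
      rw [show 4 * D = (2 * z0) * (2 * z0) - 4 * (z0 ^ 2 - D) by ring]; exact this
    rcases Nat.even_or_odd' h with ⟨k, hk | hk⟩
    · have : (k:ℤ) * k ∣ D := by
        rw [hk] at a6; push_cast at a6
        have e : (2 * (k:ℤ)) * (2 * k) = 4 * (k * k) := by ring
        rw [e] at a6
        exact (mul_dvd_mul_iff_left (by norm_num)).1 a6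
      have := Int.isUnit_iff.1 (hsq _ this)
      have : k = 1 := by omega
      rw [hk, this]
    · have hc : IsCoprime ((h:ℤ) * h) 4 := by
        have : IsCoprime (h:ℤ) 2 := by
          rw [hk]; push_cast
          exact ⟨1, -k, by ring⟩
        have h4 : IsCoprime (h:ℤ) (2 * 2) := this.mul_right this
        exact (h4.mul_left h4)
      have := Int.isUnit_iff.1 (hsq _ (hc.dvd_of_dvd_mul_left a6))
      have : h = 1 := by omega
      rw [this]; norm_num
  have hpair : ∀ z w, z ∈ Z ∧ Int.gcd (z - z0) n = g → w ∈ Z ∧ Int.gcd (w - z0) n = g → z ≠ w →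
      2 * (z - w) = n ∨ 2 * (z - w) = -n := by
    intro z w hz hw hne
    obtain ⟨b1, b2⟩ := hdiv z hz.1 hz.2
    obtain ⟨c1, c2⟩ := hdiv w hw.1 hw.2
    have d1 : (g:ℤ) ∣ z - w := by
      rw [show z - w = (z - z0) - (w - z0) by ring]; exact dvd_sub b1 c1
    have d2 : (g':ℤ) ∣ z - w := by
      rw [show z - w = (z + z0) - (w + z0) by ring]; exact dvd_sub b2 c2
    have d3 : ((Nat.lcm g g' : ℕ):ℤ) ∣ z - w := by
      rw [Int.natCast_dvd] at *
      exact Nat.lcm_dvd d1 d2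
    have d4 : (n:ℤ) ∣ 2 * (z - w) := by
      have : (n:ℤ) = (h:ℤ) * (Nat.lcm g g' : ℕ) := by
        rw [hgg, hh]; exact_mod_cast (Nat.gcd_mul_lcm g g').symm
      rw [this]
      exact mul_dvd_mul (by exact_mod_cast hh2) d3
    obtain ⟨k, hk⟩ := d4
    have z1 := hZ z hz.1
    have w1 := hZ w hw.1
    have hk1 : k < 2 := by
      by_contra hc; push Not at hc
      have : (n:ℤ) * 2 ≤ n * k := by gcongr
      omega
    have hk2 : -2 < k := by
      by_contra hc; push Not at hc
      have : (n:ℤ) * k ≤ n * (-2) := by gcongr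
      omega
    have : k = -1 ∨ k = 0 ∨ k = 1 := by omega
    rcases this with rfl | rfl | rfl
    · right; omega
    · exfalso; apply hne; omega
    · left; omega
  have e1 := hpair p q hp hq hpq
  have e2 := hpair p r hp hr hpr
  have e3 := hpair q r hq hr hqr
  have : n ≠ 0 := hn
  have z1 := hZ p hp.1
  have z2 := hZ q hq.1
  have z3 := hZ r hr.1
  omega


theorem prim_count (D m : ℤ) (hD : D ≠ 0) (hsq : Squarefree D) (hm : m ≠ 0) (L : ℕ)
    (hDL : |D| ≤ 2 ^ L) (S : Finset (ℤ × ℤ))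
    (hS : ∀ s ∈ S, s.1 ^ 2 - D * s.2 ^ 2 = m ∧ IsCoprime s.1 s.2 ∧ |s.1| ≤ 2 ^ L ∧ |s.2| ≤ 2 ^ L) :
    S.card ≤ 2 * m.natAbs.divisors.card * (4 * (3 * L + 1) + 9) := by
  classical
  have hn : m.natAbs ≠ 0 := by omega
  have hnm : ((m.natAbs : ℕ) : ℤ) ∣ m := Int.natAbs_dvd.2 dvd_rfl
  have hmn : m ∣ ((m.natAbs : ℕ) : ℤ) := Int.dvd_natAbs.2 dvd_rfl
  have hex : ∀ s : ℤ × ℤ, ∃ z : ℤ, s ∈ S → 0 ≤ z ∧ z < m.natAbs ∧ m ∣ s.1 - z * s.2 ∧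
      (m.natAbs : ℤ) ∣ z ^ 2 - D := by
    intro s
    by_cases hs : s ∈ S
    swap
    · exact ⟨0, fun h => absurd h hs⟩
    obtain ⟨h1, h2, -, -⟩ := hS s hs
    have hc : IsCoprime s.2 m := by
      rw [← h1, show s.1 ^ 2 - D * s.2 ^ 2 = s.1 ^ 2 + s.2 * (- (D * s.2)) by ring]
      exact IsCoprime.add_mul_left_right (h2.symm.pow_right) _
    obtain ⟨u, v, huv⟩ := id hc
    have key : m ∣ s.1 - (s.1 * u % m.natAbs) * s.2 := by
      have e := Int.emod_add_mul_ediv (s.1 * u) m.natAbs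
      have : s.1 - (s.1 * u % m.natAbs) * s.2 = m * (s.1 * v) + m.natAbs * (s.1 * u / m.natAbs * s.2) := by
        have : s.1 * u % m.natAbs = s.1 * u - m.natAbs * (s.1 * u / m.natAbs) := by linarith
        rw [this]
        linear_combination (- s.1) * huv
      rw [this]
      exact dvd_add (dvd_mul_right _ _) (hmn.mul_right _)
    refine ⟨s.1 * u % m.natAbs, fun _ => ⟨Int.emod_nonneg _ (by omega),
      Int.emod_lt_of_pos _ (by omega), key, hnm.trans ?_⟩⟩
    set z := s.1 * u % m.natAbs
    have h3 : m ∣ s.2 ^ 2 * (z ^ 2 - D) := by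
      rw [show s.2 ^ 2 * (z ^ 2 - D) = (s.1 ^ 2 - D * s.2 ^ 2) - (s.1 - z * s.2) * (s.1 + z * s.2) by ring, h1]
      exact dvd_sub dvd_rfl (key.mul_right _)
    exact (hc.symm.pow_right (n := 2)).dvd_of_dvd_mul_left h3
  choose z hz using hex
  have hZ : (S.image z).card ≤ 2 * m.natAbs.divisors.card := by
    apply sqrt_count D hsq _ hn
    intro w hw
    obtain ⟨s, hs, rfl⟩ := Finset.mem_image.1 hw
    exact ⟨(hz s hs).1, (hz s hs).2.1, (hz s hs).2.2.2⟩
  have hfib : ∀ w ∈ S.image z, (S.filter (fun s => z s = w)).card ≤ 4 * (3 * L + 1) + 9 := by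
    intro w hw
    obtain ⟨s0, hs0, rfl⟩ := Finset.mem_image.1 hw
    set T := S.filter (fun s => z s = z s0) with hT
    obtain ⟨p1, p2, p3, p4⟩ := hS s0 hs0
    have hdv : ∀ s ∈ T, m ∣ s.1 * s0.1 - D * (s.2 * s0.2) ∧ m ∣ s.2 * s0.1 - s.1 * s0.2 := by
      intro s hs
      obtain ⟨hs, hzs⟩ := Finset.mem_filter.1 hs
      have k1 := (hz s hs).2.2.1
      have k2 := (hz s0 hs0).2.2.1
      have k3 := hmn.trans (hz s0 hs0).2.2.2
      rw [hzs] at k1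
      constructor
      · rw [show s.1 * s0.1 - D * (s.2 * s0.2) = (s.1 - z s0 * s.2) * s0.1 +
          (s0.1 - z s0 * s0.2) * (z s0 * s.2) + (z s0 ^ 2 - D) * (s.2 * s0.2) by ring]
        exact dvd_add (dvd_add (k1.mul_right _) (k2.mul_right _)) (k3.mul_right _)
      · rw [show s.2 * s0.1 - s.1 * s0.2 = (s0.1 - z s0 * s0.2) * s.2 - (s.1 - z s0 * s.2) * s0.2 by ring]
        exact dvd_sub (k2.mul_right _) (k1.mul_right _)
    let f : ℤ × ℤ → ℤ × ℤ := fun s => ((s.1 * s0.1 - D * (s.2 * s0.2)) / m, (s.2 * s0.1 - s.1 * s0.2) / m)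
    have hf1 : ∀ s ∈ T, m * (f s).1 = s.1 * s0.1 - D * (s.2 * s0.2) := fun s hs =>
      Int.mul_ediv_cancel' (hdv s hs).1
    have hf2 : ∀ s ∈ T, m * (f s).2 = s.2 * s0.1 - s.1 * s0.2 := fun s hs =>
      Int.mul_ediv_cancel' (hdv s hs).2
    have hinj : Set.InjOn f T := by
      intro s hs t ht hst
      have hs' : s ∈ T := hs
      have ht' : t ∈ T := ht
      have a1 := hf1 s hs'; have a2 := hf2 s hs'
      have b1 := hf1 t ht'; have b2 := hf2 t ht'
      rw [hst] at a1 a2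
      have e1 : s.1 * s0.1 - D * (s.2 * s0.2) = t.1 * s0.1 - D * (t.2 * s0.2) := by linarith
      have e2 : s.2 * s0.1 - s.1 * s0.2 = t.2 * s0.1 - t.1 * s0.2 := by linarith
      have c1 : m * s.1 = m * t.1 := by
        rw [← p1]; linear_combination s0.1 * e1 + D * s0.2 * e2
      have c2 : m * s.2 = m * t.2 := by
        rw [← p1]; linear_combination s0.2 * e1 + s0.1 * e2
      exact Prod.ext (mul_left_cancel₀ hm c1) (mul_left_cancel₀ hm c2)
    rw [← Finset.card_image_of_injOn hinj]
    apply pell_count D hD hsq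
    intro u hu
    obtain ⟨s, hs, rfl⟩ := Finset.mem_image.1 hu
    obtain ⟨q1, q2, q3, q4⟩ := hS s (Finset.mem_filter.1 hs).1
    have a1 := hf1 s hs; have a2 := hf2 s hs
    constructor
    · have : m ^ 2 * ((f s).1 ^ 2 - D * (f s).2 ^ 2) = m ^ 2 * 1 := by
        calc _ = (m * (f s).1) ^ 2 - D * (m * (f s).2) ^ 2 := by ring
          _ = (s.1 ^ 2 - D * s.2 ^ 2) * (s0.1 ^ 2 - D * s0.2 ^ 2) := by rw [a1, a2]; ring
          _ = _ := by rw [q1, p1]; ring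
      exact mul_left_cancel₀ (pow_ne_zero 2 hm) this
    · have h1 : |(f s).1| ≤ |m * (f s).1| := by
        rw [abs_mul]
        have : 1 ≤ |m| := Int.one_le_abs hm
        nlinarith [abs_nonneg (f s).1]
      refine h1.trans ?_
      rw [a1]
      have h2 : |s.1 * s0.1| ≤ 2 ^ L * 2 ^ L := by rw [abs_mul]; gcongr
      have h3 : |D * (s.2 * s0.2)| ≤ 2 ^ L * (2 ^ L * 2 ^ L) := by rw [abs_mul, abs_mul]; gcongr
      have h4 : (1:ℤ) ≤ 2 ^ L := one_le_pow₀ (by norm_num)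
      have h5 : (2:ℤ) ^ (3 * L + 1) = 2 * (2 ^ L * (2 ^ L * 2 ^ L)) := by
        rw [pow_succ, show 3 * L = L + (L + L) by ring, pow_add, pow_add]; ring
      rw [h5]
      refine (abs_sub _ _).trans ?_
      have : (2:ℤ) ^ L * 2 ^ L ≤ 2 ^ L * (2 ^ L * 2 ^ L) := by
        nlinarith [mul_pos (show (0:ℤ) < 2 ^ L by positivity) (show (0:ℤ) < 2 ^ L by positivity)]
      linarith
  calc S.card ≤ (4 * (3 * L + 1) + 9) * (S.image z).card :=
        Finset.card_le_mul_card_image S _ hfib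
    _ ≤ (4 * (3 * L + 1) + 9) * (2 * m.natAbs.divisors.card) := by gcongr
    _ = _ := by ring

theorem conic_count (D m : ℤ) (hD : D ≠ 0) (hm : m ≠ 0) (L : ℕ)
    (hDL : |D| ≤ 2 ^ L) (S : Finset (ℤ × ℤ))
    (hS : ∀ s ∈ S, s.1 ^ 2 - D * s.2 ^ 2 = m ∧ |s.1| ≤ 2 ^ L ∧ |s.2| ≤ 2 ^ L) :
    S.card ≤ 2 * m.natAbs.divisors.card ^ 2 * (24 * L + 13) := by
  classical
  obtain ⟨f, D0, hf0, hDf, hsq⟩ : ∃ f D0 : ℤ, 0 < f ∧ D = D0 * f ^ 2 ∧ Squarefree D0 := by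
    obtain ⟨a, b, h1, h2⟩ := Nat.sq_mul_squarefree D.natAbs
    have hb : b ≠ 0 := by rintro rfl; simp at h1; omega
    have h1' : (D.natAbs : ℤ) = (b:ℤ) ^ 2 * a := by exact_mod_cast h1.symm
    rcases Int.natAbs_eq D with h | h
    · exact ⟨b, a, by omega, by rw [h, h1']; ring, by
        rw [← Int.squarefree_natAbs]; simpa using h2⟩
    · exact ⟨b, -a, by omega, by rw [h, h1']; ring, by
        rw [← Int.squarefree_natAbs]; simpa using h2⟩
  have hD0 : D0 ≠ 0 := by rintro rfl; simp at hDf; exact hD hDf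
  have hDabs : |D| = |D0| * f ^ 2 := by rw [hDf, abs_mul, abs_of_nonneg (sq_nonneg f)]
  have h1D0 : 1 ≤ |D0| := Int.one_le_abs hD0
  have hD0L : |D0| ≤ 2 ^ (2 * L) := by
    have : |D0| ≤ |D| := by
      rw [hDabs]; exact le_mul_of_one_le_right (abs_nonneg _) (one_le_pow₀ (by omega))
    refine this.trans (hDL.trans (pow_le_pow_right₀ (by norm_num) (by omega)))
  have hfL : f ≤ 2 ^ L := by
    refine le_trans ?_ hDL
    rw [hDabs]; nlinarith
  -- gcd map
  have hmap : ∀ s ∈ S, Int.gcd s.1 (f * s.2) ∈ m.natAbs.divisors := by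
    intro s hs
    rw [Nat.mem_divisors]
    refine ⟨?_, by omega⟩
    rw [← Int.natCast_dvd, ← (hS s hs).1]
    rw [show s.1 ^ 2 - D * s.2 ^ 2 = s.1 * s.1 - (f * s.2) * (D0 * f * s.2) by rw [hDf]; ring]
    exact dvd_sub ((Int.gcd_dvd_left _ _).mul_right _) ((Int.gcd_dvd_right _ _).mul_right _)
  have hfib : ∀ g ∈ m.natAbs.divisors, (S.filter (fun s => Int.gcd s.1 (f * s.2) = g)).card ≤
      2 * m.natAbs.divisors.card * (4 * (3 * (2 * L) + 1) + 9) := by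
    intro g hg
    rcases (S.filter (fun s => Int.gcd s.1 (f * s.2) = g)).eq_empty_or_nonempty with he | ⟨s0, hs0⟩
    · rw [he]; simp
    have hg0 : (g:ℤ) ≠ 0 := by
      have := Nat.pos_of_mem_divisors hg
      omega
    set T := S.filter (fun s => Int.gcd s.1 (f * s.2) = g) with hT
    let φ : ℤ × ℤ → ℤ × ℤ := fun s => (s.1 / g, (f * s.2) / g)
    have h1 : ∀ s ∈ T, (g:ℤ) * (φ s).1 = s.1 := fun s hs => by
      have := (Finset.mem_filter.1 hs).2
      exact Int.mul_ediv_cancel' (this ▸ Int.gcd_dvd_left _ _)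
    have h2 : ∀ s ∈ T, (g:ℤ) * (φ s).2 = f * s.2 := fun s hs => by
      have := (Finset.mem_filter.1 hs).2
      exact Int.mul_ediv_cancel' (this ▸ Int.gcd_dvd_right _ _)
    have heq : ∀ s ∈ T, (g:ℤ) ^ 2 * ((φ s).1 ^ 2 - D0 * (φ s).2 ^ 2) = m := by
      intro s hs
      calc _ = ((g:ℤ) * (φ s).1) ^ 2 - D0 * ((g:ℤ) * (φ s).2) ^ 2 := by ring
        _ = _ := by rw [h1 s hs, h2 s hs, ← (hS s (Finset.mem_filter.1 hs).1).1, hDf]; ring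
    set m0 := (φ s0).1 ^ 2 - D0 * (φ s0).2 ^ 2 with hm0
    have hmm : (g:ℤ) ^ 2 * m0 = m := heq s0 hs0
    have hm00 : m0 ≠ 0 := by intro h; rw [h] at hmm; simp at hmm; exact hm hmm.symm
    have hinj : Set.InjOn φ T := by
      intro s hs t ht hst
      have a1 := h1 s hs; have a2 := h2 s hs
      rw [hst, h1 t ht] at a1
      rw [hst, h2 t ht] at a2
      exact Prod.ext a1.symm (mul_left_cancel₀ hf0.ne' a2.symm)
    rw [← Finset.card_image_of_injOn hinj]
    refine (prim_count D0 m0 hD0 hsq hm00 (2 * L) hD0L _ ?_).trans ?_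
    · intro u hu
      obtain ⟨s, hs, rfl⟩ := Finset.mem_image.1 hu
      obtain ⟨q1, q2, q3⟩ := hS s (Finset.mem_filter.1 hs).1
      have hle : ∀ w : ℤ, |w| ≤ |(g:ℤ) * w| := by
        intro w
        rw [abs_mul]
        have : 1 ≤ |(g:ℤ)| := Int.one_le_abs hg0
        nlinarith [abs_nonneg w]
      refine ⟨?_, ?_, ?_, ?_⟩
      · exact mul_left_cancel₀ (pow_ne_zero 2 hg0) ((heq s hs).trans hmm.symm)
      · rw [Int.isCoprime_iff_gcd_eq_one]
        have e := (Finset.mem_filter.1 hs).2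
        rw [← h1 s hs, ← h2 s hs, Int.gcd_mul_left, Int.natAbs_natCast] at e
        exact Nat.eq_of_mul_eq_mul_left (Nat.pos_of_mem_divisors hg) (by rw [e, mul_one])
      · refine (hle _).trans ?_
        rw [h1 s hs]
        exact q2.trans (pow_le_pow_right₀ (by norm_num) (by omega))
      · refine (hle _).trans ?_
        rw [h2 s hs, abs_mul, abs_of_pos hf0, two_mul, pow_add]
        gcongr
    · refine Nat.mul_le_mul_right _ (Nat.mul_le_mul_left _ (Finset.card_le_card
        (Nat.divisors_subset_of_dvd (by omega) ?_)))
      exact Int.natAbs_dvd_natAbs.2 ⟨(g:ℤ)^2, by rw [← hmm]; ring⟩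
  refine (Finset.card_le_mul_card_image_of_maps_to hmap _ hfib).trans (le_of_eq ?_)
  ring

theorem conic_bound (δ : ℝ) (hδ : 0 < δ) : ∃ K : ℝ, 0 < K ∧ ∀ (L : ℕ) (D m : ℤ), D ≠ 0 → m ≠ 0 →
    |D| ≤ 2 ^ L → |m| ≤ 2 ^ L → ∀ S : Finset (ℤ × ℤ),
    (∀ s ∈ S, s.1 ^ 2 - D * s.2 ^ 2 = m ∧ |s.1| ≤ 2 ^ L ∧ |s.2| ≤ 2 ^ L) →
    (S.card : ℝ) ≤ K * ((2:ℝ) ^ L) ^ δ := by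
  obtain ⟨K, hK1, hK⟩ := divisor_bound (δ / 3) (by positivity)
  have hl2 : 0 < Real.log 2 := Real.log_pos (by norm_num)
  set c := δ / 3 * Real.log 2 with hc
  have hc0 : 0 < c := by positivity
  refine ⟨2 * K ^ 2 * (24 / c + 13), by positivity, ?_⟩
  intro L D m hD hm hDL hmL S hS
  have h1 := conic_count D m hD hm L hDL S hS
  have h2 := hK m.natAbs (by omega)
  set t : ℝ := ((2:ℝ) ^ L) ^ (δ / 3) with ht
  have ht1 : 1 ≤ t := Real.one_le_rpow (one_le_pow₀ (by norm_num)) (by positivity)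
  have h3 : ((m.natAbs : ℕ) : ℝ) ^ (δ / 3) ≤ t := by
    apply Real.rpow_le_rpow (by positivity) _ (by positivity)
    have : ((m.natAbs : ℕ) : ℝ) = ((|m| : ℤ) : ℝ) := by
      rw [Int.abs_eq_natAbs]; simp
    rw [this]
    exact_mod_cast hmL
  have h4 : (L : ℝ) * c ≤ t := by
    have : t = Real.exp (L * c) := by
      rw [ht, ← Real.rpow_natCast, ← Real.rpow_mul (by norm_num), Real.rpow_def_of_pos (by norm_num), hc]
      congr 1; ring
    rw [this]
    have := Real.add_one_le_exp (L * c)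
    linarith
  have h5 : (24 * L + 13 : ℝ) ≤ (24 / c + 13) * t := by
    have : (L:ℝ) ≤ t / c := by rw [le_div_iff₀ hc0]; exact h4
    have e : (24 / c + 13) * t = 24 * (t / c) + 13 * t := by ring
    rw [e]; linarith
  have h6 : (m.natAbs.divisors.card : ℝ) ≤ K * t := h2.trans (by gcongr)
  have h7 : ((2:ℝ) ^ L) ^ δ = t ^ 3 := by
    rw [ht, ← Real.rpow_natCast (_ ^ (δ / 3)) 3, ← Real.rpow_mul (by positivity)]; congr 1; push_cast; ring
  rw [h7]
  calc (S.card : ℝ) ≤ ((2 * m.natAbs.divisors.card ^ 2 * (24 * L + 13) : ℕ) : ℝ) := by exact_mod_cast h1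
    _ = 2 * (m.natAbs.divisors.card : ℝ) ^ 2 * (24 * L + 13) := by push_cast; ring
    _ ≤ 2 * (K * t) ^ 2 * ((24 / c + 13) * t) := by gcongr
    _ = _ := by ring
open Polynomial


theorem det_alternant_dvd (s : ℕ) (x : Fin s → ℤ) (g : Fin s → ℤ[X]) (p : ℤ)
    (hx : ∀ i j, p ∣ x i - x j) :
    p ^ (s * (s - 1) / 2) ∣ (Matrix.of fun i j => (g j).eval (x i)).det := by
  rcases Nat.eq_zero_or_pos s with rfl | hs
  · simp
  set W : ℤ[X] := ∏ i, (X - C (x i)) with hW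
  have hWm : W.Monic := monic_prod_of_monic _ _ (fun i _ => monic_X_sub_C _)
  have hWd : W.degree = s := by
    rw [hW, degree_prod]; simp only [degree_X_sub_C]; simp
  have hr : ∀ i j, (g j).eval (x i) = ∑ k : Fin s, x i ^ (k:ℕ) * ((g j) %ₘ W).coeff k := by
    intro i j
    have h0 : W.eval (x i) = 0 := by
      rw [hW, eval_prod]
      exact Finset.prod_eq_zero (Finset.mem_univ i) (by simp)
    have h1 : (g j).eval (x i) = ((g j) %ₘ W).eval (x i) := by
      conv_lhs => rw [← modByMonic_add_div (g j) W]
      simp [h0]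
    have h2 : ((g j) %ₘ W).natDegree < s := by
      by_cases hz : (g j) %ₘ W = 0
      · rw [hz]; simpa
      rw [natDegree_lt_iff_degree_lt hz, ← hWd]
      exact degree_modByMonic_lt _ hWm
    rw [h1, eval_eq_sum_range' h2, Finset.sum_range]
    exact Finset.sum_congr rfl (fun k _ => mul_comm _ _)
  have hmat : (Matrix.of fun i j => (g j).eval (x i)) =
      Matrix.vandermonde x * Matrix.of (fun k j : Fin s => ((g j) %ₘ W).coeff k) := by
    ext i j
    rw [Matrix.mul_apply]
    simp only [Matrix.of_apply, Matrix.vandermonde_apply]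
    exact hr i j
  rw [hmat, Matrix.det_mul, Matrix.det_vandermonde]
  refine Dvd.dvd.mul_right ?_ _
  have hpow : p ^ (s * (s - 1) / 2) = ∏ i : Fin s, ∏ _j ∈ Finset.Ioi i, p := by
    simp only [Finset.prod_const, Fin.card_Ioi]
    rw [Finset.prod_pow_eq_pow_sum]
    congr 1
    rw [Fin.sum_univ_eq_sum_range (fun i => s - 1 - i), Finset.sum_range_reflect (fun i => i),
      Finset.sum_range_id]
  rw [hpow]
  exact Finset.prod_dvd_prod_of_dvd _ _ (fun i _ => Finset.prod_dvd_prod_of_dvd _ _ (fun j _ => hx j i))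

theorem hensel_poly (P : ℤ[X]) (a b p u y0 : ℤ) (hu : p ∣ 1 - u * (b * P.derivative.eval y0)) (n : ℕ) :
    ∃ φ : ℤ[X], ∀ x y : ℤ, a * P.eval x = b * P.eval y → p ∣ y - y0 →
      p ^ (n + 1) ∣ φ.eval x - y := by
  induction n with
  | zero =>
    refine ⟨C y0, fun x y _ h => ?_⟩
    simpa using (dvd_sub_comm.1 h)
  | succ n ih =>
    obtain ⟨φ, hφ⟩ := ih
    refine ⟨φ + C u * (C a * P - C b * P.comp φ), fun x y h hy => ?_⟩
    obtain ⟨e, he⟩ : ∃ e, e = φ.eval x - y := ⟨_, rfl⟩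
    have h1 := hφ x y h hy
    rw [← he] at h1
    obtain ⟨k, hk⟩ := P.binomExpansion y e
    have h2 : φ.eval x = y + e := by rw [he]; ring
    have h3 : p ∣ 1 - u * (b * P.derivative.eval y) := by
      have h4 : p ∣ P.derivative.eval y - P.derivative.eval y0 := hy.trans (sub_dvd_eval_sub _ _ _)
      rw [show 1 - u * (b * P.derivative.eval y) = (1 - u * (b * P.derivative.eval y0)) -
        (P.derivative.eval y - P.derivative.eval y0) * (u * b) by ring]
      exact dvd_sub hu (h4.mul_right _)
    have h5 : (φ + C u * (C a * P - C b * P.comp φ)).eval x - y =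
        e * (1 - u * (b * P.derivative.eval y)) - e * e * (u * b * k) := by
      simp only [eval_add, eval_mul, eval_sub, eval_C, eval_comp, h, h2, hk]
      ring
    rw [h5]
    refine dvd_sub ?_ (Dvd.dvd.mul_right ?_ _)
    · rw [pow_succ]; exact mul_dvd_mul h1 h3
    · rw [pow_succ]
      exact mul_dvd_mul h1 ((dvd_pow_self p (by omega)).trans h1)

theorem sum_mono_deg (M : ℕ) : 2 * ∑ j ∈ Finset.range (3 * M), (j / 3 + j % 3) = 3 * M * (M + 1) := by
  induction M with
  | zero => simp
  | succ M ih =>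
    rw [show 3 * (M + 1) = 3 * M + 1 + 1 + 1 by ring, Finset.sum_range_succ, Finset.sum_range_succ,
      Finset.sum_range_succ]
    have e1 : 3 * M / 3 = M := by omega
    have e2 : (3 * M + 1) / 3 = M := by omega
    have e3 : (3 * M + 1 + 1) / 3 = M := by omega
    have f1 : 3 * M % 3 = 0 := by omega
    have f2 : (3 * M + 1) % 3 = 1 := by omega
    have f3 : (3 * M + 1 + 1) % 3 = 2 := by omega
    rw [e1, e2, e3, f1, f2, f3]
    nlinarith

theorem det_zero_of_class (P : ℤ[X]) (a b u x0 y0 : ℤ) (p : ℤ) (N M : ℕ)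
    (hu : p ∣ 1 - u * (b * P.derivative.eval y0))
    (hbig : (((3 * M).factorial : ℤ)) * (N:ℤ) ^ (3 * M * (M + 1) / 2) < p ^ (3 * M * (3 * M - 1) / 2))
    (q : Fin (3 * M) → ℤ × ℤ)
    (hq : ∀ i, 0 ≤ (q i).1 ∧ (q i).1 ≤ N ∧ 0 ≤ (q i).2 ∧ (q i).2 ≤ N ∧
      a * P.eval (q i).1 = b * P.eval (q i).2 ∧ p ∣ (q i).1 - x0 ∧ p ∣ (q i).2 - y0) :
    (Matrix.of fun i j : Fin (3 * M) => (q i).1 ^ ((j:ℕ) / 3) * (q i).2 ^ ((j:ℕ) % 3)).det = 0 := by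
  set k := 3 * M * (3 * M - 1) / 2 with hk
  set A := (Matrix.of fun i j : Fin (3 * M) => (q i).1 ^ ((j:ℕ) / 3) * (q i).2 ^ ((j:ℕ) % 3)) with hA
  obtain ⟨φ, hφ⟩ := hensel_poly P a b p u y0 hu k
  have hcong : ∀ i, (φ.eval (q i).1) ≡ (q i).2 [ZMOD p ^ k] := by
    intro i
    have := hφ (q i).1 (q i).2 (hq i).2.2.2.2.1 (hq i).2.2.2.2.2.2
    refine Int.ModEq.symm (Int.modEq_iff_dvd.2 ((pow_dvd_pow p (Nat.le_succ k)).trans this))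
  let g : Fin (3 * M) → ℤ[X] := fun j => X ^ ((j:ℕ) / 3) * φ ^ ((j:ℕ) % 3)
  have hdvd := det_alternant_dvd (3 * M) (fun i => (q i).1) g p (fun i j => by
    have := dvd_sub (hq i).2.2.2.2.2.1 (hq j).2.2.2.2.2.1
    rwa [show (q i).1 - x0 - ((q j).1 - x0) = (q i).1 - (q j).1 by ring] at this)
  have hdet : (Matrix.of fun i j => (g j).eval (q i).1).det ≡ A.det [ZMOD p ^ k] := by
    rw [Matrix.det_apply, Matrix.det_apply]
    apply Int.ModEq.sum
    intro σ _
    rw [Units.smul_def, Units.smul_def, smul_eq_mul, smul_eq_mul]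
    apply Int.ModEq.mul_left
    apply Int.ModEq.prod
    intro i _
    simp only [Matrix.of_apply, hA, g, eval_mul, eval_pow, eval_X]
    exact ((hcong _).pow _).mul_left _
  have hAdvd : p ^ k ∣ A.det := (Int.ModEq.dvd_iff hdet).1 hdvd
  apply Int.eq_zero_of_abs_lt_dvd hAdvd
  refine lt_of_le_of_lt ?_ hbig
  rw [Matrix.det_apply]
  refine (Finset.abs_sum_le_sum_abs _ _).trans ?_
  have hterm : ∀ σ ∈ (Finset.univ : Finset (Equiv.Perm (Fin (3 * M)))),
      |Equiv.Perm.sign σ • ∏ i, A (σ i) i| ≤ (N:ℤ) ^ (3 * M * (M + 1) / 2) := by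
    intro σ _
    rw [Units.smul_def, smul_eq_mul, abs_mul]
    have : |((Equiv.Perm.sign σ : ℤˣ) : ℤ)| = 1 := by
      rcases Int.units_eq_one_or (Equiv.Perm.sign σ) with h | h <;> rw [h] <;> simp
    rw [this, one_mul, Finset.abs_prod]
    have e : (N:ℤ) ^ (3 * M * (M + 1) / 2) = ∏ i : Fin (3 * M), (N:ℤ) ^ ((i:ℕ) / 3 + (i:ℕ) % 3) := by
      rw [Finset.prod_pow_eq_pow_sum, Fin.sum_univ_eq_sum_range (fun i => i / 3 + i % 3)]
      congr 1
      have := sum_mono_deg M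
      omega
    rw [e]
    apply Finset.prod_le_prod
    · intro i _; positivity
    intro i _
    simp only [hA, Matrix.of_apply]
    obtain ⟨h1, h2, h3, h4, -⟩ := hq (σ i)
    rw [abs_mul, abs_pow, abs_pow, abs_of_nonneg h1, abs_of_nonneg h3, pow_add]
    gcongr
  refine (Finset.sum_le_card_nsmul _ _ _ hterm).trans ?_
  rw [Finset.card_univ, Fintype.card_perm, Fintype.card_fin, nsmul_eq_mul]


theorem exists_relation {ι : Type*} (s : ℕ) (v : ι → Fin s → ℤ)
    (h : ∀ f : Fin s → ι, (Matrix.of fun i j => v (f i) j).det = 0) :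
    ∃ c : Fin s → ℤ, c ≠ 0 ∧ ∀ i, ∑ j, c j * v i j = 0 := by
  classical
  let w : ι → Fin s → ℚ := fun i j => (v i j : ℚ)
  have hw : ∀ f : Fin s → ι, (Matrix.of fun i j => w (f i) j).det = 0 := by
    intro f
    have := congrArg (Int.cast : ℤ → ℚ) (h f)
    rw [Int.cast_det] at this
    simpa [w, Matrix.map] using this
  have hne : Submodule.span ℚ (Set.range w) ≠ ⊤ := by
    intro htop
    obtain ⟨B, hBs, hspan, hli⟩ := exists_linearIndependent ℚ (Set.range w)
    rw [htop] at hspan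
    let bas : Module.Basis B ℚ (Fin s → ℚ) := Module.Basis.mk hli (by
      rw [Subtype.range_coe]; exact hspan.ge)
    have : Fintype B := Module.Basis.fintypeIndexOfRankLtAleph0 bas (by
      exact Module.rank_lt_aleph0 ℚ _)
    have hcard : Fintype.card B = s := by
      rw [← Module.finrank_eq_card_basis bas]; simp
    let e : Fin s ≃ B := (Fintype.equivFinOfCardEq hcard).symm
    choose f hf using fun i : Fin s => hBs (e i).2
    have hli2 : LinearIndependent ℚ (fun i : Fin s => w (f i)) := by
      have := hli.comp e e.injective
      have e2 : (fun i : Fin s => w (f i)) = Subtype.val ∘ e := funext hf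
      rw [e2]; exact this
    have := Matrix.linearIndependent_rows_iff_isUnit.1
      (show LinearIndependent ℚ (Matrix.of fun i j => w (f i) j).row from hli2)
    rw [Matrix.isUnit_iff_isUnit_det, hw f] at this
    simp at this
  obtain ⟨L, hL0, hL⟩ := Submodule.exists_le_ker_of_lt_top _ (lt_top_iff_ne_top.2 hne)
  let c : Fin s → ℚ := fun j => L (Pi.single j 1)
  have hLc : ∀ z, L z = ∑ j, z j * c j := by
    intro z
    rw [LinearMap.pi_apply_eq_sum_univ L z]
    refine Finset.sum_congr rfl (fun j _ => ?_)
    rw [smul_eq_mul]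
    congr 2
    ext k
    simp [Pi.single_apply, eq_comm]
  have hc0 : c ≠ 0 := by
    intro h0
    apply hL0
    ext1 j
    have := congrFun h0 j
    ext
    simpa [c] using this
  -- clear denominators
  obtain ⟨m, hm⟩ := IsLocalization.exist_integer_multiples_of_finset (nonZeroDivisors ℤ) (Finset.univ.image c)
  have hm' : ∀ j, ∃ k : ℤ, (k : ℚ) = (m : ℤ) * c j := by
    intro j
    obtain ⟨k, hk⟩ := hm (c j) (Finset.mem_image_of_mem _ (Finset.mem_univ j))
    exact ⟨k, by simpa [Algebra.smul_def] using hk⟩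
  choose k hk using hm'
  have hmne : ((m : ℤ) : ℚ) ≠ 0 := by
    exact_mod_cast nonZeroDivisors.coe_ne_zero m
  refine ⟨k, ?_, ?_⟩
  · intro h0
    apply hc0
    funext j
    have h1 : ((m : ℤ) : ℚ) * c j = 0 := by rw [← hk j, h0]; simp
    exact (mul_eq_zero.1 h1).resolve_left hmne
  · intro i
    have h1 : L (w i) = 0 := hL (Submodule.subset_span ⟨i, rfl⟩)
    rw [hLc] at h1
    have : ((∑ j, k j * v i j : ℤ) : ℚ) = 0 := by
      push_cast
      calc ∑ j, (k j : ℚ) * (v i j : ℚ) = (m:ℤ) * ∑ j, w i j * c j := by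
            rw [Finset.mul_sum]
            refine Finset.sum_congr rfl (fun j _ => ?_)
            rw [hk]; simp only [w]; ring
        _ = 0 := by rw [h1]; simp
    exact_mod_cast this

theorem natDegree_det_le_of {n : ℕ} (A : Matrix (Fin n) (Fin n) ℤ[X]) (B : ℕ)
    (h : ∀ i j, (A i j).natDegree ≤ B) : A.det.natDegree ≤ n * B := by
  rw [Matrix.det_apply]
  apply natDegree_sum_le_of_forall_le
  intro σ _
  rw [Units.smul_def]
  refine (natDegree_smul_le _ _).trans ?_
  refine (natDegree_prod_le _ _).trans ?_
  refine (Finset.sum_le_card_nsmul _ _ B (fun i _ => h _ _)).trans ?_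
  simp

theorem bezout_x (G H : ℤ[X][X]) (hG : Irreducible G) (e : ℕ) (he : G.natDegree = e) (hH0 : H ≠ 0)
    (hlt : H.natDegree < e) (B : ℕ) (hGB : ∀ i, (G.coeff i).natDegree ≤ B)
    (hHB : ∀ i, (H.coeff i).natDegree ≤ B) :
    ∃ R : ℤ[X], R ≠ 0 ∧ R.natDegree ≤ (2 * e) * B ∧
      ∀ x y : ℤ, G.evalEval x y = 0 → H.evalEval x y = 0 → R.eval x = 0 := by
  refine ⟨resultant G H, ?_, ?_, ?_⟩
  · let K := FractionRing ℤ[X]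
    let ι : ℤ[X] →+* K := algebraMap _ _
    have hinj : Function.Injective ι := IsFractionRing.injective ℤ[X] K
    have hprim : G.IsPrimitive := hG.isPrimitive (by omega)
    have hirr : Irreducible (G.map ι) :=
      (hprim.irreducible_iff_irreducible_map_fraction_map (K := K)).1 hG
    have hcop : IsCoprime (G.map ι) (H.map ι) := by
      rw [hirr.coprime_iff_not_dvd]
      intro hdvd
      have h1 := natDegree_le_of_dvd hdvd (by rwa [Polynomial.map_ne_zero_iff hinj])
      rw [natDegree_map_eq_of_injective hinj, natDegree_map_eq_of_injective hinj] at h1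
      omega
    intro h0
    have h1 : resultant (G.map ι) (H.map ι) = 0 := by
      rw [natDegree_map_eq_of_injective hinj, natDegree_map_eq_of_injective hinj, resultant_map_map, h0]
      simp
    exact (resultant_eq_zero_iff.1 h1).2 hcop
  · refine (natDegree_det_le_of _ B ?_).trans ?_
    · intro i j
      rw [sylvester]
      simp only [Matrix.of_apply]
      induction j using Fin.addCases with
      | left j => simp only [Fin.addCases_left]; split_ifs <;> first | exact hHB _ | exact hGB _ | simp
      | right j => simp only [Fin.addCases_right]; split_ifs <;> first | exact hHB _ | exact hGB _ | simp
    · gcongr; omega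
  · intro x y h1 h2
    obtain ⟨p, q, -, -, hpq⟩ := exists_mul_add_mul_eq_C_resultant G H le_rfl le_rfl (by omega)
    have := congrArg (evalEval x y) hpq
    rw [evalEval_add, evalEval_mul, evalEval_mul, h1, h2, evalEval_C] at this
    simpa using this.symm


theorem roots_count (P : ℤ[X]) (d : ℕ) (hd : 1 ≤ d) (hP : P.natDegree = d) (b c : ℤ) (hb : b ≠ 0)
    (T : Finset ℤ) (hT : ∀ y ∈ T, b * P.eval y = c) : T.card ≤ d := by
  have hdeg : (C b * P - C c).natDegree = d := by
    rw [natDegree_sub_C, natDegree_C_mul hb, hP]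
  have hne : C b * P - C c ≠ 0 := by
    intro h; rw [h] at hdeg; simp at hdeg; omega
  rw [← hdeg]
  refine (Finset.card_le_card (t := (C b * P - C c).roots.toFinset) ?_).trans
    ((Multiset.toFinset_card_le _).trans (card_roots' _))
  intro y hy
  rw [Multiset.mem_toFinset, mem_roots hne]
  simp [IsRoot, hT y hy]

theorem class_count (P : ℤ[X]) (d : ℕ) (hd : 1 ≤ d) (hP : P.natDegree = d)
    (a b u x0 y0 : ℤ) (hb : b ≠ 0) (p : ℤ) (N M : ℕ)
    (hu : p ∣ 1 - u * (b * P.derivative.eval y0))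
    (hbig : (((3 * M).factorial : ℤ)) * (N:ℤ) ^ (3 * M * (M + 1) / 2) < p ^ (3 * M * (3 * M - 1) / 2))
    (G : ℤ[X][X]) (hG : Irreducible G) (hG3 : 3 ≤ G.natDegree) (hGd : G.natDegree ≤ d) (B : ℕ)
    (hGB : ∀ i, (G.coeff i).natDegree ≤ B) (hMB : M ≤ B)
    (T : Finset (ℤ × ℤ))
    (hT : ∀ q ∈ T, 0 ≤ q.1 ∧ q.1 ≤ N ∧ 0 ≤ q.2 ∧ q.2 ≤ N ∧
      a * P.eval q.1 = b * P.eval q.2 ∧ p ∣ q.1 - x0 ∧ p ∣ q.2 - y0)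
    (hTG : ∀ q ∈ T, G.evalEval q.1 q.2 = 0) :
    T.card ≤ d * (2 * d * B) := by
  classical
  obtain ⟨c, hc0, hc⟩ := exists_relation (ι := T) (3 * M)
    (fun q j => q.1.1 ^ ((j:ℕ) / 3) * q.1.2 ^ ((j:ℕ) % 3))
    (fun f => det_zero_of_class P a b u x0 y0 p N M hu hbig (fun i => (f i).1) (fun i => hT _ (f i).2))
  let H : ℤ[X][X] := ∑ j : Fin (3 * M), monomial ((j:ℕ) % 3) (monomial ((j:ℕ) / 3) (c j))
  have hcoef : ∀ k i, (H.coeff k).coeff i = ∑ j : Fin (3 * M), if (j:ℕ) % 3 = k ∧ (j:ℕ) / 3 = i then c j else 0 := by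
    intro k i
    simp only [H, finsetSum_coeff]
    refine Finset.sum_congr rfl (fun j _ => ?_)
    rw [coeff_monomial]
    split_ifs with h1 h2 h2
    · rw [coeff_monomial, if_pos h2.2]
    · rw [coeff_monomial, if_neg (fun h => h2 ⟨h1, h⟩)]
    · exact absurd h2.1 h1
    · simp
  have hH0 : H ≠ 0 := by
    intro h
    apply hc0
    funext j
    have := hcoef ((j:ℕ) % 3) ((j:ℕ) / 3)
    rw [h, Finset.sum_eq_single j] at this
    · simpa using this.symm
    · intro j' _ hne
      rw [if_neg]
      rintro ⟨h1, h2⟩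
      apply hne
      ext
      omega
    · simp
  have hHdeg : H.natDegree ≤ 2 := by
    apply natDegree_sum_le_of_forall_le
    intro j _
    refine (natDegree_monomial_le _).trans ?_
    omega
  have hHB : ∀ i, (H.coeff i).natDegree ≤ B := by
    intro k
    rw [natDegree_le_iff_coeff_eq_zero]
    intro i hi
    rw [hcoef]
    apply Finset.sum_eq_zero
    intro j _
    rw [if_neg]
    rintro ⟨-, h2⟩
    have := j.2
    omega
  obtain ⟨R, hR0, hRd, hR⟩ := bezout_x G H hG G.natDegree rfl hH0 (by omega) B hGB hHB
  have himg : (T.image Prod.fst).card ≤ 2 * d * B := by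
    refine le_trans ?_ (hRd.trans (by gcongr))
    refine (Finset.card_le_card (t := R.roots.toFinset) ?_).trans
      ((Multiset.toFinset_card_le _).trans (card_roots' _))
    intro x hx
    obtain ⟨q, hq, rfl⟩ := Finset.mem_image.1 hx
    rw [Multiset.mem_toFinset, mem_roots hR0]
    apply hR q.1 q.2 (hTG q hq)
    have := hc ⟨q, hq⟩
    simp only [H, evalEval_finsetSum]
    rw [← this]
    refine Finset.sum_congr rfl (fun j _ => ?_)
    simp [evalEval, eval_monomial, mul_assoc]
  refine (Finset.card_le_mul_card_image (f := Prod.fst) T d ?_).trans (by gcongr)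
  intro x hx
  have hinj : Set.InjOn Prod.snd ((T.filter (fun q => q.1 = x) : Finset (ℤ × ℤ)) : Set (ℤ × ℤ)) := by
    intro q hq r hr h
    have h1 := (Finset.mem_filter.1 hq).2
    have h2 := (Finset.mem_filter.1 hr).2
    exact Prod.ext (h1.trans h2.symm) h
  rw [← Finset.card_image_of_injOn hinj]
  apply roots_count P d hd hP b (a * P.eval x) hb
  intro y hy
  obtain ⟨q, hq, rfl⟩ := Finset.mem_image.1 hy
  obtain ⟨hq', hx'⟩ := Finset.mem_filter.1 hq
  rw [← hx']
  exact (hT q hq').2.2.2.2.1.symm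

theorem prime_count (P : ℤ[X]) (d : ℕ) (hd : 1 ≤ d) (hP : P.natDegree = d)
    (a b : ℤ) (hb : b ≠ 0) (p : ℕ) (hp : p.Prime) (N M : ℕ)
    (hbig : (((3 * M).factorial : ℤ)) * (N:ℤ) ^ (3 * M * (M + 1) / 2) < (p:ℤ) ^ (3 * M * (3 * M - 1) / 2))
    (G : ℤ[X][X]) (hG : Irreducible G) (hG3 : 3 ≤ G.natDegree) (hGd : G.natDegree ≤ d) (B : ℕ)
    (hGB : ∀ i, (G.coeff i).natDegree ≤ B) (hMB : M ≤ B)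
    (T : Finset (ℤ × ℤ))
    (hT : ∀ q ∈ T, 0 ≤ q.1 ∧ q.1 ≤ N ∧ 0 ≤ q.2 ∧ q.2 ≤ N ∧ a * P.eval q.1 = b * P.eval q.2)
    (hTp : ∀ q ∈ T, ¬ (p:ℤ) ∣ b * P.derivative.eval q.2)
    (hTG : ∀ q ∈ T, G.evalEval q.1 q.2 = 0) :
    T.card ≤ d * (2 * d * B) * (d * p) := by
  classical
  have : Fact p.Prime := ⟨hp⟩
  let f : ℤ × ℤ → ZMod p × ZMod p := fun q => ((q.1 : ZMod p), (q.2 : ZMod p))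
  have himg : (T.image f).card ≤ d * p := by
    have h1 : ((T.image f).image Prod.fst).card ≤ p := by
      refine (Finset.card_le_univ _).trans ?_
      rw [ZMod.card]
    refine (Finset.card_le_mul_card_image (f := Prod.fst) (T.image f) d ?_).trans (by gcongr)
    intro α _
    set I := (T.image f).filter (fun q => q.1 = α) with hI
    let φ := Int.castRingHom (ZMod p)
    have hmem : ∀ q ∈ I, (a : ZMod p) * (P.map φ).eval α = b * (P.map φ).eval q.2 ∧
        (b : ZMod p) * (P.map φ).derivative.eval q.2 ≠ 0 := by
      intro q hq
      obtain ⟨hq, hqα⟩ := Finset.mem_filter.1 hq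
      obtain ⟨r, hr, rfl⟩ := Finset.mem_image.1 hq
      rw [← hqα]
      have hev : ∀ (W : ℤ[X]) (z : ℤ), (W.map φ).eval (z : ZMod p) = ((W.eval z : ℤ) : ZMod p) := by
        intro W z
        have := eval_intCast_map φ W z
        simpa [φ] using this
      constructor
      · simp only [f, hev]
        exact_mod_cast congrArg (Int.cast : ℤ → ZMod p) (hT r hr).2.2.2.2
      · simp only [f, derivative_map, hev]
        intro h0
        apply hTp r hr
        rw [← ZMod.intCast_zmod_eq_zero_iff_dvd] 
        exact_mod_cast h0
    have hinj : Set.InjOn Prod.snd (I : Set (ZMod p × ZMod p)) := by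
      intro q hq r hr h
      have h1 := (Finset.mem_filter.1 hq).2
      have h2 := (Finset.mem_filter.1 hr).2
      exact Prod.ext (h1.trans h2.symm) h
    rw [← Finset.card_image_of_injOn hinj]
    set W : (ZMod p)[X] := C (b : ZMod p) * P.map φ - C ((a : ZMod p) * (P.map φ).eval α) with hW
    rcases I.eq_empty_or_nonempty with he | ⟨q0, hq0⟩
    · rw [he]; simp
    have hWne : W ≠ 0 := by
      intro h0
      have := (hmem q0 hq0).2
      apply this
      have h2 := congrArg (fun V => (derivative V).eval q0.2) h0
      simpa [hW] using h2
    have hWd : W.natDegree ≤ d := by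
      rw [hW, natDegree_sub_C]
      refine (natDegree_C_mul_le _ _).trans (natDegree_map_le.trans hP.le)
    refine le_trans ?_ hWd
    refine (Finset.card_le_card (t := W.roots.toFinset) ?_).trans
      ((Multiset.toFinset_card_le _).trans (card_roots' _))
    intro β hβ
    obtain ⟨q, hq, rfl⟩ := Finset.mem_image.1 hβ
    rw [Multiset.mem_toFinset, mem_roots hWne]
    have := (hmem q hq).1
    simp [IsRoot, hW, this]
  refine (Finset.card_le_mul_card_image (f := f) T (d * (2 * d * B)) ?_).trans (by gcongr)
  intro w hw
  obtain ⟨q0, hq0, rfl⟩ := Finset.mem_image.1 hw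
  have hcop : IsCoprime (b * P.derivative.eval q0.2) (p:ℤ) := by
    rw [isCoprime_comm]
    exact (Nat.prime_iff_prime_int.1 hp).coprime_iff_not_dvd.2 (hTp q0 hq0)
  obtain ⟨u, v, huv⟩ := hcop
  apply class_count P d hd hP a b u q0.1 q0.2 hb p N M ⟨v, by linear_combination -huv⟩ hbig G hG hG3 hGd B hGB hMB
  · intro q hq
    obtain ⟨hq, hqf⟩ := Finset.mem_filter.1 hq
    obtain ⟨h1, h2, h3, h4, h5⟩ := hT q hq
    simp only [f, Prod.mk.injEq] at hqf
    refine ⟨h1, h2, h3, h4, h5, ?_, ?_⟩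
    · rw [← ZMod.intCast_zmod_eq_zero_iff_dvd]; push_cast; rw [hqf.1, sub_self]
    · rw [← ZMod.intCast_zmod_eq_zero_iff_dvd]; push_cast; rw [hqf.2, sub_self]
  · intro q hq
    exact hTG q (Finset.mem_filter.1 hq).1


theorem deriv_bound (P : ℤ[X]) (d : ℕ) (hP : P.natDegree = d) (N : ℕ) (hN : 2 ≤ N) (C : ℝ)
    (hc : ∀ i : ℕ, |((P.coeff i : ℤ) : ℝ)| ≤ (N : ℝ) ^ C) (y : ℤ) (h1 : 1 ≤ y) (h2 : y ≤ N) :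
    |((P.derivative.eval y : ℤ) : ℝ)| ≤ (N:ℝ) ^ (C + 3 * d) := by
  have hN1 : (1:ℝ) ≤ N := by exact_mod_cast (by omega : 1 ≤ N)
  have hdN : (d:ℝ) ≤ (N:ℝ) ^ (d:ℝ) := by
    rw [Real.rpow_natCast]
    have : d < N ^ d := Nat.lt_pow_self (by omega)
    exact_mod_cast this.le
  have hy : |(y:ℝ)| ≤ N := by
    rw [abs_of_nonneg (by exact_mod_cast (by omega : 0 ≤ y))]
    exact_mod_cast h2
  have hdeg : P.derivative.natDegree < d + 1 :=
    lt_of_le_of_lt ((natDegree_derivative_le P).trans (Nat.sub_le _ _)) (by omega)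
  by_cases hd0 : d = 0
  · have : P.derivative = 0 := derivative_of_natDegree_zero (hP.trans hd0)
    rw [this]; simp; positivity
  have hdeg : P.derivative.natDegree < d := by
    have := natDegree_derivative_le P
    omega
  rw [eval_eq_sum_range' hdeg]
  push_cast
  refine (Finset.abs_sum_le_sum_abs _ _).trans ?_
  have : ∀ i ∈ Finset.range d, |((P.derivative.coeff i : ℤ) : ℝ) * (y:ℝ) ^ i| ≤
      (N:ℝ)^C * (N:ℝ) ^ (d:ℝ) * (N:ℝ)^(d:ℝ) := by
    intro i hi
    have hi := Finset.mem_range.1 hi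
    rw [abs_mul, abs_pow, coeff_derivative]
    push_cast
    rw [abs_mul]
    have h3 : |((i:ℝ) + 1)| ≤ (N:ℝ) ^ (d:ℝ) := by
      rw [abs_of_nonneg (by positivity)]
      refine le_trans ?_ hdN
      exact_mod_cast hi
    have h4 : |(y:ℝ)| ^ i ≤ (N:ℝ) ^ (d:ℝ) := by
      rw [Real.rpow_natCast]
      calc |(y:ℝ)| ^ i ≤ (N:ℝ) ^ i := by gcongr
        _ ≤ (N:ℝ) ^ d := pow_le_pow_right₀ hN1 hi.le
    gcongr
    exact hc _
  refine (Finset.sum_le_sum this).trans ?_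
  rw [Finset.sum_const, Finset.card_range, nsmul_eq_mul]
  calc (d:ℝ) * ((N:ℝ)^C * (N:ℝ) ^ (d:ℝ) * (N:ℝ)^(d:ℝ)) ≤ (N:ℝ)^(d:ℝ) * ((N:ℝ)^C * (N:ℝ) ^ (d:ℝ) * (N:ℝ)^(d:ℝ)) := by gcongr
    _ = _ := by
      rw [← Real.rpow_add (by linarith), ← Real.rpow_add (by linarith), ← Real.rpow_add (by linarith)]
      congr 1; ring

theorem det_method (d : ℕ) (hd : 2 ≤ d) (C ε : ℝ) (hC : 0 < C) (hε : 0 < ε) : ∃ K : ℝ, 0 < K ∧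
    ∀ N : ℕ, 2 ≤ N → ∀ P : ℤ[X], P.natDegree = d →
      (∀ i : ℕ, |((P.coeff i : ℤ) : ℝ)| ≤ (N : ℝ) ^ C) → ∀ a b : ℤ, 1 ≤ a → 1 ≤ b →
      ((b : ℝ) ≤ (N : ℝ) ^ C) → ∀ G : ℤ[X][X], Irreducible G → 3 ≤ G.natDegree → G.natDegree ≤ d →
      (∀ i, (G.coeff i).natDegree ≤ d) → ∀ S : Finset (ℤ × ℤ),
      (∀ q ∈ S, 1 ≤ q.1 ∧ q.1 ≤ N ∧ 1 ≤ q.2 ∧ q.2 ≤ N ∧ a * P.eval q.1 = b * P.eval q.2 ∧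
        G.evalEval q.1 q.2 = 0) → (S.card : ℝ) ≤ K * (N:ℝ) ^ ((1:ℝ)/3 + ε) := by
  classical
  obtain ⟨M, hM1, hMε⟩ : ∃ M : ℕ, 1 ≤ M ∧ 1 ≤ M * ε := by
    refine ⟨⌈1/ε⌉₊ + 1, by omega, ?_⟩
    have := Nat.le_ceil (1/ε)
    rw [div_le_iff₀ hε] at this
    push_cast
    nlinarith
  obtain ⟨k, hk⟩ : ∃ k : ℕ, 3 * (2 * C + 3 * d) < k := exists_nat_gt _
  set B := max d M with hB
  set fa := (3 * M).factorial with hfa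
  have hfa1 : 1 ≤ fa := Nat.one_le_iff_ne_zero.2 (Nat.factorial_ne_zero _)
  refine ⟨d * d + k * (d * (2 * d * B) * (d * (2 ^ (k+1) * (2 * fa)))) , by positivity, ?_⟩
  intro N hN P hP hc a b ha hb hbN G hG hG3 hGd hGc S hS
  have hN1 : (1:ℝ) ≤ N := by exact_mod_cast (by omega : 1 ≤ N)
  set R : ℝ := (N:ℝ) ^ ((1:ℝ)/3 + ε) with hR
  have hR1 : 1 ≤ R := Real.one_le_rpow hN1 (by positivity)
  have hR3 : (N:ℝ) ^ ((1:ℝ)/3) ≤ R := Real.rpow_le_rpow_of_exponent_le hN1 (by linarith)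
  set Q := ⌈(fa:ℝ) * R⌉₊ with hQ
  have hfaR : (1:ℝ) ≤ fa := by exact_mod_cast hfa1
  have hQ1 : (fa:ℝ) * R ≤ Q := Nat.le_ceil _
  have hQ2 : (Q:ℝ) ≤ 2 * fa * R := by
    have := Nat.ceil_lt_add_one (show 0 ≤ (fa:ℝ) * R by positivity)
    nlinarith
  have hQ0 : Q ≠ 0 := by
    intro h
    rw [h] at hQ1
    push_cast at hQ1
    nlinarith
  have hex : ∀ i : ℕ, ∃ p : ℕ, p.Prime ∧ 2 ^ i * Q < p ∧ p ≤ 2 * (2 ^ i * Q) := fun i =>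
    Nat.exists_prime_lt_and_le_two_mul _ (by positivity)
  choose p hpp hp1 hp2 using hex
  have hmono : StrictMono p := strictMono_nat_of_lt_succ (fun n => by
    refine lt_of_le_of_lt (hp2 n) (lt_of_eq_of_lt ?_ (hp1 (n+1)))
    ring)
  have hpQ : ∀ i, (fa:ℝ) * R < p i := by
    intro i
    refine lt_of_le_of_lt hQ1 ?_
    have : Q < p i := lt_of_le_of_lt (Nat.le_mul_of_pos_left _ (by positivity)) (hp1 i)
    exact_mod_cast this
  have hbig : ∀ i, (((3 * M).factorial : ℤ)) * (N:ℤ) ^ (3 * M * (M + 1) / 2) < ((p i : ℕ):ℤ) ^ (3 * M * (3 * M - 1) / 2) := by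
    intro i
    have hreal : (fa : ℝ) * (N:ℝ) ^ (3 * M * (M + 1) / 2) < (p i : ℝ) ^ (3 * M * (3 * M - 1) / 2) := by
      set E := 3 * M * (3 * M - 1) / 2 with hE
      set E' := 3 * M * (M + 1) / 2 with hE'
      have hE2 : 2 * E = 3 * M * (3 * M - 1) := by
        rw [hE]; exact Nat.mul_div_cancel' (even_iff_two_dvd.1 (Nat.even_mul_pred_self (3 * M)))
      have hE2' : 2 * E' = 3 * (M * (M + 1)) := by
        rw [hE', mul_assoc]; exact Nat.mul_div_cancel' (dvd_mul_of_dvd_right (even_iff_two_dvd.1 (Nat.even_mul_succ_self M)) _)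
      have hE0 : E ≠ 0 := by
        intro h
        rw [h] at hE2
        have : 0 < 3 * M * (3 * M - 1) := Nat.mul_pos (by omega) (by omega)
        omega
      have hEE : (E':ℝ) ≤ ((1:ℝ)/3 + ε) * E := by
        have h1 : 2 * (E:ℝ) = 3 * M * (3 * M - 1) := by
          have : ((2 * E : ℕ):ℝ) = ((3 * M * (3 * M - 1) : ℕ) : ℝ) := by rw [hE2]
          rw [Nat.cast_mul, Nat.cast_mul (3 * M), Nat.cast_sub (by omega)] at this
          push_cast at this; exact this
        have h2 : 2 * (E':ℝ) = 3 * (M * (M + 1)) := by exact_mod_cast hE2'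
        have hM1' : (1:ℝ) ≤ M := by exact_mod_cast hM1
        have h3 : (M:ℝ) + 1 ≤ (1/3 + ε) * (3 * M - 1) := by nlinarith
        have h4 : 2 * (E':ℝ) ≤ 2 * ((1/3+ε) * E) := by
          rw [h2, show 2 * ((1/3+ε) * (E:ℝ)) = (1/3+ε) * (2 * E) by ring, h1]
          nlinarith
        linarith
      calc (fa : ℝ) * (N:ℝ) ^ E' ≤ (fa:ℝ)^E * R ^ E := by
            have h1 : (fa:ℝ) ≤ (fa:ℝ)^E := le_self_pow₀ hfaR hE0
            have h2 : (N:ℝ) ^ E' ≤ R ^ E := by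
              rw [hR, ← Real.rpow_natCast, ← Real.rpow_natCast, ← Real.rpow_mul (by linarith)]
              exact Real.rpow_le_rpow_of_exponent_le hN1 hEE
            gcongr
        _ = ((fa:ℝ) * R)^E := (mul_pow _ _ _).symm
        _ < _ := by
          exact pow_lt_pow_left₀ (hpQ i) (by positivity) hE0
    exact_mod_cast hreal
  -- split
  set S0 := S.filter (fun q => P.derivative.eval q.2 = 0) with hS0
  let Si : ℕ → Finset (ℤ × ℤ) := fun i => S.filter (fun q => ¬ ((p i : ℕ):ℤ) ∣ b * P.derivative.eval q.2)
  have hcover : S ⊆ S0 ∪ (Finset.range k).biUnion Si := by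
    intro q hq
    by_cases h0 : P.derivative.eval q.2 = 0
    · exact Finset.mem_union_left _ (Finset.mem_filter.2 ⟨hq, h0⟩)
    apply Finset.mem_union_right
    by_contra hcon
    simp only [Finset.mem_biUnion, Finset.mem_range, Si, Finset.mem_filter, not_exists, not_and, not_not] at hcon
    have hdvd : ∏ i ∈ Finset.range k, ((p i : ℕ):ℤ) ∣ b * P.derivative.eval q.2 := by
      apply Finset.prod_dvd_of_coprime
      · intro i _ j _ hij
        rw [Function.onFun, Nat.isCoprime_iff_coprime]
        exact (Nat.coprime_primes (hpp i) (hpp j)).2 (hmono.injective.ne hij)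
      · intro i hi
        exact hcon i (Finset.mem_range.1 hi) hq
    have hne : b * P.derivative.eval q.2 ≠ 0 := mul_ne_zero (by omega) h0
    have hle := Int.le_of_dvd (abs_pos.2 hne) ((dvd_abs _ _).2 hdvd)
    have hle' : ∏ i ∈ Finset.range k, ((p i : ℕ):ℝ) ≤ |((b * P.derivative.eval q.2 : ℤ):ℝ)| := by
      exact_mod_cast hle
    obtain ⟨_, _, hy1, hy2, _⟩ := hS q hq
    have hub : |((b * P.derivative.eval q.2 : ℤ):ℝ)| ≤ (N:ℝ) ^ (2 * C + 3 * d) := by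
      rw [Int.cast_mul, abs_mul, abs_of_nonneg (show (0:ℝ) ≤ (b:ℝ) by exact_mod_cast (by omega : 0 ≤ b))]
      rw [show 2 * C + 3 * (d:ℝ) = C + (C + 3 * d) by ring, Real.rpow_add (by linarith)]
      have := deriv_bound P d hP N hN C hc q.2 hy1 hy2
      gcongr
    have hlb : (N:ℝ) ^ ((k:ℝ)/3) ≤ ∏ i ∈ Finset.range k, ((p i : ℕ):ℝ) := by
      calc (N:ℝ) ^ ((k:ℝ)/3) = ∏ i ∈ Finset.range k, (N:ℝ) ^ ((1:ℝ)/3) := by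
            rw [Finset.prod_const, Finset.card_range, ← Real.rpow_natCast, ← Real.rpow_mul (by linarith)]
            congr 1; ring
        _ ≤ _ := by
            apply Finset.prod_le_prod
            · intros; positivity
            · intro i _
              have := hpQ i
              nlinarith
    have hlt : (N:ℝ) ^ (2 * C + 3 * d) < (N:ℝ) ^ ((k:ℝ)/3) := by
      apply Real.rpow_lt_rpow_of_exponent_lt
      · exact_mod_cast (by omega : 1 < N)
      · linarith
    linarith
  have hS0c : S0.card ≤ d * d := by
    have hder : P.derivative ≠ 0 := by
      intro h
      have := natDegree_eq_zero_of_derivative_eq_zero h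
      omega
    have h1 : (S0.image Prod.snd).card ≤ d := by
      refine le_trans ?_ (((natDegree_derivative_le P).trans (Nat.sub_le _ _)).trans hP.le)
      refine (Finset.card_le_card (t := P.derivative.roots.toFinset) ?_).trans
        ((Multiset.toFinset_card_le _).trans (card_roots' _))
      intro y hy
      obtain ⟨q, hq, rfl⟩ := Finset.mem_image.1 hy
      rw [Multiset.mem_toFinset, mem_roots hder]
      exact (Finset.mem_filter.1 hq).2
    refine (Finset.card_le_mul_card_image (f := Prod.snd) S0 d ?_).trans (by gcongr)
    intro y _
    have hinj : Set.InjOn Prod.fst ((S0.filter (fun q => q.2 = y) : Finset (ℤ × ℤ)) : Set (ℤ × ℤ)) := by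
      intro q hq r hr h
      have h1 := (Finset.mem_filter.1 hq).2
      have h2 := (Finset.mem_filter.1 hr).2
      exact Prod.ext h (h1.trans h2.symm)
    rw [← Finset.card_image_of_injOn hinj]
    apply roots_count P d (by omega) hP a (b * P.eval y) (by omega)
    intro x hx
    obtain ⟨q, hq, rfl⟩ := Finset.mem_image.1 hx
    obtain ⟨hq', hx'⟩ := Finset.mem_filter.1 hq
    rw [← hx']
    exact (hS q (Finset.mem_filter.1 hq').1).2.2.2.2.1
  have hSi : ∀ i, (Si i).card ≤ d * (2 * d * B) * (d * p i) := by
    intro i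
    refine prime_count P d (by omega) hP a b (by omega) (p i) (hpp i) N M (hbig i) G hG hG3 hGd B
      (fun i => (hGc i).trans (le_max_left _ _)) (le_max_right _ _) (Si i) ?_ ?_ ?_
    · intro q hq
      obtain ⟨h1, h2, h3, h4, h5, _⟩ := hS q (Finset.mem_filter.1 hq).1
      exact ⟨by omega, h2, by omega, h4, h5⟩
    · intro q hq
      exact (Finset.mem_filter.1 hq).2
    · intro q hq
      exact (hS q (Finset.mem_filter.1 hq).1).2.2.2.2.2
  have hSi' : ∀ i ∈ Finset.range k, ((Si i).card : ℝ) ≤ d * (2 * d * B) * (d * (2 ^ (k+1) * (2 * fa))) * R := by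
    intro i hi
    have h1 : ((Si i).card : ℝ) ≤ d * (2 * d * B) * (d * p i) := by exact_mod_cast hSi i
    have h2 : (p i : ℝ) ≤ 2 ^ (k+1) * (2 * fa) * R := by
      have h3 : (p i : ℝ) ≤ 2 * (2 ^ i * Q) := by exact_mod_cast hp2 i
      have h4 : (2:ℝ) ^ i ≤ 2 ^ k := pow_le_pow_right₀ (by norm_num) (Finset.mem_range.1 hi).le
      calc (p i : ℝ) ≤ 2 * (2 ^ i * Q) := h3
        _ ≤ 2 * (2 ^ k * (2 * fa * R)) := by gcongr
        _ = _ := by ring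
    calc ((Si i).card : ℝ) ≤ d * (2 * d * B) * (d * p i) := h1
      _ ≤ d * (2 * d * B) * (d * (2 ^ (k+1) * (2 * fa) * R)) := by gcongr
      _ = _ := by ring
  have hfin : (S.card : ℝ) ≤ S0.card + ∑ i ∈ Finset.range k, ((Si i).card : ℝ) := by
    have := (Finset.card_le_card hcover).trans ((Finset.card_union_le _ _).trans
      (Nat.add_le_add_left Finset.card_biUnion_le _))
    exact_mod_cast this
  have h5 := Finset.sum_le_sum hSi'
  rw [Finset.sum_const, Finset.card_range, nsmul_eq_mul] at h5
  have h6 : (S0.card : ℝ) ≤ d * d := by exact_mod_cast hS0c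
  have h7 : (d * d : ℝ) ≤ d * d * R := le_mul_of_one_le_right (by positivity) hR1
  calc (S.card : ℝ) ≤ _ := hfin
    _ ≤ d * d * R + k * (d * (2 * d * B) * (d * (2 ^ (k+1) * (2 * fa))) * R) := by linarith
    _ = _ := by ring


noncomputable def tphi : ℤ[X][X] →+* ℤ[X][X] := eval₂RingHom (mapRingHom C) (C X * X)

theorem tphi_coeff (G : ℤ[X][X]) (n k : ℕ) :
    ((tphi G).coeff n).coeff k = if k ≤ n then (G.coeff k).coeff (n - k) else 0 := by
  induction G using Polynomial.induction_on' with
  | add p q hp hq =>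
    rw [map_add, coeff_add, coeff_add, hp, hq, coeff_add, coeff_add]
    split_ifs <;> simp
  | monomial j p =>
    have : tphi (monomial j p) = p.map C * C (X ^ j) * X ^ j := by
      simp [tphi, mul_pow, mul_assoc]
    rw [this, coeff_mul_X_pow', coeff_monomial]
    by_cases hjk : j = k
    · subst hjk
      rw [if_pos rfl]
      split_ifs with h
      · rw [coeff_mul_C, coeff_map, coeff_C_mul_X_pow, if_pos rfl]
      · simp
    · rw [if_neg hjk]
      split_ifs with h1 h2 h2
      · rw [coeff_mul_C, coeff_map, coeff_C_mul_X_pow, if_neg (Ne.symm hjk), coeff_zero]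
      · rw [coeff_mul_C, coeff_map, coeff_C_mul_X_pow, if_neg (Ne.symm hjk)]
      · simp
      · simp

theorem tphi_ne_zero (G : ℤ[X][X]) (hG : G ≠ 0) : tphi G ≠ 0 := by
  intro h
  apply hG
  ext k i
  have := tphi_coeff G (i + k) k
  rw [h, if_pos (by omega), Nat.add_sub_cancel] at this
  simpa using this.symm

theorem le_tdeg (G : ℤ[X][X]) (k i : ℕ) (h : (G.coeff k).coeff i ≠ 0) : i + k ≤ (tphi G).natDegree := by
  apply le_natDegree_of_ne_zero
  intro h0
  have := tphi_coeff G (i + k) k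
  rw [h0, if_pos (by omega), Nat.add_sub_cancel] at this
  exact h (by simpa using this.symm)

theorem natDegree_le_tdeg (G : ℤ[X][X]) (hG : G ≠ 0) : G.natDegree ≤ (tphi G).natDegree := by
  have h1 : G.coeff G.natDegree ≠ 0 := leadingCoeff_ne_zero.2 hG
  have h2 : (G.coeff G.natDegree).coeff (G.coeff G.natDegree).natDegree ≠ 0 := leadingCoeff_ne_zero.2 h1
  have := le_tdeg G _ _ h2
  omega

noncomputable def FF (P : ℤ[X]) (a b : ℤ) : ℤ[X][X] := C (C a * P) - C (C b) * P.map C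

theorem FF_coeff (P : ℤ[X]) (a b : ℤ) (k i : ℕ) : ((FF P a b).coeff k).coeff i =
    (if k = 0 then a * P.coeff i else 0) - (if i = 0 then b * P.coeff k else 0) := by
  rw [FF, coeff_sub, coeff_sub, coeff_C, coeff_C_mul, coeff_map, ← C_mul, coeff_C]
  congr 1
  split_ifs <;> simp

theorem FF_evalEval (P : ℤ[X]) (a b x y : ℤ) : (FF P a b).evalEval x y = a * P.eval x - b * P.eval y := by
  simp [FF, evalEval, eval_map, ← Polynomial.coe_evalRingHom, ← Polynomial.coe_evalRingHom]

theorem FF_natDegree (P : ℤ[X]) (d : ℕ) (hd : 1 ≤ d) (hP : P.natDegree = d) (a b : ℤ) (hb : b ≠ 0) :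
    (FF P a b).natDegree = d := by
  have hlc : P.coeff d ≠ 0 := by
    rw [← hP]; apply leadingCoeff_ne_zero.2; rintro rfl; simp at hP; omega
  apply natDegree_eq_of_le_of_coeff_ne_zero
  · rw [natDegree_le_iff_coeff_eq_zero]
    intro k hk
    ext i
    rw [FF_coeff, if_neg (by omega), coeff_eq_zero_of_natDegree_lt (hP ▸ hk)]
    simp
  · intro h
    have := FF_coeff P a b d 0
    rw [h, if_neg (by omega), if_pos rfl] at this
    simp at this
    tauto

theorem FF_tdeg_le (P : ℤ[X]) (d : ℕ) (hd : 1 ≤ d) (hP : P.natDegree = d) (a b : ℤ)  :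
    (tphi (FF P a b)).natDegree ≤ d := by
  rw [natDegree_le_iff_coeff_eq_zero]
  intro n hn
  ext k
  rw [tphi_coeff]
  split_ifs with h
  · rw [FF_coeff]
    have h1 : P.coeff n = 0 := coeff_eq_zero_of_natDegree_lt (by omega)
    split_ifs with h2 h3 h3
    · omega
    · subst h2; simp [h1]
    · have : k = n := by omega
      subst this
      simp [h1]
    · simp
  · simp

theorem FF_ne_zero (P : ℤ[X]) (d : ℕ) (hd : 1 ≤ d) (hP : P.natDegree = d) (a b : ℤ) (hb : b ≠ 0) :
    FF P a b ≠ 0 := by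
  intro h
  have := FF_natDegree P d hd hP a b hb
  rw [h] at this; simp at this; omega

theorem tdeg_factor (P : ℤ[X]) (d : ℕ) (hd : 1 ≤ d) (hP : P.natDegree = d) (a b : ℤ) (hb : b ≠ 0)
    (G : ℤ[X][X]) (hG : G ∣ FF P a b) :
    G ≠ 0 ∧ G.natDegree ≤ d ∧ (tphi G).natDegree = G.natDegree := by
  obtain ⟨H, hH⟩ := hG
  have h0 := FF_ne_zero P d hd hP a b hb
  have hne := h0
  rw [hH] at hne
  have hG0 := left_ne_zero_of_mul hne
  have hH0 := right_ne_zero_of_mul hne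
  have h1 := natDegree_mul hG0 hH0
  rw [← hH, FF_natDegree P d hd hP a b hb] at h1
  have h2 := natDegree_mul (tphi_ne_zero G hG0) (tphi_ne_zero H hH0)
  rw [← map_mul, ← hH] at h2
  have h3 := FF_tdeg_le P d hd hP a b
  have h4 := natDegree_le_tdeg G hG0
  have h5 := natDegree_le_tdeg H hH0
  exact ⟨hG0, by omega, by omega⟩

theorem factor_coeff (P : ℤ[X]) (d : ℕ) (hd : 1 ≤ d) (hP : P.natDegree = d) (a b : ℤ) (hb : b ≠ 0)
    (G : ℤ[X][X]) (hG : G ∣ FF P a b) (k i : ℕ) (h : G.natDegree < i + k) : (G.coeff k).coeff i = 0 := by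
  by_contra hne
  have := le_tdeg G k i hne
  have := (tdeg_factor P d hd hP a b hb G hG).2.2
  omega

theorem factor_lc (P : ℤ[X]) (d : ℕ) (hd : 1 ≤ d) (hP : P.natDegree = d) (a b : ℤ) (hb : b ≠ 0)
    (G : ℤ[X][X]) (hG : G ∣ FF P a b) : (G.coeff G.natDegree).coeff 0 ≠ 0 := by
  intro h
  have h1 := (tdeg_factor P d hd hP a b hb G hG).1
  apply leadingCoeff_ne_zero.2 h1
  rw [leadingCoeff]
  ext i
  rcases Nat.eq_zero_or_pos i with rfl | hi
  · simpa using h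
  · rw [factor_coeff P d hd hP a b hb G hG _ _ (by omega)]; simp

theorem factor_top (P : ℤ[X]) (d : ℕ) (hd : 1 ≤ d) (hP : P.natDegree = d) (a b : ℤ) (hb : b ≠ 0)
    (G : ℤ[X][X]) (hG : G ∣ FF P a b) :
    (tphi G).coeff G.natDegree ∣ C (P.coeff d) * (C a - C b * X ^ d) := by
  have hF : (tphi (FF P a b)).coeff d = C (P.coeff d) * (C a - C b * X ^ d) := by
    ext k
    rw [tphi_coeff, coeff_C_mul, coeff_sub, coeff_C, coeff_C_mul_X_pow]
    split_ifs with h1 h2 h3 h3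
    · omega
    · subst h2; rw [FF_coeff, if_pos rfl, if_neg (by omega)]; simp; ring
    · subst h3; rw [FF_coeff, if_neg h2, if_pos (by omega)]; simp; ring
    · rw [FF_coeff, if_neg h2, if_neg (by omega)]; simp
    all_goals first | omega | simp
  have hd' : (tphi (FF P a b)).natDegree = d := by
    rw [(tdeg_factor P d hd hP a b hb _ dvd_rfl).2.2, FF_natDegree P d hd hP a b hb]
  rw [← hF]
  have h1 : (tphi G).leadingCoeff ∣ (tphi (FF P a b)).leadingCoeff := by
    obtain ⟨H, hH⟩ := hG
    rw [hH, map_mul, leadingCoeff_mul]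
    exact dvd_mul_right _ _
  rw [leadingCoeff, leadingCoeff, hd', (tdeg_factor P d hd hP a b hb G hG).2.2] at h1
  exact h1

theorem deg_zero_no_points (P : ℤ[X]) (d : ℕ) (hd : 1 ≤ d) (hP : P.natDegree = d) (a b : ℤ) (hb : b ≠ 0)
    (G : ℤ[X][X]) (hG : G ∣ FF P a b) (h0 : G.natDegree = 0) (x y : ℤ) : G.evalEval x y ≠ 0 := by
  have h1 := factor_lc P d hd hP a b hb G hG
  have h2 : G.coeff 0 = C ((G.coeff 0).coeff 0) := by
    apply eq_C_of_natDegree_eq_zero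
    rw [← Nat.le_zero, natDegree_le_iff_coeff_eq_zero]
    intro i hi
    exact factor_coeff P d hd hP a b hb G hG _ _ (by omega)
  rw [eq_C_of_natDegree_eq_zero h0, h2]
  rw [h0] at h1
  simpa [evalEval] using h1


theorem no_linear (P : ℤ[X]) (d : ℕ) (hd : 2 ≤ d) (hP : P.natDegree = d)
    (hsq : Squarefree (P.map (Int.castRingHom ℚ))) (a b : ℤ) (ha : 1 ≤ a) (hb : 1 ≤ b) (hab : a ≠ b)
    (G : ℤ[X][X]) (hG : G ∣ FF P a b) (h1 : G.natDegree = 1) : False := by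
  have hb0 : b ≠ 0 := by omega
  have hlc := factor_lc P d (by omega) hP a b hb0 G hG
  have hco := factor_coeff P d (by omega) hP a b hb0 G hG
  rw [h1] at hlc hco
  set γ := (G.coeff 1).coeff 0 with hγ
  set α := (G.coeff 0).coeff 1 with hα
  set ζ := (G.coeff 0).coeff 0 with hζ
  have hGeq : G = C (C γ) * X + C (C α * X + C ζ) := by
    conv_lhs => rw [eq_X_add_C_of_natDegree_le_one h1.le]
    congr 2
    · congr 1
      apply eq_C_of_natDegree_eq_zero
      rw [← Nat.le_zero, natDegree_le_iff_coeff_eq_zero]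
      intro i hi
      exact hco _ _ (by omega)
    · apply eq_X_add_C_of_natDegree_le_one
      rw [natDegree_le_iff_coeff_eq_zero]
      intro i hi
      exact hco _ _ (by omega)
  have hγ' : (γ:ℚ) ≠ 0 := by exact_mod_cast hlc
  set l : ℚ := -α / γ with hl
  set ν : ℚ := -ζ / γ with hν
  set p := P.map (Int.castRingHom ℚ) with hp
  have hpd : p.natDegree = d := by
    rw [hp, natDegree_map_eq_of_injective (RingHom.injective_int _), hP]
  have hev : ∀ x : ℚ, (a:ℚ) * p.eval x = b * p.eval (l * x + ν) := by
    intro x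
    obtain ⟨H, hH⟩ := hG
    have h2 := congrArg (eval₂RingHom (eval₂RingHom (Int.castRingHom ℚ) x) (l * x + ν)) hH
    rw [map_mul] at h2
    have h3 : eval₂RingHom (eval₂RingHom (Int.castRingHom ℚ) x) (l * x + ν) G = 0 := by
      rw [hGeq]
      simp only [coe_eval₂RingHom, eval₂_add, eval₂_mul, eval₂_C, eval₂_X, Int.coe_castRingHom]
      rw [hl, hν]
      field_simp
      ring
    have h4 : eval₂RingHom (eval₂RingHom (Int.castRingHom ℚ) x) (l * x + ν) (FF P a b) =
        a * p.eval x - b * p.eval (l * x + ν) := by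
      simp only [FF, map_sub, map_mul, hp, eval_map, coe_eval₂RingHom, eval₂_C]
      simp [eval₂_map]
    rw [h3, zero_mul, h4] at h2
    linarith
  have hlc0 : p.coeff d ≠ 0 := by
    rw [← hpd]; apply leadingCoeff_ne_zero.2; intro h; rw [h] at hpd; simp at hpd; omega
  have ha' : (0:ℚ) < a := by exact_mod_cast ha
  have hb' : (0:ℚ) < b := by exact_mod_cast hb
  have hpoly : C (a:ℚ) * p = C (b:ℚ) * p.comp (C l * X + C ν) := by
    apply Polynomial.funext
    intro x
    simpa using hev x
  have hl0 : l ≠ 0 := by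
    intro h
    rw [h] at hpoly
    have := congrArg natDegree hpoly
    rw [natDegree_C_mul ha'.ne', natDegree_C_mul hb'.ne', hpd] at this
    simp at this
    omega
  have hlead : (a:ℚ) = b * l ^ d := by
    have h5 := congrArg leadingCoeff hpoly
    rw [leadingCoeff_mul, leadingCoeff_mul, leadingCoeff_comp, leadingCoeff_C, leadingCoeff_C,
      leadingCoeff_linear hl0, hpd, leadingCoeff, hpd] at h5
    · have : p.coeff d * ((a:ℚ) - b * l ^ d) = 0 := by linear_combination h5
      rcases mul_eq_zero.1 this with h | h
      · exact absurd h hlc0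
      · linarith
    · rw [natDegree_linear hl0]; norm_num
  have hl1 : |l| ≠ 1 := by
    intro h
    rcases (abs_eq (by norm_num : (0:ℚ) ≤ 1)).1 h with h | h
    · rw [h] at hlead
      apply hab
      have : (a:ℚ) = b := by simpa using hlead
      exact_mod_cast this
    · rw [h] at hlead
      rcases neg_one_pow_eq_or ℚ d with h | h
      · rw [h] at hlead
        apply hab
        have : (a:ℚ) = b := by simpa using hlead
        exact_mod_cast this
      · rw [h] at hlead; linarith
  have hl1' : 1 - l ≠ 0 := by
    intro h
    apply hl1
    rw [show l = 1 by linarith]; simp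
  set f : ℚ := ν / (1 - l) with hf
  set q := p.comp (X + C f) with hq
  have hqpoly : C (a:ℚ) * q = C (b:ℚ) * q.comp (C l * X) := by
    apply Polynomial.funext
    intro x
    have := hev (x + f)
    have hfe : l * (x + f) + ν = l * x + f := by
      rw [hf]; field_simp; ring
    rw [hfe] at this
    simpa [hq] using this
  have hqc : ∀ i, i ≠ d → q.coeff i = 0 := by
    intro i hi
    have h5 := congrArg (fun r => coeff r i) hqpoly
    simp only [coeff_C_mul, comp_C_mul_X_coeff] at h5
    rw [hlead] at h5
    by_contra hne
    have h6 : l ^ i = l ^ d := by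
      have : (b * q.coeff i) * (l ^ i - l ^ d) = 0 := by linear_combination -h5
      rcases mul_eq_zero.1 this with h | h
      · exact absurd h (mul_ne_zero hb'.ne' hne)
      · linarith
    have h7 : |l| ^ i = |l| ^ d := by rw [← abs_pow, ← abs_pow, h6]
    exact hi (pow_right_injective₀ (abs_pos.2 hl0) hl1 h7)
  have hqeq : q = C (q.coeff d) * X ^ d := by
    ext i
    rw [coeff_C_mul_X_pow]
    split_ifs with h
    · rw [h]
    · exact hqc i h
  have hpeq : p = C (q.coeff d) * (X - C f) ^ d := by
    have : p = q.comp (X - C f) := by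
      rw [hq, comp_assoc]; simp
    rw [this, hqeq]
    simp
  have hdvd : (X - C f) * (X - C f) ∣ p := by
    rw [hpeq, ← sq]
    exact dvd_mul_of_dvd_right (pow_dvd_pow _ hd) _
  have := hsq _ hdvd
  exact not_isUnit_X_sub_C f this

theorem quad_shape (P : ℤ[X]) (d : ℕ) (hd : 2 ≤ d) (hP : P.natDegree = d)
    (a b : ℤ) (ha : 1 ≤ a) (hb : 1 ≤ b)
    (G : ℤ[X][X]) (hG : G ∣ FF P a b) (h1 : G.natDegree = 2) : ∃ α β γ δ e ζ : ℤ,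
    G = C (C γ) * X ^ 2 + C (C β * X + C e) * X + C (C α * X ^ 2 + C δ * X + C ζ) ∧ γ ≠ 0 ∧
    β ^ 2 - 4 * α * γ ≠ 0 := by
  have hb0 : b ≠ 0 := by omega
  have hlc := factor_lc P d (by omega) hP a b hb0 G hG
  have hco := factor_coeff P d (by omega) hP a b hb0 G hG
  have htop := factor_top P d (by omega) hP a b hb0 G hG
  rw [h1] at hlc hco htop
  refine ⟨(G.coeff 0).coeff 2, (G.coeff 1).coeff 1, (G.coeff 2).coeff 0, (G.coeff 0).coeff 1,
    (G.coeff 1).coeff 0, (G.coeff 0).coeff 0, ?_, hlc, ?_⟩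
  · conv_lhs => rw [eq_quadratic_of_degree_le_two (natDegree_le_iff_degree_le.1 h1.le)]
    congr 1
    · congr 1
      · congr 2
        apply eq_C_of_natDegree_eq_zero
        rw [← Nat.le_zero, natDegree_le_iff_coeff_eq_zero]
        intro i hi
        exact hco _ _ (by omega)
      · congr 2
        apply eq_X_add_C_of_natDegree_le_one
        rw [natDegree_le_iff_coeff_eq_zero]
        intro i hi
        exact hco _ _ (by omega)
    · congr 1
      apply eq_quadratic_of_degree_le_two
      apply natDegree_le_iff_degree_le.1
      rw [natDegree_le_iff_coeff_eq_zero]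
      intro i hi
      exact hco _ _ (by omega)
  · set α := (G.coeff 0).coeff 2 with hα
    set β := (G.coeff 1).coeff 1 with hβ
    set γ := (G.coeff 2).coeff 0 with hγ
    intro hdisc
    set g := (tphi G).coeff 2 with hg
    have hgeq : g = C γ * X ^ 2 + C β * X + C α := by
      ext k
      rw [hg, tphi_coeff]
      simp only [coeff_add, coeff_C_mul_X_pow, coeff_C_mul_X, coeff_C]
      rcases (by omega : k = 0 ∨ k = 1 ∨ k = 2 ∨ 2 < k) with rfl | rfl | rfl | h2
      · simp [hα]
      · simp [hβ]
      · simp [hγ]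
      · rw [if_neg (by omega), if_neg (by omega), if_neg (by omega), if_neg (by omega)]; simp
    obtain ⟨h, hh⟩ := htop
    have hγ' : (γ:ℚ) ≠ 0 := by exact_mod_cast hlc
    set r : ℚ := -β / (2 * γ) with hr
    have hdisc' : (β:ℚ) ^ 2 - 4 * α * γ = 0 := by exact_mod_cast hdisc
    have hα' : (α:ℚ) = β ^ 2 / (4 * γ) := by field_simp; linarith
    have hg0 : aeval r g = 0 := by
      rw [hgeq]
      simp [hr, hα']
      field_simp
      ring
    have hg1 : aeval r (derivative g) = 0 := by
      rw [hgeq]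
      simp only [derivative_add, derivative_C_mul, derivative_X_pow, derivative_X, derivative_C, map_add,
        map_mul, aeval_C, aeval_X, map_pow, map_one, map_zero]
      simp [hr]
      field_simp
      ring
    have e1 := congrArg (aeval r) hh
    have e2 := congrArg (fun t => aeval r (derivative t)) hh
    simp only [derivative_mul, map_add, map_mul, hg0, hg1, zero_mul, add_zero] at e1 e2
    have hlc0 : (P.coeff d : ℚ) ≠ 0 := by
      have : P.coeff d ≠ 0 := by
        rw [← hP]; apply leadingCoeff_ne_zero.2; rintro rfl; simp at hP; omega
      exact_mod_cast this
    have hb' : (b:ℚ) ≠ 0 := by exact_mod_cast hb0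
    have ha' : (a:ℚ) ≠ 0 := by exact_mod_cast (by omega : a ≠ 0)
    have hd0 : (d:ℚ) ≠ 0 := by exact_mod_cast (by omega : d ≠ 0)
    simp [hlc0] at e1
    simp only [derivative_sub, derivative_C_mul, derivative_X_pow, derivative_C, map_sub,
        map_mul, aeval_C, aeval_X, map_pow, map_zero] at e2
    simp [hlc0, hb', hd0] at e2
    rw [e2.1, zero_pow (by omega)] at e1
    simp [ha'] at e1


theorem quad_height (f g h : ℤ[X]) (hf : f = g * h) (hf0 : f ≠ 0) (d : ℕ) (hg : g.natDegree ≤ 2)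
    (hd : f.natDegree ≤ d) (A : ℝ) (hA : ∀ i, |((f.coeff i : ℤ):ℝ)| ≤ A) (n : ℕ) :
    |((g.coeff n : ℤ):ℝ)| ≤ 2 * ((d + 1) * A) := by
  have hh0 : h ≠ 0 := by rintro rfl; simp at hf; exact hf0 hf
  set φ := Int.castRingHom ℂ with hφ
  have hinj : Function.Injective φ := RingHom.injective_int _
  have h1 := norm_coeff_le_choose_mul_mahlerMeasure_of_one_le_mahlerMeasure n (g.map φ) (h.map φ)
    (one_le_mahlerMeasure_of_ne_zero hh0)
  rw [← Polynomial.map_mul, ← hf, natDegree_map_eq_of_injective hinj, coeff_map] at h1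
  have hA0 : 0 ≤ A := (abs_nonneg _).trans (hA 0)
  have h2 : (f.map φ).mahlerMeasure ≤ (d + 1) * A := by
    refine (mahlerMeasure_le_sum_norm_coeff _).trans ?_
    rw [Polynomial.sum_over_range' _ (by simp) (d + 1) (by rw [natDegree_map_eq_of_injective hinj]; omega)]
    refine (Finset.sum_le_sum (g := fun _ => A) ?_).trans ?_
    · intro i _
      rw [coeff_map]
      simpa [hφ] using hA i
    · simp
  have h3 : ((g.natDegree.choose n : ℕ) : ℝ) ≤ 2 := by
    have : g.natDegree.choose n ≤ Nat.choose 2 n := Nat.choose_le_choose n hg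
    have h4 : Nat.choose 2 n ≤ 2 := by
      rcases (by omega : n = 0 ∨ n = 1 ∨ n = 2 ∨ 2 < n) with rfl | rfl | rfl | h
      · simp
      · simp
      · simp
      · rw [Nat.choose_eq_zero_of_lt h]; simp
    exact_mod_cast this.trans h4
  have h5 : ‖φ (g.coeff n)‖ = |((g.coeff n : ℤ):ℝ)| := by simp [hφ]
  rw [← h5]
  refine h1.trans ?_
  have := mahlerMeasure_nonneg (f.map φ)
  gcongr

theorem FF_special (P : ℤ[X]) (a b x0 : ℤ) : (FF P a b).map (evalRingHom x0) = C (a * P.eval x0) - C b * P := by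
  rw [FF, Polynomial.map_sub, Polynomial.map_mul, map_C, map_C, map_map]
  have : (evalRingHom x0).comp C = RingHom.id ℤ := by ext; simp
  rw [this, Polynomial.map_id]
  simp

theorem quad_coeffs (P : ℤ[X]) (d : ℕ) (hd : 2 ≤ d) (hP : P.natDegree = d) (B : ℝ) (hB : 1 ≤ B)
    (hc : ∀ i : ℕ, |((P.coeff i : ℤ) : ℝ)| ≤ B)
    (a b : ℤ) (ha : 1 ≤ a) (hb : 1 ≤ b) (haB : (a:ℝ) ≤ B) (hbB : (b:ℝ) ≤ B)
    (α β γ δ e ζ : ℤ) 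
    (hG : C (C γ) * X ^ 2 + C (C β * X + C e) * X + C (C α * X ^ 2 + C δ * X + C ζ) ∣ FF P a b) :
    ∃ A : ℝ, A = 4 * ((d + 1) * ((d + 2) * B ^ 2)) ∧ |(α:ℝ)| ≤ A ∧ |(β:ℝ)| ≤ A ∧ |(γ:ℝ)| ≤ A ∧
     |(δ:ℝ)| ≤ A ∧ |(e:ℝ)| ≤ A ∧ |(ζ:ℝ)| ≤ A := by
  have key : ∀ x0 : ℤ, (x0 = 0 ∨ x0 = 1 ∨ x0 = -1) → ∀ n, 
      |(((C γ * X ^ 2 + C (β * x0 + e) * X + C (α * x0 ^ 2 + δ * x0 + ζ) : ℤ[X]).coeff n : ℤ) : ℝ)| ≤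
      2 * ((d + 1) * ((d + 2) * B ^ 2)) := by
    intro x0 hx0 n
    obtain ⟨H, hH⟩ := hG
    have h1 := congrArg (Polynomial.map (evalRingHom x0)) hH
    rw [FF_special, Polynomial.map_mul] at h1
    have h2 : (C (C γ) * X ^ 2 + C (C β * X + C e) * X + C (C α * X ^ 2 + C δ * X + C ζ) : ℤ[X][X]).map (evalRingHom x0)
      = C γ * X ^ 2 + C (β * x0 + e) * X + C (α * x0 ^ 2 + δ * x0 + ζ) := by
      simp only [Polynomial.map_add, Polynomial.map_mul, map_C, Polynomial.map_pow, map_X, coe_evalRingHom, eval_add, eval_mul, eval_C, eval_X, eval_pow]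
    rw [h2] at h1
    have hnd : (C (a * P.eval x0) - C b * P).natDegree = d := by
      rw [← natDegree_neg, neg_sub, natDegree_sub_C, natDegree_C_mul (by omega), hP]
    refine quad_height _ _ _ h1 ?_ d natDegree_quadratic_le hnd.le ((d + 2) * B ^ 2) ?_ n
    · intro h; rw [h] at hnd; simp at hnd; omega
    · intro i
      rw [coeff_sub, coeff_C_mul, coeff_C]
      have ha0 : (0:ℝ) ≤ a := by exact_mod_cast (by omega : 0 ≤ a)
      have hb0 : (0:ℝ) ≤ b := by exact_mod_cast (by omega : 0 ≤ b)
      have hev : |((P.eval x0 : ℤ):ℝ)| ≤ (d + 1) * B := by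
        rw [eval_eq_sum_range' (n := d + 1) (by omega)]
        push_cast
        refine (Finset.abs_sum_le_sum_abs _ _).trans ?_
        refine (Finset.sum_le_sum (g := fun _ => B) ?_).trans (by simp)
        intro j _
        rw [abs_mul, abs_pow]
        have : |(x0:ℝ)| ≤ 1 := by rcases hx0 with rfl | rfl | rfl <;> simp
        have : |(x0:ℝ)| ^ j ≤ 1 := pow_le_one₀ (abs_nonneg _) this
        have := hc j
        have := abs_nonneg ((P.coeff j : ℤ):ℝ)
        nlinarith
      have h3 : |((if i = 0 then a * P.eval x0 else 0 : ℤ):ℝ)| ≤ B * ((d + 1) * B) := by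
        split_ifs
        · push_cast
          rw [abs_mul, abs_of_nonneg ha0]
          gcongr
        · simp; positivity
      have h4 : |((b * P.coeff i : ℤ):ℝ)| ≤ B * B := by
        push_cast
        rw [abs_mul, abs_of_nonneg hb0]
        have := hc i
        gcongr
      rw [Int.cast_sub]
      refine (abs_sub _ _).trans ?_
      nlinarith
  set T := 2 * (((d:ℝ) + 1) * ((d + 2) * B ^ 2)) with hT
  have c0 : ∀ u v w : ℤ, (C u * X ^ 2 + C v * X + C w : ℤ[X]).coeff 0 = w := by intros; simp
  have c1 : ∀ u v w : ℤ, (C u * X ^ 2 + C v * X + C w : ℤ[X]).coeff 1 = v := by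
    intros; simp only [coeff_add, coeff_C_mul_X_pow, coeff_C_mul_X, coeff_C]; simp
  have c2 : ∀ u v w : ℤ, (C u * X ^ 2 + C v * X + C w : ℤ[X]).coeff 2 = u := by
    intros; simp only [coeff_add, coeff_C_mul_X_pow, coeff_C_mul_X, coeff_C]; simp
  have k02 := key 0 (by simp) 2
  have k01 := key 0 (by simp) 1
  have k00 := key 0 (by simp) 0
  have k11 := key 1 (by simp) 1
  have k10 := key 1 (by simp) 0
  have k20 := key (-1) (by simp) 0
  rw [c2] at k02
  rw [c1] at k01 k11
  rw [c0] at k00 k10 k20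
  push_cast at k02 k01 k00 k11 k10 k20
  rw [abs_le] at k02 k01 k00 k11 k10 k20
  refine ⟨2 * T, by rw [hT]; ring, ?_⟩
  simp only [abs_le]
  refine ⟨⟨?_, ?_⟩, ⟨?_, ?_⟩, ⟨?_, ?_⟩, ⟨?_, ?_⟩, ⟨?_, ?_⟩, ?_, ?_⟩ <;> linarith



theorem quad_split {R : Type*} [CommRing R] (α β γ δ e ζ s Δ κ l x y : R) (hΔ : Δ = β ^ 2 - 4 * α * γ)
    (hκ : κ = β * e - 2 * γ * δ) (hl : l = e ^ 2 - 4 * γ * ζ) (hs : Δ = s * s)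
    (hm : κ ^ 2 - Δ * l = 0) :
    4 * γ * Δ * (γ * y ^ 2 + (β * x + e) * y + (α * x ^ 2 + δ * x + ζ)) =
    (s * (2 * γ) * y + ((s * β - Δ) * x + (s * e - κ))) * (s * (2 * γ) * y + ((s * β + Δ) * x + (s * e + κ))) := by
  have h1 : 4 * γ * Δ * (γ * y ^ 2 + (β * x + e) * y + (α * x ^ 2 + δ * x + ζ)) =
    Δ * (2 * γ * y + β * x + e) ^ 2 - (Δ * x + κ) ^ 2 + (κ ^ 2 - Δ * l) := by
    subst hκ hl
    linear_combination (Δ * x ^ 2) * hΔ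
  rw [h1, hm]
  linear_combination (2 * γ * y + β * x + e) ^ 2 * hs

theorem quad_bd (u v w z A k U : ℝ) (hk : 0 ≤ k) (hu : |u| ≤ A) (hv : |v| ≤ A) (hw : |w| ≤ A) (hz : |z| ≤ A)
    (hU : U = (1 + k) * A ^ 2) :
    |u * v - k * (w * z)| ≤ U := by
  have hA : 0 ≤ A := (abs_nonneg _).trans hu
  refine (abs_sub _ _).trans ?_
  rw [abs_mul, abs_mul, abs_mul, abs_of_nonneg hk, hU]
  have h1 : |u| * |v| ≤ A * A := by gcongr
  have h2 : k * (|w| * |z|) ≤ k * (A * A) := by gcongr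
  linarith

set_option maxHeartbeats 1000000 in
theorem quad_case (d : ℕ) (hd : 2 ≤ d) (C₀ ε : ℝ) (hC : 0 < C₀) (hε : 0 < ε) : ∃ K : ℝ, 0 < K ∧
    ∀ N : ℕ, 2 ≤ N → ∀ P : ℤ[X], P.natDegree = d →
      (∀ i : ℕ, |((P.coeff i : ℤ) : ℝ)| ≤ (N : ℝ) ^ C₀) → ∀ a b : ℤ, 1 ≤ a → ((a : ℝ) ≤ (N : ℝ) ^ C₀) → 1 ≤ b →
      ((b : ℝ) ≤ (N : ℝ) ^ C₀) → ∀ G : ℤ[X][X], Irreducible G → G ∣ FF P a b → G.natDegree = 2 →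
      ∀ S : Finset (ℤ × ℤ),
      (∀ q ∈ S, 1 ≤ q.1 ∧ q.1 ≤ N ∧ 1 ≤ q.2 ∧ q.2 ≤ N ∧
        G.evalEval q.1 q.2 = 0) → (S.card : ℝ) ≤ K * (N:ℝ) ^ ((1:ℝ)/3 + ε) := by
  classical
  have hη : 0 < 1 / (3 * (8 * C₀ + 1)) := by positivity
  set η := 1 / (3 * (8 * C₀ + 1)) with hηd
  obtain ⟨K, hK0, hK⟩ := conic_bound η hη
  set c : ℝ := 4 * ((d + 1) * (d + 2)) with hcdef
  have hc4 : 4 ≤ c := by rw [hcdef]; nlinarith [(Nat.cast_nonneg d : (0:ℝ) ≤ d)]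
  refine ⟨K * (100 * c ^ 4) ^ η + 1, by positivity, ?_⟩
  intro N hN P hP hco a b ha haN hb hbN G hirr hG hG2 S hS
  have hN1 : (1:ℝ) ≤ N := by exact_mod_cast (by omega : 1 ≤ N)
  have hR1 : 1 ≤ (N:ℝ) ^ ((1:ℝ)/3 + ε) := Real.one_le_rpow hN1 (by positivity)
  have hR3 : (N:ℝ) ^ ((1:ℝ)/3) ≤ (N:ℝ) ^ ((1:ℝ)/3 + ε) := Real.rpow_le_rpow_of_exponent_le hN1 (by linarith)
  obtain ⟨α, β, γ, δ, e, ζ, hGeq, hγ, hΔ⟩ := quad_shape P d hd hP a b ha hb G hG hG2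
  have hB1 : 1 ≤ (N:ℝ) ^ C₀ := Real.one_le_rpow hN1 hC.le
  obtain ⟨A, hA, hAα, hAβ, hAγ, hAδ, hAe, hAζ⟩ := quad_coeffs P d hd hP _ hB1 hco a b ha hb haN hbN α β γ δ e ζ
    (hGeq ▸ hG)
  have hA1 : 1 ≤ A := by
    have : A = c * ((N:ℝ) ^ C₀) ^ 2 := by rw [hA, hcdef]; ring
    rw [this]
    nlinarith [one_le_pow₀ hB1 (n := 2)]
  set Δ := β ^ 2 - 4 * α * γ with hΔd
  set κ := β * e - 2 * γ * δ with hκ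
  set l := e ^ 2 - 4 * γ * ζ with hl
  set m := κ ^ 2 - Δ * l with hm
  have hev : ∀ q ∈ S, γ * q.2 ^ 2 + (β * q.1 + e) * q.2 + (α * q.1 ^ 2 + δ * q.1 + ζ) = 0 := by
    intro q hq
    have := (hS q hq).2.2.2.2
    rw [hGeq] at this
    simp only [evalEval, eval_add, eval_mul, eval_C, eval_X, eval_pow] at this
    exact this
  let f : ℤ × ℤ → ℤ × ℤ := fun q => (Δ * q.1 + κ, 2 * γ * q.2 + β * q.1 + e)
  have hinj : Function.Injective f := by
    intro q r h
    have h1 := congrArg Prod.fst h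
    have h2 := congrArg Prod.snd h
    simp only [f] at h1 h2
    have h3 : q.1 = r.1 := mul_left_cancel₀ hΔ (by linarith)
    rw [h3] at h2
    have h4 : q.2 = r.2 := mul_left_cancel₀ (mul_ne_zero two_ne_zero hγ) (by linarith)
    exact Prod.ext h3 h4
  have hcon : ∀ q ∈ S, (f q).1 ^ 2 - Δ * (f q).2 ^ 2 = m := by
    intro q hq
    have := hev q hq
    simp only [f, hm, hΔd, hκ, hl]
    linear_combination (-4 * γ * (β ^ 2 - 4 * α * γ)) * this
  by_cases hm0 : m = 0
  · -- degenerate conic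
    have hnsq : ¬ IsSquare Δ := by
      rintro ⟨s, hs⟩
      have hs0 : s ≠ 0 := by rintro rfl; simp at hs; exact hΔ hs
      have hprime : Prime G := hirr.prime
      set A1 : ℤ[X][X] := C (C (s * (2 * γ))) * X + C (C (s * β - Δ) * X + C (s * e - κ)) with hA1d
      set A2 : ℤ[X][X] := C (C (s * (2 * γ))) * X + C (C (s * β + Δ) * X + C (s * e + κ)) with hA2d
      have hprod : C (C (4 * γ * Δ)) * G = A1 * A2 := by
        have hm' : κ ^ 2 - Δ * l = 0 := hm0
        let ψ : ℤ →+* ℤ[X][X] := (C : ℤ[X] →+* ℤ[X][X]).comp C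
        have h4 : ψ 4 = 4 := map_ofNat ψ 4
        have h2 : ψ 2 = 2 := map_ofNat ψ 2
        have hx := quad_split (ψ α) (ψ β) (ψ γ) (ψ δ) (ψ e) (ψ ζ) (ψ s) (ψ Δ) (ψ κ) (ψ l) (C X) X
          (by rw [hΔd, map_sub, map_mul, map_mul, map_pow, h4])
          (by rw [hκ, map_sub, map_mul, map_mul, map_mul, h2])
          (by rw [hl, map_sub, map_mul, map_mul, map_pow, h4])
          (by rw [← map_mul, hs])
          (by rw [← map_pow, ← map_mul, ← map_sub, hm', map_zero])
        rw [← h4, ← h2] at hx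
        simp only [ψ, RingHom.comp_apply] at hx
        rw [hGeq, hA1d, hA2d]
        simp only [C_mul, C_sub, C_add, C_pow]
        exact hx
      have hA0 : C (s * (2 * γ)) ≠ 0 := by
        rw [Ne, C_eq_zero]; exact mul_ne_zero hs0 (mul_ne_zero two_ne_zero hγ)
      have hdv : G ∣ A1 * A2 := hprod ▸ dvd_mul_left _ _
      have hn : ∀ u : ℤ[X], (C (C (s * (2 * γ))) * X + C u).natDegree = 1 := fun u => natDegree_linear hA0
      rcases hprime.dvd_or_dvd hdv with h | h
      · have := natDegree_le_of_dvd h (by intro h0; have := hn (C (s * β - Δ) * X + C (s * e - κ)); rw [← hA1d, h0] at this; simp at this)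
        rw [hG2, hA1d, hn] at this; omega
      · have := natDegree_le_of_dvd h (by intro h0; have := hn (C (s * β + Δ) * X + C (s * e + κ)); rw [← hA2d, h0] at this; simp at this)
        rw [hG2, hA2d, hn] at this; omega
    have hz : ∀ q ∈ S, f q = (0, 0) := by
      intro q hq
      have h1 := hcon q hq
      rw [hm0] at h1
      by_cases hw : (f q).2 = 0
      · rw [hw] at h1
        have : (f q).1 = 0 := by
          have : (f q).1 ^ 2 = 0 := by linarith
          exact pow_eq_zero_iff (two_ne_zero) |>.1 this
        exact Prod.ext this hw
      · exfalso
        apply hnsq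
        have h2 : (f q).2 ^ 2 ∣ (f q).1 ^ 2 := ⟨Δ, by linarith⟩
        obtain ⟨t, ht⟩ := (Int.pow_dvd_pow_iff two_ne_zero).1 h2
        refine ⟨t, ?_⟩
        rw [ht] at h1
        apply mul_left_cancel₀ (pow_ne_zero 2 hw)
        linarith
    have hcard : S.card ≤ 1 := by
      rw [Finset.card_le_one]
      intro q hq r hr
      exact hinj ((hz q hq).trans (hz r hr).symm)
    have hcard' : (S.card : ℝ) ≤ 1 := by exact_mod_cast hcard
    have : 0 ≤ K * (100 * c ^ 4) ^ η := by positivity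
    nlinarith
  · -- nondegenerate conic
    have hX1 : 1 ≤ 50 * A ^ 4 * N := by nlinarith [one_le_pow₀ hA1 (n := 4)]
    obtain ⟨n, hn1, hn2⟩ := exists_nat_pow_near hX1 (by norm_num : (1:ℝ) < 2)
    have hA12 : A ≤ A ^ 4 := le_self_pow₀ hA1 (by norm_num)
    have hA24 : A ^ 2 ≤ A ^ 4 := pow_le_pow_right₀ hA1 (by norm_num)
    have hmul : ∀ u v U V : ℝ, |u| ≤ U → |v| ≤ V → |u * v| ≤ U * V := by
      intro u v U V hu hv
      rw [abs_mul]
      exact mul_le_mul hu hv (abs_nonneg _) ((abs_nonneg _).trans hu)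
    have bΔ : |(Δ:ℝ)| ≤ 5 * A ^ 2 := by
      have := quad_bd β β α γ A 4 (5 * A ^ 2) (by norm_num) hAβ hAβ hAα hAγ (by ring)
      rw [hΔd]; push_cast
      rw [show (β:ℝ) ^ 2 - 4 * α * γ = β * β - 4 * (α * γ) by ring]
      exact this
    have bκ : |(κ:ℝ)| ≤ 5 * A ^ 2 := by
      have := quad_bd β e γ δ A 2 (3 * A ^ 2) (by norm_num) hAβ hAe hAγ hAδ (by ring)
      rw [hκ]; push_cast
      rw [show (β:ℝ) * e - 2 * γ * δ = β * e - 2 * (γ * δ) by ring]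
      exact this.trans (by nlinarith)
    have bl : |(l:ℝ)| ≤ 5 * A ^ 2 := by
      have := quad_bd e e γ ζ A 4 (5 * A ^ 2) (by norm_num) hAe hAe hAγ hAζ (by ring)
      rw [hl]; push_cast
      rw [show (e:ℝ) ^ 2 - 4 * γ * ζ = e * e - 4 * (γ * ζ) by ring]
      exact this
    have bm : |(m:ℝ)| ≤ 50 * A ^ 4 := by
      have := quad_bd κ κ Δ l (5 * A ^ 2) 1 (50 * A ^ 4) (by norm_num) bκ bκ bΔ bl (by ring)
      rw [hm]; push_cast
      rw [show (κ:ℝ) ^ 2 - Δ * l = κ * κ - 1 * (Δ * l) by ring]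
      exact this
    have toInt : ∀ z : ℤ, |(z:ℝ)| ≤ 50 * A ^ 4 * N → |z| ≤ 2 ^ (n + 1) := by
      intro z hz
      have : |(z:ℝ)| ≤ 2 ^ (n + 1) := hz.trans hn2.le
      exact_mod_cast this
    have hA4 : 0 ≤ A ^ 4 := by positivity
    have hA4N : A ^ 4 ≤ A ^ 4 * N := le_mul_of_one_le_right hA4 hN1
    have h := hK (n + 1) Δ m hΔ hm0 (toInt _ (bΔ.trans (by linarith))) (toInt _ (bm.trans (by linarith)))
      (S.image f) (by
        intro s hs
        obtain ⟨q, hq, rfl⟩ := Finset.mem_image.1 hs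
        obtain ⟨hx1, hx2, hy1, hy2, _⟩ := hS q hq
        have hx : |(q.1:ℝ)| ≤ N := by
          rw [abs_of_nonneg (by exact_mod_cast (by omega : 0 ≤ q.1))]; exact_mod_cast hx2
        have hy : |(q.2:ℝ)| ≤ N := by
          rw [abs_of_nonneg (by exact_mod_cast (by omega : 0 ≤ q.2))]; exact_mod_cast hy2
        refine ⟨hcon q hq, toInt _ ?_, toInt _ ?_⟩
        · have h1 := hmul _ _ _ _ bΔ hx
          simp only [f]; push_cast
          refine (abs_add_le _ _).trans ?_
          have h5 : 5 * A ^ 2 * N ≤ 5 * A ^ 4 * N := by gcongr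
          have h6 : A ^ 4 ≤ A ^ 4 * N := le_mul_of_one_le_right hA4 hN1
          linarith
        · have h1 := hmul _ _ _ _ hAγ hy
          have h2 := hmul _ _ _ _ hAβ hx
          simp only [f]; push_cast
          refine (abs_add_le _ _).trans ?_
          have h3 : |2 * (γ:ℝ) * q.2 + β * q.1| ≤ 3 * (A * N) := by
            rw [mul_assoc]
            refine (abs_add_le _ _).trans ?_
            rw [abs_mul 2, abs_two]; linarith
          have h5 : A * N ≤ A ^ 4 * N := by gcongr
          have h6 : A ^ 4 ≤ A ^ 4 * N := le_mul_of_one_le_right hA4 hN1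
          have h7 : 0 ≤ A ^ 4 * N := by positivity
          linarith)
    rw [Finset.card_image_of_injective _ hinj] at h
    have h8 : ((2:ℝ) ^ (n + 1)) ^ η ≤ (100 * c ^ 4) ^ η * (N:ℝ) ^ ((1:ℝ)/3) := by
      have h9 : (2:ℝ) ^ (n + 1) ≤ (100 * c ^ 4) * (N:ℝ) ^ (8 * C₀ + 1) := by
        have h10 : A ^ 4 * N = c ^ 4 * (N:ℝ) ^ (8 * C₀ + 1) := by
          have : A = c * ((N:ℝ) ^ C₀) ^ 2 := by rw [hA, hcdef]; ring
          rw [this, mul_pow, ← pow_mul, Real.rpow_add (by linarith), Real.rpow_one,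
            mul_comm (8:ℝ) C₀, Real.rpow_mul (by linarith)]
          norm_num [mul_assoc]
        calc (2:ℝ) ^ (n + 1) = 2 * 2 ^ n := by ring
          _ ≤ 2 * (50 * A ^ 4 * N) := by gcongr
          _ = 100 * (A ^ 4 * N) := by ring
          _ = _ := by rw [h10]; ring
      calc ((2:ℝ) ^ (n + 1)) ^ η ≤ ((100 * c ^ 4) * (N:ℝ) ^ (8 * C₀ + 1)) ^ η := by gcongr
        _ = (100 * c ^ 4) ^ η * ((N:ℝ) ^ (8 * C₀ + 1)) ^ η := Real.mul_rpow (by positivity) (by positivity)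
        _ = _ := by
          rw [← Real.rpow_mul (by linarith)]
          congr 2
          rw [hηd]; field_simp
    calc (S.card : ℝ) ≤ _ := h
      _ ≤ K * ((100 * c ^ 4) ^ η * (N:ℝ) ^ ((1:ℝ)/3 + ε)) := by gcongr; exact h8.trans (by gcongr)
      _ ≤ _ := by rw [add_mul, mul_assoc]; linarith


theorem assemble (P : ℤ[X]) (d : ℕ) (hd : 2 ≤ d) (hP : P.natDegree = d) (a b : ℤ) (hb : b ≠ 0)
    (Box : Finset (ℤ × ℤ)) (T : ℝ) 
    (hirr : ∀ G : ℤ[X][X], Irreducible G → G ∣ FF P a b → 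
      ∀ S ⊆ Box, (∀ q ∈ S, G.evalEval q.1 q.2 = 0) → (S.card : ℝ) ≤ G.natDegree * T) (G : ℤ[X][X]) :
    G ∣ FF P a b → ∀ S ⊆ Box, (∀ q ∈ S, G.evalEval q.1 q.2 = 0) → (S.card : ℝ) ≤ G.natDegree * T := by
  classical
  refine WfDvdMonoid.induction_on_irreducible (motive := fun G : ℤ[X][X] => G ∣ FF P a b → ∀ S ⊆ Box, (∀ q ∈ S, G.evalEval q.1 q.2 = 0) → (S.card : ℝ) ≤ G.natDegree * T) G ?_ ?_ ?_
  · intro h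
    exact absurd rfl (tdeg_factor P d (by omega) hP a b hb 0 h).1
  · intro u hu h S _ hS
    have h0 : u.natDegree = 0 := natDegree_eq_zero_of_isUnit hu
    have : S = ∅ := by
      rw [Finset.eq_empty_iff_forall_notMem]
      intro q hq
      exact deg_zero_no_points P d (by omega) hP a b hb u h h0 _ _ (hS q hq)
    rw [this, h0]; simp
  · intro A i hA hi ih h S hSB hS
    have h1 := hirr i hi (dvd_of_mul_right_dvd h) (S.filter (fun q => i.evalEval q.1 q.2 = 0))
      ((Finset.filter_subset _ _).trans hSB) (fun q hq => (Finset.mem_filter.1 hq).2)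
    have h2 := ih (dvd_of_mul_left_dvd h) (S.filter (fun q => A.evalEval q.1 q.2 = 0))
      ((Finset.filter_subset _ _).trans hSB) (fun q hq => (Finset.mem_filter.1 hq).2)
    have h3 : S ⊆ S.filter (fun q => i.evalEval q.1 q.2 = 0) ∪ S.filter (fun q => A.evalEval q.1 q.2 = 0) := by
      intro q hq
      have := hS q hq
      rw [evalEval_mul] at this
      rcases mul_eq_zero.1 this with h | h
      · exact Finset.mem_union_left _ (Finset.mem_filter.2 ⟨hq, h⟩)
      · exact Finset.mem_union_right _ (Finset.mem_filter.2 ⟨hq, h⟩)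
    have h4 := (Finset.card_le_card h3).trans (Finset.card_union_le _ _)
    have h5 : (S.card : ℝ) ≤ ((S.filter (fun q => i.evalEval q.1 q.2 = 0)).card : ℝ) + ((S.filter (fun q => A.evalEval q.1 q.2 = 0)).card : ℝ) := by
      exact_mod_cast h4
    rw [natDegree_mul hi.ne_zero hA]
    push_cast
    linarith

theorem integral_points_on_curves
    (d : ℕ) (hd : 2 ≤ d) (C ε : ℝ) (hC : 0 < C) (hε : 0 < ε) :
    ∃ C' : ℝ, 0 < C' ∧ ∀ N : ℕ, 2 ≤ N → ∀ P : Polynomial ℤ,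
      P.natDegree = d →
      Squarefree (P.map (Int.castRingHom ℚ)) →
      (∀ i : ℕ, |((P.coeff i : ℤ) : ℝ)| ≤ (N : ℝ) ^ C) →
      ∀ a b : ℤ, 1 ≤ a → ((a : ℝ) ≤ (N : ℝ) ^ C) → 1 ≤ b → ((b : ℝ) ≤ (N : ℝ) ^ C) →
        a ≠ b →
        (({xy : ℤ × ℤ | 1 ≤ xy.1 ∧ xy.1 ≤ (N : ℤ) ∧ 1 ≤ xy.2 ∧ xy.2 ≤ (N : ℤ) ∧
            a * P.eval xy.1 = b * P.eval xy.2}.ncard : ℝ)) ≤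
          C' * (N : ℝ) ^ ((1:ℝ)/3 + ε) := by
  classical
  obtain ⟨K1, hK1, hdet⟩ := det_method d hd C ε hC hε
  obtain ⟨K2, hK2, hquad⟩ := quad_case d hd C ε hC hε
  refine ⟨d * (K1 + K2), by positivity, ?_⟩
  intro N hN P hP hsq hc a b ha haN hb hbN hab
  set R : ℝ := (N : ℝ) ^ ((1:ℝ)/3 + ε) with hR
  have hR0 : 0 ≤ R := by positivity
  have hb0 : b ≠ 0 := by omega
  set Box : Finset (ℤ × ℤ) := ((Finset.Icc (1:ℤ) N) ×ˢ (Finset.Icc (1:ℤ) N)).filter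
    (fun q => a * P.eval q.1 = b * P.eval q.2) with hBox
  have hmem : ∀ q ∈ Box, 1 ≤ q.1 ∧ q.1 ≤ N ∧ 1 ≤ q.2 ∧ q.2 ≤ N ∧ a * P.eval q.1 = b * P.eval q.2 := by
    intro q hq
    rw [hBox, Finset.mem_filter, Finset.mem_product, Finset.mem_Icc, Finset.mem_Icc] at hq
    tauto
  have hset : {xy : ℤ × ℤ | 1 ≤ xy.1 ∧ xy.1 ≤ (N : ℤ) ∧ 1 ≤ xy.2 ∧ xy.2 ≤ (N : ℤ) ∧
            a * P.eval xy.1 = b * P.eval xy.2} = (Box : Set (ℤ × ℤ)) := by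
    ext q
    rw [Finset.mem_coe]
    constructor
    · intro h
      rw [hBox, Finset.mem_filter, Finset.mem_product, Finset.mem_Icc, Finset.mem_Icc]
      exact ⟨⟨⟨h.1, h.2.1⟩, h.2.2.1, h.2.2.2.1⟩, h.2.2.2.2⟩
    · intro h
      exact hmem q h
  rw [hset, Set.ncard_coe_finset]
  have hmain := assemble P d hd hP a b hb0 Box ((K1 + K2) * R) ?_ (FF P a b) dvd_rfl Box subset_rfl ?_
  · rw [FF_natDegree P d (by omega) hP a b hb0] at hmain
    linarith
  · intro G hG hGF S hSB hS
    have hpos : 0 ≤ (K1 + K2) * R := by positivity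
    obtain ⟨hG0, hGd, -⟩ := tdeg_factor P d (by omega) hP a b hb0 G hGF
    have hco := factor_coeff P d (by omega) hP a b hb0 G hGF
    have key : (S.card : ℝ) ≤ (K1 + K2) * R → 1 ≤ G.natDegree → (S.card : ℝ) ≤ G.natDegree * ((K1 + K2) * R) := by
      intro h1 h2
      exact h1.trans (le_mul_of_one_le_left hpos (by exact_mod_cast h2))
    rcases (by omega : G.natDegree = 0 ∨ G.natDegree = 1 ∨ G.natDegree = 2 ∨ 3 ≤ G.natDegree) with h | h | h | h
    · have : S = ∅ := by
        rw [Finset.eq_empty_iff_forall_notMem]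
        intro q hq
        exact deg_zero_no_points P d (by omega) hP a b hb0 G hGF h _ _ (hS q hq)
      rw [this, h]; simp
    · exact (no_linear P d hd hP hsq a b ha hb hab G hGF h).elim
    · refine key ?_ (by omega)
      have := hquad N hN P hP hc a b ha haN hb hbN G hG hGF h S (fun q hq => by
        obtain ⟨h1, h2, h3, h4, h5⟩ := hmem q (hSB hq)
        exact ⟨h1, h2, h3, h4, hS q hq⟩)
      have : 0 ≤ K1 * R := by positivity
      linarith
    · refine key ?_ (by omega)
      have := hdet N hN P hP hc a b ha hb hbN G hG h hGd (fun i => by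
        rw [natDegree_le_iff_coeff_eq_zero]
        intro j hj
        exact hco _ _ (by omega)) S (fun q hq => by
        obtain ⟨h1, h2, h3, h4, h5⟩ := hmem q (hSB hq)
        exact ⟨h1, h2, h3, h4, h5, hS q hq⟩)
      have : 0 ≤ K2 * R := by positivity
      linarith
  · intro q hq
    rw [FF_evalEval]
    have := (hmem q hq).2.2.2.2
    linarith
end

section
/- There exist constants δ > 0, c > 0 and N₀ such that for every integer N ≥ N₀, the number of positive integers n with N/(log N) ≤ n ≤ N such that n²+1 is squarefree and n²+1 has a prime factor p with p ≥ δ·n·log n is at least c·N. -/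
noncomputable def ppCh (n : ℕ) : ℝ := ((ZMod.χ₄ (n : ZMod 4) : ℤ) : ℝ)

theorem ppCh_eq (n : ℕ) : ppCh n = if n % 2 = 0 then 0 else if n % 4 = 1 then 1 else -1 := by
  unfold ppCh
  rw [ZMod.χ₄_nat_eq_if_mod_four]
  split_ifs <;> simp

theorem ppCh_mul (m n : ℕ) : ppCh (m * n) = ppCh m * ppCh n := by
  unfold ppCh
  push_cast
  rw [map_mul]
  push_cast
  rfl

theorem ppCh_sum (N : ℕ) : ∑ n ∈ Finset.Ioc 0 N, ppCh n =
    if N % 4 = 1 ∨ N % 4 = 2 then 1 else 0 := by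
  induction N with
  | zero => simp
  | succ k ih =>
    rw [Finset.sum_Ioc_succ_top (Nat.zero_le k), ih, ppCh_eq]
    have : k % 4 < 4 := Nat.mod_lt _ (by norm_num)
    split_ifs <;> first | omega | norm_num

theorem pp_alt (f : ℕ → ℝ) (M : ℕ) (hf0 : ∀ n, 0 ≤ f n)
    (hf : ∀ n, M < n → f (n + 1) ≤ f n) (k : ℕ) :
    |∑ n ∈ Finset.Ioc M (M + (k + 1)), ppCh n * f n -
      (∑ n ∈ Finset.Ioc M (M + (k + 1)), ppCh n) * f (M + (k + 1))| ≤
      f (M + 1) - f (M + (k + 1)) := by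
  induction k with
  | zero => simp
  | succ k ih =>
    have e : M + (k + 1 + 1) = (M + (k + 1)) + 1 := by ring
    rw [e, Finset.sum_Ioc_succ_top (by omega), Finset.sum_Ioc_succ_top (by omega)]
    have hD : |∑ n ∈ Finset.Ioc M (M + (k + 1)), ppCh n| ≤ 1 := by
      have h1 := ppCh_sum M
      have h2 := ppCh_sum (M + (k + 1))
      rw [← Finset.sum_Ioc_consecutive _ (Nat.zero_le M) (by omega : M ≤ M + (k+1)), h1] at h2
      rw [abs_le]
      split_ifs at h2 <;> constructor <;> linarith
    have hfk := hf (M + (k + 1)) (by omega)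
    set D := ∑ n ∈ Finset.Ioc M (M + (k + 1)), ppCh n
    set T := ∑ n ∈ Finset.Ioc M (M + (k + 1)), ppCh n * f n
    set a := f (M + (k + 1))
    set b := f (M + (k + 1) + 1)
    rw [abs_le] at *
    have h3 : D * (a - b) ≤ a - b := by nlinarith
    have h4 : -(a - b) ≤ D * (a - b) := by nlinarith
    constructor <;> nlinarith

theorem pp_alt' (f : ℕ → ℝ) (M : ℕ) (hf0 : ∀ n, 0 ≤ f n)
    (hf : ∀ n, M < n → f (n + 1) ≤ f n) (K : ℕ) (hK : M ≤ K) :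
    |∑ n ∈ Finset.Ioc M K, ppCh n * f n| ≤ f (M + 1) := by
  obtain ⟨k, rfl⟩ := Nat.exists_eq_add_of_le hK
  rcases k with _ | k
  · simpa using hf0 _
  · have h := pp_alt f M hf0 hf k
    have hD : |∑ n ∈ Finset.Ioc M (M + (k + 1)), ppCh n| ≤ 1 := by
      have h1 := ppCh_sum M
      have h2 := ppCh_sum (M + (k + 1))
      rw [← Finset.sum_Ioc_consecutive _ (Nat.zero_le M) (by omega : M ≤ M + (k+1)), h1] at h2
      rw [abs_le]
      split_ifs at h2 <;> constructor <;> linarith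
    have h0 := hf0 (M + (k + 1))
    rw [abs_le] at *
    constructor <;> nlinarith

noncomputable def ppA (N : ℕ) : ℝ := ∑ m ∈ Finset.Ioc 0 N, ppCh m * (1 / (m : ℝ))

theorem ppA_sub (M N : ℕ) (h : M ≤ N) : |ppA N - ppA M| ≤ 1 / ((M : ℝ) + 1) := by
  unfold ppA
  rw [← Finset.sum_Ioc_consecutive _ (Nat.zero_le M) h, add_sub_cancel_left]
  have := pp_alt' (fun m => 1 / (m : ℝ)) M (fun n => by positivity) (fun n hn => by
    have : (0:ℝ) < n := by exact_mod_cast (by omega : 0 < n)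
    push_cast
    exact one_div_le_one_div_of_le this (by linarith)) N h
  simpa using this

theorem ppA_ge (N : ℕ) (h : 1 ≤ N) : 1 / 2 ≤ ppA N := by
  have h1 := ppA_sub 1 N h
  have h2 : ppA 1 = 1 := by simp [ppA, ppCh_eq]
  rw [h2, abs_le] at h1
  norm_num at h1
  linarith [h1.1]

theorem pp_T (N : ℕ) : |∑ n ∈ Finset.Ioc 0 N, ppCh n * (Real.log n / n)| ≤ 1 := by
  by_cases h : N < 2
  · interval_cases N <;> simp
  push Not at h
  rw [← Finset.sum_Ioc_consecutive _ (Nat.zero_le 2) h]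
  have h0 : ∑ n ∈ Finset.Ioc 0 2, ppCh n * (Real.log n / n) = 0 := by
    rw [show Finset.Ioc 0 2 = {1, 2} by rfl]
    simp [ppCh_eq]
  rw [h0, zero_add]
  refine (pp_alt' (fun n => Real.log n / n) 2 (fun n => by positivity) ?_ N h).trans ?_
  · intro n hn
    have he := Real.exp_one_lt_d9
    have h3 : (3:ℝ) ≤ n := by exact_mod_cast hn
    apply Real.log_div_self_antitoneOn
    · simp; linarith
    · simp; linarith
    · simp
  · have := Real.log_le_sub_one_of_pos (x := 3) (by norm_num)
    norm_num
    linarith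

open ArithmeticFunction in
noncomputable def ppF : ArithmeticFunction ℝ := ⟨fun n => ppCh n * (Λ n / n), by simp⟩
open ArithmeticFunction in
noncomputable def ppG : ArithmeticFunction ℝ := ⟨fun n => ppCh n * (1 / n), by simp⟩

open ArithmeticFunction in
theorem ppFG (n : ℕ) : (ppF * ppG) n = ppCh n * (Real.log n / n) := by
  rw [ArithmeticFunction.mul_apply]
  have : ∀ x ∈ n.divisorsAntidiagonal, ppF x.1 * ppG x.2 = (ppCh n / n) * Λ x.1 := by
    intro x hx
    have := (Nat.mem_divisorsAntidiagonal.mp hx).1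
    rw [← this]
    simp only [ppF, ppG, ArithmeticFunction.coe_mk, ppCh_mul]
    push_cast
    rw [mul_comm (x.1 : ℝ), div_mul_eq_div_div]
    ring
  rw [Finset.sum_congr rfl this, ← Finset.mul_sum,
    Nat.sum_divisorsAntidiagonal (f := fun i _ => Λ i), vonMangoldt_sum]
  ring

open ArithmeticFunction in
theorem pp_psi (N : ℕ) : ∑ d ∈ Finset.Ioc 0 N, Λ d ≤ 6 * N := by
  have h := Chebyshev.psi_le_const_mul_self (x := (N : ℝ)) (by positivity)
  unfold Chebyshev.psi at h
  rw [Nat.floor_natCast] at h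
  have h4 : Real.log 4 ≤ 2 := by
    rw [show (4:ℝ) = 2 ^ 2 by norm_num, Real.log_pow]
    have := Real.log_two_lt_d9
    push_cast
    linarith
  have : (0:ℝ) ≤ N := by positivity
  nlinarith

theorem pp_div (N d : ℕ) (hN : 1 ≤ N) (hd : 1 ≤ d) :
    1 / (((N / d : ℕ) : ℝ) + 1) ≤ d / N := by
  have h1 : (0:ℝ) < N := by exact_mod_cast hN
  rw [div_le_div_iff₀ (by positivity) h1]
  have := Nat.lt_mul_div_succ N (by omega : 0 < d)
  have h2 : (N : ℝ) < d * ((N / d : ℕ) + 1) := by exact_mod_cast this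
  linarith

theorem pp_abs_ch (n : ℕ) : |ppCh n| ≤ 1 := by
  rw [ppCh_eq]; split_ifs <;> simp

open ArithmeticFunction in
theorem pp_chi (N : ℕ) (hN : 1 ≤ N) :
    |∑ d ∈ Finset.Ioc 0 N, ppCh d * (Λ d / d)| ≤ 14 := by
  have h := ArithmeticFunction.sum_Ioc_mul_eq_sum_sum ppF ppG N
  have h1 : (0:ℝ) < N := by exact_mod_cast hN
  simp only [ppFG] at h
  have hT := pp_T N
  rw [h] at hT
  have hE : |∑ n ∈ Finset.Ioc 0 N, ppF n * ∑ m ∈ Finset.Ioc 0 (N / n), ppG m -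
      (∑ d ∈ Finset.Ioc 0 N, ppCh d * (Λ d / d)) * ppA N| ≤ 6 := by
    rw [Finset.sum_mul, ← Finset.sum_sub_distrib]
    refine (Finset.abs_sum_le_sum_abs _ _).trans ?_
    have : ∀ d ∈ Finset.Ioc 0 N, |ppF d * ∑ m ∈ Finset.Ioc 0 (N / d), ppG m -
      ppCh d * (Λ d / d) * ppA N| ≤ Λ d * (1 / N) := by
      intro d hd
      have hd' := Finset.mem_Ioc.mp hd
      have e : ∑ m ∈ Finset.Ioc 0 (N / d), ppG m = ppA (N / d) := rfl
      have e2 : ppF d = ppCh d * (Λ d / d) := rfl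
      rw [e, e2, ← mul_sub, abs_mul, abs_mul]
      have a1 := pp_abs_ch d
      have a2 : |ppA (N / d) - ppA N| ≤ d / N := by
        rw [abs_sub_comm]
        exact (ppA_sub _ _ (Nat.div_le_self _ _)).trans (pp_div N d hN hd'.1)
      have hdp : (0:ℝ) < d := by exact_mod_cast hd'.1
      have a3 : 0 ≤ Λ d / d := div_nonneg vonMangoldt_nonneg hdp.le
      rw [abs_of_nonneg a3]
      calc |ppCh d| * (Λ d / d) * |ppA (N / d) - ppA N| ≤ 1 * (Λ d / d) * (d / N) := by gcongr
        _ = Λ d * (1 / N) := by field_simp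
    refine (Finset.sum_le_sum this).trans ?_
    rw [← Finset.sum_mul]
    have := pp_psi N
    rw [mul_one_div, div_le_iff₀ h1]
    exact this
  have hA := ppA_ge N hN
  set X := ∑ d ∈ Finset.Ioc 0 N, ppCh d * (Λ d / d)
  have h7 : |X * ppA N| ≤ 7 := by
    rw [abs_le] at *
    constructor <;> linarith
  rw [abs_mul, abs_of_nonneg (by linarith : 0 ≤ ppA N)] at h7
  nlinarith [abs_nonneg X]

open ArithmeticFunction in
theorem pp_mertens (N : ℕ) (hN : 1 ≤ N) :
    ∑ d ∈ Finset.Ioc 0 N, Λ d / d ≤ Real.log N + 6 := by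
  have h := ArithmeticFunction.sum_Ioc_mul_zeta_eq_sum Λ N
  have h1 : (0:ℝ) < N := by exact_mod_cast hN
  rw [vonMangoldt_mul_zeta] at h
  have hl : ∑ n ∈ Finset.Ioc 0 N, ArithmeticFunction.log n ≤ N * Real.log N := by
    have : ∀ n ∈ Finset.Ioc 0 N, ArithmeticFunction.log n ≤ Real.log N := by
      intro n hn
      have := Finset.mem_Ioc.mp hn
      rw [log_apply]
      exact Real.log_le_log (by exact_mod_cast this.1) (by exact_mod_cast this.2)
    have h9 := Finset.sum_le_card_nsmul _ _ _ this
    rw [nsmul_eq_mul, Nat.card_Ioc, Nat.sub_zero] at h9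
    exact h9
  have hg : N * ∑ d ∈ Finset.Ioc 0 N, Λ d / d - ∑ d ∈ Finset.Ioc 0 N, Λ d ≤
      ∑ n ∈ Finset.Ioc 0 N, Λ n * ((N / n : ℕ) : ℝ) := by
    rw [Finset.mul_sum, ← Finset.sum_sub_distrib]
    refine Finset.sum_le_sum fun d hd => ?_
    have hd' := Finset.mem_Ioc.mp hd
    have hdp : (0:ℝ) < d := by exact_mod_cast hd'.1
    have := Nat.lt_mul_div_succ N (by omega : 0 < d)
    have h2 : (N : ℝ) < d * ((N / d : ℕ) + 1) := by exact_mod_cast this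
    have h3 : (N : ℝ) / d ≤ (N / d : ℕ) + 1 := by
      rw [div_le_iff₀ hdp]; linarith
    have h4 : 0 ≤ Λ d := vonMangoldt_nonneg
    have : N * (Λ d / d) = Λ d * (N / d) := by ring
    rw [this]
    nlinarith
  have := pp_psi N
  have h5 : N * ∑ d ∈ Finset.Ioc 0 N, Λ d / d ≤ N * (Real.log N + 6) := by linarith
  exact le_of_mul_le_mul_left h5 h1

theorem pp_mertens_chi (N : ℕ) (hN : 1 ≤ N) :
    ∑ p ∈ (Finset.Ioc 0 N).filter Nat.Prime, (1 + ppCh p) * (Real.log p / p) ≤ Real.log N + 20 := by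
  have h1 := pp_mertens N hN
  have h2 := (abs_le.mp (pp_chi N hN)).2
  have h3 : ∑ p ∈ (Finset.Ioc 0 N).filter Nat.Prime, (1 + ppCh p) * (Real.log p / p) ≤
      ∑ d ∈ Finset.Ioc 0 N, (1 + ppCh d) * (ArithmeticFunction.vonMangoldt d / d) := by
    rw [Finset.sum_congr rfl (g := fun d : ℕ => (1 + ppCh d) * (ArithmeticFunction.vonMangoldt d / d))]
    · apply Finset.sum_le_sum_of_subset_of_nonneg (Finset.filter_subset _ _)
      intro d _ _
      have := (abs_le.mp (pp_abs_ch d)).1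
      have h4 : 0 ≤ ArithmeticFunction.vonMangoldt d := ArithmeticFunction.vonMangoldt_nonneg
      have : 0 ≤ 1 + ppCh d := by linarith
      positivity
    · intro p hp
      rw [ArithmeticFunction.vonMangoldt_apply_prime (Finset.mem_filter.mp hp).2]
  have h4 : ∑ d ∈ Finset.Ioc 0 N, (1 + ppCh d) * (ArithmeticFunction.vonMangoldt d / d) =
    ∑ d ∈ Finset.Ioc 0 N, (ArithmeticFunction.vonMangoldt d / d) +
    ∑ d ∈ Finset.Ioc 0 N, ppCh d * (ArithmeticFunction.vonMangoldt d / d) := by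
    rw [← Finset.sum_add_distrib]
    exact Finset.sum_congr rfl fun _ _ => by ring
  linarith

theorem pp_modcard (N q v : ℕ) (hq : 0 < q) :
    (((Finset.Ioc 0 N).filter (fun n => n ≡ v [MOD q])).card : ℝ) ≤ N / q + 1 := by
  have h := Nat.Ioc_filter_modEq_card 0 N hq v
  have hq' : (0:ℚ) < q := by exact_mod_cast hq
  have h2 : (((Finset.Ioc 0 N).filter (fun n => n ≡ v [MOD q])).card : ℚ) ≤ N / q + 1 := by
    have h3 : (((Finset.Ioc 0 N).filter (fun n => n ≡ v [MOD q])).card : ℚ) =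
      ((max (⌊((N:ℚ) - v) / (q : ℚ)⌋ - ⌊(((0:ℕ):ℚ) - v) / (q : ℚ)⌋) 0 : ℤ) : ℚ) := by
      rw [← h]; simp
    rw [h3]
    push_cast
    apply max_le
    · have a := Int.floor_le (((N:ℚ) - v) / (q : ℚ))
      have b := Int.lt_floor_add_one ((0 - (v:ℚ)) / (q : ℚ))
      have c : ((N:ℚ) - v) / q - (0 - v) / q = N / q := by ring
      linarith
    · positivity
  have h5 : (((((Finset.Ioc 0 N).filter (fun n => n ≡ v [MOD q])).card : ℚ)) : ℝ) ≤
      ((N / q + 1 : ℚ) : ℝ) := Rat.cast_le.mpr h2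
  push_cast at h5
  exact h5

/-- roots of `n^2+1` mod `p^k`. -/
theorem pp_roots (p k a n : ℕ) (hp : p.Prime) (hp2 : p ≠ 2) (hk : k ≠ 0)
    (ha : p ^ k ∣ a ^ 2 + 1) (hn : p ^ k ∣ n ^ 2 + 1) :
    p ^ k ∣ n + a ∨ n ≡ a [MOD p ^ k] := by
  have hpi : Prime (p : ℤ) := Nat.prime_iff_prime_int.mp hp
  have h1 : ((p : ℤ) ^ k) ∣ ((n : ℤ) + a) * ((n : ℤ) - a) := by
    have h1 : ((p : ℤ) ^ k) ∣ ((n : ℤ) ^ 2 + 1) := by exact_mod_cast hn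
    have h2 : ((p : ℤ) ^ k) ∣ ((a : ℤ) ^ 2 + 1) := by exact_mod_cast ha
    have := dvd_sub h1 h2
    have e : ((n : ℤ) + a) * ((n : ℤ) - a) = (n : ℤ) ^ 2 + 1 - ((a : ℤ) ^ 2 + 1) := by ring
    rwa [e]
  have key : ¬ ((p : ℤ) ∣ (n : ℤ) + a ∧ (p : ℤ) ∣ (n : ℤ) - a) := by
    rintro ⟨h3, h4⟩
    have h5 : (p : ℤ) ∣ 2 * n := by
      have := dvd_add h3 h4
      have e : (n : ℤ) + a + (n - a) = 2 * n := by ring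
      rwa [e] at this
    have h6 : p ∣ 2 * n := by exact_mod_cast h5
    rcases (Nat.Prime.dvd_mul hp).mp h6 with h | h
    · exact hp2 ((Nat.prime_dvd_prime_iff_eq hp Nat.prime_two).mp h)
    · have h7 : p ∣ n ^ 2 + 1 := (dvd_pow_self p hk).trans hn
      have h8 : p ∣ n ^ 2 := h.trans (dvd_pow_self n two_ne_zero)
      have := (Nat.dvd_add_right h8).mp h7
      exact hp.one_lt.ne' (Nat.dvd_one.mp this)
  by_cases h3 : (p : ℤ) ∣ (n : ℤ) + a
  · left
    have h4 : ¬ (p : ℤ) ∣ (n : ℤ) - a := fun h => key ⟨h3, h⟩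
    have hc : IsCoprime ((p : ℤ) ^ k) ((n : ℤ) - a) :=
      ((Prime.coprime_iff_not_dvd hpi).mpr h4).pow_left
    have := hc.dvd_of_dvd_mul_right h1
    exact_mod_cast this
  · right
    have hc : IsCoprime ((p : ℤ) ^ k) ((n : ℤ) + a) :=
      ((Prime.coprime_iff_not_dvd hpi).mpr h3).pow_left
    have := hc.dvd_of_dvd_mul_left h1
    have h5 : (a : ℤ) ≡ n [ZMOD ((p ^ k : ℕ) : ℤ)] := by
      rw [Int.modEq_iff_dvd]
      push_cast
      exact this
    exact ((Int.natCast_modEq_iff).mp h5).symm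

theorem pp_count_two (N p k : ℕ) (hp : p.Prime) (hp2 : p ≠ 2) (hk : k ≠ 0) :
    (((Finset.Ioc 0 N).filter (fun n => p ^ k ∣ n ^ 2 + 1)).card : ℝ) ≤
      2 * (N / (p ^ k : ℕ) + 1) := by
  have hq : 0 < p ^ k := pow_pos hp.pos k
  by_cases hE : ∃ a, p ^ k ∣ a ^ 2 + 1
  · obtain ⟨a, ha⟩ := hE
    have hsub : (Finset.Ioc 0 N).filter (fun n => p ^ k ∣ n ^ 2 + 1) ⊆
        (Finset.Ioc 0 N).filter (fun n => n ≡ (p ^ k - 1) * a [MOD p ^ k]) ∪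
        (Finset.Ioc 0 N).filter (fun n => n ≡ a [MOD p ^ k]) := by
      intro n hn
      rw [Finset.mem_filter] at hn
      rw [Finset.mem_union, Finset.mem_filter, Finset.mem_filter]
      rcases pp_roots p k a n hp hp2 hk ha hn.2 with h | h
      · left
        refine ⟨hn.1, ?_⟩
        have h1 : n + a ≡ (p ^ k - 1) * a + a [MOD p ^ k] := by
          have e : (p ^ k - 1) * a + a = p ^ k * a := by
            obtain ⟨m, hm⟩ := Nat.exists_eq_add_of_le' hq
            rw [hm]; simp; ring
          rw [e]
          exact (Nat.modEq_zero_iff_dvd.mpr h).trans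
            (Nat.modEq_zero_iff_dvd.mpr (dvd_mul_right _ _)).symm
        exact Nat.ModEq.add_right_cancel' a h1
      · exact Or.inr ⟨hn.1, h⟩
    have h1 := (Finset.card_le_card hsub).trans (Finset.card_union_le _ _)
    have h2 := pp_modcard N (p ^ k) ((p ^ k - 1) * a) hq
    have h3 := pp_modcard N (p ^ k) a hq
    have h1' : (((Finset.Ioc 0 N).filter (fun n => p ^ k ∣ n ^ 2 + 1)).card : ℝ) ≤
        (((Finset.Ioc 0 N).filter (fun n => n ≡ (p ^ k - 1) * a [MOD p ^ k])).card : ℝ) +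
        (((Finset.Ioc 0 N).filter (fun n => n ≡ a [MOD p ^ k])).card : ℝ) := by
      exact_mod_cast h1
    linarith
  · push Not at hE
    rw [Finset.filter_false_of_mem (fun n _ => hE n)]
    simp
    positivity

theorem pp_not_three (p n : ℕ) (hp : p.Prime) (h : p ∣ n ^ 2 + 1) : p % 4 ≠ 3 := by
  have := Fact.mk hp
  apply ZMod.exists_sq_eq_neg_one_iff.mp
  refine ⟨(n : ZMod p), ?_⟩
  have : ((n ^ 2 + 1 : ℕ) : ZMod p) = 0 := (ZMod.natCast_eq_zero_iff _ _).mpr h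
  push_cast at this
  linear_combination -this

theorem pp_count_one (N p : ℕ) (hp : p.Prime) :
    (((Finset.Ioc 0 N).filter (fun n => p ∣ n ^ 2 + 1)).card : ℝ) ≤
      (1 + ppCh p) * (N / p + 1) := by
  rcases hp.eq_two_or_odd with rfl | hodd
  · have h := pp_modcard N 2 1 (by norm_num)
    have e : ppCh 2 = 0 := by simp [ppCh_eq]
    rw [e, add_zero, one_mul]
    refine le_trans ?_ h
    gcongr with n hn
    intro h
    rcases Nat.even_or_odd n with h2 | h2
    · exfalso
      have : Even (n ^ 2) := h2.pow_of_ne_zero (by norm_num)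
      obtain ⟨r, hr⟩ := this
      omega
    · exact Nat.odd_iff.mp h2
  · have hp2 : p ≠ 2 := by rintro rfl; simp at hodd
    by_cases h4 : p % 4 = 3
    · rw [Finset.filter_false_of_mem (fun n _ h => pp_not_three p n hp h h4)]
      have : ppCh p = -1 := by rw [ppCh_eq]; rw [if_neg (by omega), if_neg (by omega)]
      rw [this]; simp
    · have : ppCh p = 1 := by rw [ppCh_eq]; rw [if_neg (by omega), if_pos (by omega)]
      rw [this]
      have := pp_count_two N p 1 hp hp2 one_ne_zero
      simp only [pow_one] at this
      linarith

theorem pp_sqsum (K : ℕ) : ∑ k ∈ Finset.Ioc 0 K, 1 / ((4 * (k : ℝ) + 1) ^ 2) ≤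
    1 / 12 - 1 / (4 * (4 * (K : ℝ) + 3)) := by
  induction K with
  | zero => norm_num
  | succ k ih =>
    rw [Finset.sum_Ioc_succ_top (Nat.zero_le k)]
    have h0 : (0:ℝ) ≤ k := by positivity
    have : 1 / ((4 * ((k + 1 : ℕ) : ℝ) + 1) ^ 2) ≤
      1 / (4 * (4 * (k : ℝ) + 3)) - 1 / (4 * (4 * ((k + 1 : ℕ) : ℝ) + 3)) := by
      push_cast
      rw [div_sub_div _ _ (by positivity) (by positivity), div_le_div_iff₀ (by positivity) (by positivity)]
      nlinarith
    linarith

theorem pp_nonsf (N : ℕ) :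
    (((Finset.Ioc 0 N).filter (fun n => ¬ Squarefree (n ^ 2 + 1))).card : ℝ) ≤
      N / 6 + 2 * Nat.primeCounting N := by
  set P := (Finset.Ioc 0 N).filter (fun p => p.Prime ∧ p % 4 = 1) with hP
  have hsub : (Finset.Ioc 0 N).filter (fun n => ¬ Squarefree (n ^ 2 + 1)) ⊆
      P.biUnion (fun p => (Finset.Ioc 0 N).filter (fun n => p ^ 2 ∣ n ^ 2 + 1)) := by
    intro n hn
    rw [Finset.mem_filter, Nat.squarefree_iff_prime_squarefree] at hn
    obtain ⟨hn, h⟩ := hn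
    push Not at h
    obtain ⟨p, hp, hd⟩ := h
    rw [← pow_two] at hd
    have hn' := Finset.mem_Ioc.mp hn
    have hpn : p ≤ n := by
      by_contra hlt
      push Not at hlt
      have h1 := Nat.le_of_dvd (by positivity) hd
      have h2 : (n + 1) ^ 2 ≤ p ^ 2 := Nat.pow_le_pow_left hlt 2
      nlinarith
    have h3 := pp_not_three p n hp ((dvd_pow_self p two_ne_zero).trans hd)
    have hp2 : p ≠ 2 := by
      rintro rfl
      have h5 : n % 4 < 4 := Nat.mod_lt _ (by norm_num)
      have h6 : (n ^ 2 + 1) % 4 = 0 := Nat.mod_eq_zero_of_dvd hd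
      rw [Nat.add_mod, Nat.pow_mod] at h6
      interval_cases n % 4 <;> simp at h6
    have hodd := hp.eq_two_or_odd.resolve_left hp2
    rw [Finset.mem_biUnion]
    refine ⟨p, ?_, ?_⟩
    · rw [hP, Finset.mem_filter, Finset.mem_Ioc]
      exact ⟨⟨hp.pos, by omega⟩, hp, by omega⟩
    · rw [Finset.mem_filter]; exact ⟨hn, hd⟩
  have h1 := (Finset.card_le_card hsub).trans Finset.card_biUnion_le
  have h1' : (((Finset.Ioc 0 N).filter (fun n => ¬ Squarefree (n ^ 2 + 1))).card : ℝ) ≤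
      ∑ p ∈ P, (((Finset.Ioc 0 N).filter (fun n => p ^ 2 ∣ n ^ 2 + 1)).card : ℝ) := by
    exact_mod_cast h1
  have h2 : ∑ p ∈ P, (((Finset.Ioc 0 N).filter (fun n => p ^ 2 ∣ n ^ 2 + 1)).card : ℝ) ≤
      ∑ p ∈ P, (2 * N * (1 / (p : ℝ) ^ 2) + 2) := by
    refine Finset.sum_le_sum fun p hp => ?_
    rw [hP, Finset.mem_filter] at hp
    have := pp_count_two N p 2 hp.2.1 (by rintro rfl; simp at hp) two_ne_zero
    push_cast at this
    refine this.trans (le_of_eq ?_)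
    ring
  have h3 : ∑ p ∈ P, 1 / (p : ℝ) ^ 2 ≤ 1 / 12 := by
    have hs : P ⊆ (Finset.Ioc 0 N).image (fun k : ℕ => (4 * k + 1 : ℕ)) := by
      intro p hp
      rw [hP, Finset.mem_filter, Finset.mem_Ioc] at hp
      have := hp.2.1.two_le
      rw [Finset.mem_image]
      exact ⟨p / 4, by rw [Finset.mem_Ioc]; omega, by omega⟩
    calc ∑ p ∈ P, 1 / (p : ℝ) ^ 2
        ≤ ∑ p ∈ (Finset.Ioc 0 N).image (fun k : ℕ => (4 * k + 1 : ℕ)), 1 / (p : ℝ) ^ 2 :=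
          Finset.sum_le_sum_of_subset_of_nonneg hs (fun _ _ _ => by positivity)
      _ = ∑ k ∈ Finset.Ioc 0 N, 1 / ((4 * (k : ℝ) + 1) ^ 2) := by
          rw [Finset.sum_image (by intro a _ b _ h; simp only at h; omega)]
          push_cast; rfl
      _ ≤ _ := pp_sqsum N
      _ ≤ 1 / 12 := by
        have : (0:ℝ) ≤ 1 / (4 * (4 * (N : ℝ) + 3)) := by positivity
        linarith
  have h4 : (P.card : ℝ) ≤ Nat.primeCounting N := by
    rw [← Nat.primesLE_card_eq_primeCounting]
    have : P ⊆ Nat.primesLE N := by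
      intro p hp
      rw [hP, Finset.mem_filter, Finset.mem_Ioc] at hp
      rw [Nat.mem_primesLE]
      exact ⟨hp.1.2, hp.2.1⟩
    exact_mod_cast Finset.card_le_card this
  rw [Finset.sum_add_distrib, ← Finset.mul_sum, Finset.sum_const, nsmul_eq_mul] at h2
  have : (0:ℝ) ≤ N := by positivity
  nlinarith

theorem pp_log4 : Real.log 4 ≤ 2 := by
  rw [show (4:ℝ) = 2 ^ 2 by norm_num, Real.log_pow]
  have := Real.log_two_lt_d9
  push_cast
  linarith

theorem pp_small (N : ℕ) (hN : 1 ≤ N) :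
    ∑ n ∈ Finset.Ioc 0 N, ∑ p ∈ ((Finset.Ioc 0 N).filter Nat.Prime).filter (fun p => p ∣ n ^ 2 + 1),
      Real.log p ≤ N * (Real.log N + 24) := by
  have e : ∑ n ∈ Finset.Ioc 0 N,
      ∑ p ∈ ((Finset.Ioc 0 N).filter Nat.Prime).filter (fun p => p ∣ n ^ 2 + 1), Real.log p =
      ∑ p ∈ (Finset.Ioc 0 N).filter Nat.Prime,
        (((Finset.Ioc 0 N).filter (fun n => p ∣ n ^ 2 + 1)).card : ℝ) * Real.log p := by
    simp_rw [Finset.sum_filter (fun p => p ∣ _ ^ 2 + 1)]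
    rw [Finset.sum_comm]
    refine Finset.sum_congr rfl fun p _ => ?_
    rw [← Finset.sum_filter, Finset.sum_const, nsmul_eq_mul]
  rw [e]
  have h1 : ∀ p ∈ (Finset.Ioc 0 N).filter Nat.Prime,
      (((Finset.Ioc 0 N).filter (fun n => p ∣ n ^ 2 + 1)).card : ℝ) * Real.log p ≤
      N * ((1 + ppCh p) * (Real.log p / p)) + 2 * Real.log p := by
    intro p hp
    have hpp := (Finset.mem_filter.mp hp).2
    have a := pp_count_one N p hpp
    have b : 0 ≤ Real.log p := Real.log_natCast_nonneg p
    have c := (abs_le.mp (pp_abs_ch p)).2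
    calc _ ≤ (1 + ppCh p) * (N / p + 1) * Real.log p := by gcongr
      _ = N * ((1 + ppCh p) * (Real.log p / p)) + (1 + ppCh p) * Real.log p := by ring
      _ ≤ _ := by gcongr; linarith
  refine (Finset.sum_le_sum h1).trans ?_
  rw [Finset.sum_add_distrib, ← Finset.mul_sum, ← Finset.mul_sum]
  have h2 := pp_mertens_chi N hN
  have h3 : ∑ p ∈ (Finset.Ioc 0 N).filter Nat.Prime, Real.log p ≤ Real.log 4 * N := by
    have := Chebyshev.theta_le_log4_mul_x (x := (N : ℝ)) (by positivity)
    unfold Chebyshev.theta at this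
    rw [Nat.floor_natCast] at this
    exact this
  have h4 := pp_log4
  have h5 : (0:ℝ) ≤ N := by positivity
  nlinarith

open Classical in
theorem pp_log_sf (N n : ℕ) (h : Squarefree (n ^ 2 + 1)) :
    Real.log ((n ^ 2 + 1 : ℕ) : ℝ) ≤
     ∑ p ∈ ((Finset.Ioc 0 N).filter Nat.Prime).filter (fun p => p ∣ n ^ 2 + 1), Real.log p +
     if (∃ p, p.Prime ∧ p ∣ n ^ 2 + 1 ∧ N < p) then Real.log ((n ^ 2 + 1 : ℕ) : ℝ) else 0 := by
  have h0 : 0 ≤ ∑ p ∈ ((Finset.Ioc 0 N).filter Nat.Prime).filter (fun p => p ∣ n ^ 2 + 1),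
      Real.log p := Finset.sum_nonneg fun p _ => Real.log_natCast_nonneg p
  split_ifs with hE
  · linarith
  · rw [add_zero]
    push Not at hE
    have h1 := Nat.prod_primeFactors_of_squarefree h
    have h2 : Real.log ((n ^ 2 + 1 : ℕ) : ℝ) = ∑ p ∈ (n ^ 2 + 1).primeFactors, Real.log ((p : ℕ) : ℝ) := by
      rw [← Real.log_prod]
      · rw [← Nat.cast_prod, h1]
      · intro p hp
        have := (Nat.prime_of_mem_primeFactors hp).pos
        positivity
    rw [h2]
    apply Finset.sum_le_sum_of_subset_of_nonneg
    · intro p hp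
      rw [Nat.mem_primeFactors] at hp
      simp only [Finset.mem_filter, Finset.mem_Ioc]
      exact ⟨⟨⟨hp.1.pos, hE p hp.1 hp.2.1⟩, hp.1⟩, hp.2.1⟩
    · intro p _ _
      exact Real.log_natCast_nonneg p


open Classical in
theorem pp_good (N : ℕ) (S : Finset ℕ) (hN : 2 ≤ N) (hS : S ⊆ Finset.Ioc 0 N)
    (hsf : ∀ n ∈ S, Squarefree (n ^ 2 + 1)) (hL : 1000 ≤ Real.log N)
    (hLL : Real.log (Real.log N) ≤ Real.log N / 10)
    (hbig : ∀ n ∈ S, (N : ℝ) / Real.log N ≤ n) (hc : 3 / 4 * (N : ℝ) ≤ S.card) :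
    (N : ℝ) / 12 ≤ (S.filter (fun n => ∃ p, p.Prime ∧ p ∣ n ^ 2 + 1 ∧ N < p)).card := by
  classical
  have hNp : (0:ℝ) < N := by exact_mod_cast (by omega : 0 < N)
  set L := Real.log N with hLdef
  have hlow : ∀ n ∈ S, 9 / 5 * L ≤ Real.log ((n ^ 2 + 1 : ℕ) : ℝ) := by
    intro n hn
    have h1 := hbig n hn
    have h2 : (0:ℝ) < N / L := by positivity
    have h3 : Real.log (N / L) ≤ Real.log n := Real.log_le_log h2 h1
    rw [Real.log_div hNp.ne' (by linarith)] at h3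
    have h4 : Real.log ((n : ℝ) ^ 2) ≤ Real.log ((n ^ 2 + 1 : ℕ) : ℝ) := by
      apply Real.log_le_log
      · have : (0:ℝ) < n := by linarith
        positivity
      · push_cast; linarith
    rw [Real.log_pow] at h4
    push_cast at h4 ⊢
    linarith
  have hup : ∀ n ∈ S, Real.log ((n ^ 2 + 1 : ℕ) : ℝ) ≤ 3 * L := by
    intro n hn
    have hn' := Finset.mem_Ioc.mp (hS hn)
    have h3 : n ^ 2 + 1 ≤ N ^ 3 := by
      have : n ^ 2 ≤ N ^ 2 := Nat.pow_le_pow_left hn'.2 2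
      nlinarith
    have : Real.log ((n ^ 2 + 1 : ℕ) : ℝ) ≤ Real.log ((N ^ 3 : ℕ) : ℝ) :=
      Real.log_le_log (by positivity) (by exact_mod_cast h3)
    push_cast at this ⊢
    rw [Real.log_pow] at this
    simpa using this
  have h1 : (S.card : ℝ) * (9 / 5 * L) ≤ ∑ n ∈ S, Real.log ((n ^ 2 + 1 : ℕ) : ℝ) := by
    have := Finset.card_nsmul_le_sum _ _ _ hlow
    rwa [nsmul_eq_mul] at this
  have h2 := Finset.sum_le_sum fun n hn => pp_log_sf N n (hsf n hn)
  rw [Finset.sum_add_distrib] at h2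
  have h3 : ∑ n ∈ S, ∑ p ∈ ((Finset.Ioc 0 N).filter Nat.Prime).filter (fun p => p ∣ n ^ 2 + 1),
      Real.log p ≤ N * (L + 24) := by
    refine le_trans ?_ (pp_small N (by omega))
    apply Finset.sum_le_sum_of_subset_of_nonneg hS
    intro n _ _
    exact Finset.sum_nonneg fun p _ => Real.log_natCast_nonneg p
  have h4 : ∑ n ∈ S, (if (∃ p, p.Prime ∧ p ∣ n ^ 2 + 1 ∧ N < p) then
      Real.log ((n ^ 2 + 1 : ℕ) : ℝ) else 0) ≤
      (S.filter (fun n => ∃ p, p.Prime ∧ p ∣ n ^ 2 + 1 ∧ N < p)).card * (3 * L) := by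
    rw [← Finset.sum_filter]
    have := Finset.sum_le_card_nsmul (S.filter (fun n => ∃ p, p.Prime ∧ p ∣ n ^ 2 + 1 ∧ N < p))
      (fun n => Real.log ((n ^ 2 + 1 : ℕ) : ℝ)) (3 * L)
      (fun n hn => hup n (Finset.mem_filter.mp hn).1)
    rwa [nsmul_eq_mul] at this
  set G : ℝ := ((S.filter (fun n => ∃ p, p.Prime ∧ p ∣ n ^ 2 + 1 ∧ N < p)).card : ℝ)
  have hLp : 0 < L := by linarith
  have h5 : (3 / 4 * (N : ℝ)) * (9 / 5 * L) ≤ N * (L + 24) + G * (3 * L) := by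
    have : (3 / 4 * (N : ℝ)) * (9 / 5 * L) ≤ S.card * (9 / 5 * L) := by gcongr
    linarith
  have h6 : (N : ℝ) * 24 ≤ N * (L / 40) := by gcongr; linarith
  have h7 : (N : ℝ) / 12 * L ≤ G * L := by nlinarith
  exact le_of_mul_le_mul_right h7 hLp

open Classical in
theorem pp_bad (N M : ℕ) :
    (((Finset.Ioc 0 N).filter (fun n => ∃ p, p.Prime ∧ p ∣ n ^ 2 + 1 ∧ N < p ∧ p ≤ M)).card : ℝ) ≤
      4 * Nat.primeCounting M := by
  classical
  have hsub : (Finset.Ioc 0 N).filter (fun n => ∃ p, p.Prime ∧ p ∣ n ^ 2 + 1 ∧ N < p ∧ p ≤ M) ⊆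
      ((Nat.primesLE M).filter (fun p => N < p)).biUnion
        (fun p => (Finset.Ioc 0 N).filter (fun n => p ∣ n ^ 2 + 1)) := by
    intro n hn
    rw [Finset.mem_filter] at hn
    obtain ⟨hn, p, hp, hd, h1, h2⟩ := hn
    rw [Finset.mem_biUnion]
    refine ⟨p, ?_, ?_⟩
    · rw [Finset.mem_filter, Nat.mem_primesLE]; exact ⟨⟨h2, hp⟩, h1⟩
    · rw [Finset.mem_filter]; exact ⟨hn, hd⟩
  have h1 : ∀ p ∈ (Nat.primesLE M).filter (fun p => N < p),
      ((Finset.Ioc 0 N).filter (fun n => p ∣ n ^ 2 + 1)).card ≤ 4 := by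
    intro p hp
    rw [Finset.mem_filter, Nat.mem_primesLE] at hp
    have a := pp_count_one N p hp.1.2
    have c := abs_le.mp (pp_abs_ch p)
    have hpp : (0:ℝ) < p := by exact_mod_cast hp.1.2.pos
    have d : (N : ℝ) / p ≤ 1 := by
      rw [div_le_one hpp]
      exact_mod_cast hp.2.le
    have : (1 + ppCh p) * ((N : ℝ) / p + 1) ≤ 2 * 2 := by
      apply mul_le_mul <;> first | positivity | linarith
    have : (((Finset.Ioc 0 N).filter (fun n => p ∣ n ^ 2 + 1)).card : ℝ) ≤ 4 := by linarith
    exact_mod_cast this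
  have h2 := (Finset.card_le_card hsub).trans (Finset.card_biUnion_le_card_mul _ _ _ h1)
  have h3 : ((Nat.primesLE M).filter (fun p => N < p)).card ≤ Nat.primeCounting M := by
    rw [← Nat.primesLE_card_eq_primeCounting]
    exact Finset.card_filter_le _ _
  have h4 := h2.trans (Nat.mul_le_mul_right 4 h3)
  rw [mul_comm] at h4
  exact_mod_cast h4

/-- A positive proportion of `n ∈ [N/log N, N]` are such that `n²+1` is squarefree and
`n²+1` has a prime factor `p ≥ δ n log n`. -/
theorem positive_proportion_large_prime_factor
    : ∃ δ : ℝ, 0 < δ ∧ ∃ c : ℝ, 0 < c ∧ ∃ N₀ : ℕ, ∀ N : ℕ, N₀ ≤ N →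
      c * (N : ℝ) ≤
        ({n : ℕ | (N : ℝ) / Real.log N ≤ (n : ℝ) ∧ n ≤ N ∧ Squarefree (n^2 + 1) ∧
          ∃ p : ℕ, p.Prime ∧ p ∣ (n^2 + 1) ∧ δ * n * Real.log n ≤ (p : ℝ)}.ncard : ℝ) := by
  classical
  refine ⟨1 / 288, by norm_num, 1 / 24, by norm_num, ?_⟩
  have hpi : ∀ᶠ x : ℝ in Filter.atTop,
      (Nat.primeCounting ⌊x⌋₊ : ℝ) ≤ (Real.log 4 + 1) * x / Real.log x :=
    Chebyshev.eventually_primeCounting_le one_pos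
  obtain ⟨x₀, hx₀⟩ := Filter.eventually_atTop.mp hpi
  have hll : ∀ᶠ x : ℝ in Filter.atTop, Real.log (Real.log x) ≤ Real.log x / 10 := by
    have h1 := (Real.isLittleO_log_id_atTop.bound (by norm_num : (0:ℝ) < 1 / 10))
    have h2 := Real.tendsto_log_atTop.eventually h1
    have h3 := Real.tendsto_log_atTop.eventually (Filter.eventually_ge_atTop (0:ℝ))
    filter_upwards [h2, h3] with x hx hx3
    simp only [id, Real.norm_eq_abs] at hx
    rw [abs_of_nonneg hx3] at hx
    linarith [le_abs_self (Real.log (Real.log x))]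
  have hL : ∀ᶠ x : ℝ in Filter.atTop, 1000 ≤ Real.log x :=
    Real.tendsto_log_atTop.eventually (Filter.eventually_ge_atTop _)
  have hall := tendsto_natCast_atTop_atTop (R := ℝ) |>.eventually
    ((hll.and hL).and ((Filter.eventually_ge_atTop x₀).and (Filter.eventually_ge_atTop 1000)))
  obtain ⟨N₀, hN₀⟩ := Filter.eventually_atTop.mp hall
  refine ⟨N₀, fun N hN => ?_⟩
  obtain ⟨⟨hLL, hL⟩, hNx, hNK⟩ := hN₀ N hN
  have hNp : (0:ℝ) < N := by linarith
  have hN2 : 2 ≤ N := by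
    have : 1000 ≤ N := by exact_mod_cast hNK
    omega
  have hl4 := pp_log4
  have hpi3 : ∀ x : ℝ, (N : ℝ) ≤ x → (Nat.primeCounting ⌊x⌋₊ : ℝ) ≤ 3 * x / Real.log N := by
    intro x hx
    refine (hx₀ x (hNx.trans hx)).trans ?_
    have : Real.log N ≤ Real.log x := Real.log_le_log hNp hx
    have : (0:ℝ) ≤ x := by linarith
    gcongr
    linarith
  set L := Real.log N with hLdef
  have hLp : 0 < L := by linarith
  -- the set S
  set S : Finset ℕ := (Finset.Ioc 0 N).filter (fun n : ℕ => Squarefree (n ^ 2 + 1) ∧ (N : ℝ) / L ≤ n) with hS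
  have hScard : 3 / 4 * (N : ℝ) ≤ S.card := by
    have hcov : Finset.Ioc 0 N ⊆ (S ∪ (Finset.Ioc 0 N).filter (fun n => ¬ Squarefree (n ^ 2 + 1))) ∪
        Finset.Ioc 0 ⌊(N : ℝ) / L⌋₊ := by
      intro n hn
      simp only [hS, Finset.mem_union, Finset.mem_filter, hn, true_and]
      by_cases h1 : Squarefree (n ^ 2 + 1)
      · by_cases h2 : (N : ℝ) / L ≤ n
        · exact Or.inl (Or.inl ⟨h1, h2⟩)
        · right
          rw [Finset.mem_Ioc]
          exact ⟨(Finset.mem_Ioc.mp hn).1, Nat.le_floor (not_le.mp h2).le⟩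
      · exact Or.inl (Or.inr h1)
    have h1 := ((Finset.card_le_card hcov).trans (Finset.card_union_le _ _)).trans
      (Nat.add_le_add_right (Finset.card_union_le _ _) _)
    rw [Nat.card_Ioc, Nat.card_Ioc, Nat.sub_zero, Nat.sub_zero] at h1
    have h1' : (N : ℝ) ≤ S.card +
      ((Finset.Ioc 0 N).filter (fun n => ¬ Squarefree (n ^ 2 + 1))).card + (⌊(N : ℝ) / L⌋₊ : ℝ) := by
      exact_mod_cast h1
    have h2 := pp_nonsf N
    have h3 : (⌊(N : ℝ) / L⌋₊ : ℝ) ≤ N / L := Nat.floor_le (by positivity)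
    have h4 := hpi3 N le_rfl
    rw [Nat.floor_natCast] at h4
    have h5 : (N : ℝ) / L ≤ N / 1000 := by gcongr
    have h6 : 3 * (N : ℝ) / L = 3 * (N / L) := by ring
    linarith
  have hgood := pp_good N S hN2 (Finset.filter_subset _ _)
    (fun n hn => (Finset.mem_filter.mp hn).2.1) hL hLL
    (fun n hn => (Finset.mem_filter.mp hn).2.2) hScard
  set Y : ℝ := 1 / 288 * N * L with hY
  have hYN : (N : ℝ) ≤ Y := by rw [hY]; nlinarith
  have hbad := pp_bad N ⌊Y⌋₊
  have hpiY := hpi3 Y hYN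
  have hYe : 3 * Y / L = N / 96 := by rw [hY]; field_simp; norm_num
  rw [hYe] at hpiY
  set T := {n : ℕ | (N : ℝ) / L ≤ (n : ℝ) ∧ n ≤ N ∧ Squarefree (n^2 + 1) ∧
          ∃ p : ℕ, p.Prime ∧ p ∣ (n^2 + 1) ∧ 1 / 288 * n * Real.log n ≤ (p : ℝ)} with hT
  have hTf : T.Finite := (Set.finite_Iic N).subset fun n hn => hn.2.1
  have hsub : S.filter (fun n => ∃ p, p.Prime ∧ p ∣ n ^ 2 + 1 ∧ N < p) ⊆
      hTf.toFinset ∪ (Finset.Ioc 0 N).filter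
        (fun n => ∃ p, p.Prime ∧ p ∣ n ^ 2 + 1 ∧ N < p ∧ p ≤ ⌊Y⌋₊) := by
    intro n hn
    rw [Finset.mem_filter, hS, Finset.mem_filter] at hn
    obtain ⟨⟨hn, hsf, hb⟩, p, hp, hd, hlt⟩ := hn
    have hn' := Finset.mem_Ioc.mp hn
    rw [Finset.mem_union]
    by_cases h : p ≤ ⌊Y⌋₊
    · right
      rw [Finset.mem_filter]
      exact ⟨hn, p, hp, hd, hlt, h⟩
    · left
      rw [Set.Finite.mem_toFinset]
      refine ⟨hb, hn'.2, hsf, p, hp, hd, ?_⟩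
      have h1 : Y < p := (Nat.floor_lt (by linarith)).mp (not_le.mp h)
      have hn1 : (0:ℝ) < n := by exact_mod_cast hn'.1
      have hn2 : (n:ℝ) ≤ N := by exact_mod_cast hn'.2
      have h2 : Real.log n ≤ L := Real.log_le_log hn1 hn2
      have h3 : 0 ≤ Real.log n := Real.log_natCast_nonneg n
      have : 1 / 288 * (n:ℝ) * Real.log n ≤ 1 / 288 * N * L := by gcongr
      linarith
  have h1 := (Finset.card_le_card hsub).trans (Finset.card_union_le _ _)
  rw [Set.ncard_eq_toFinset_card T hTf]
  have h1' : ((S.filter (fun n => ∃ p, p.Prime ∧ p ∣ n ^ 2 + 1 ∧ N < p)).card : ℝ) ≤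
      hTf.toFinset.card + (((Finset.Ioc 0 N).filter
        (fun n => ∃ p, p.Prime ∧ p ∣ n ^ 2 + 1 ∧ N < p ∧ p ≤ ⌊Y⌋₊)).card : ℝ) := by
    exact_mod_cast h1
  have hbad' : (((Finset.Ioc 0 N).filter
        (fun n => ∃ p, p.Prime ∧ p ∣ n ^ 2 + 1 ∧ N < p ∧ p ≤ ⌊Y⌋₊)).card : ℝ) ≤ N / 24 := by
    refine le_trans ?_ (by linarith : 4 * (Nat.primeCounting ⌊Y⌋₊ : ℝ) ≤ N / 24)
    convert hbad
  have hgood' : (N : ℝ) / 12 ≤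
      ((S.filter (fun n => ∃ p, p.Prime ∧ p ∣ n ^ 2 + 1 ∧ N < p)).card : ℝ) := by
    convert hgood
  linarith
end

section
/- There exist constants δ > 0, c > 0 and x₀ such that for every real x ≥ x₀: c·x ≤ #{p prime : p ≥ δ·x·log x and p ∣ n²+1 for some positive integer n ≤ x} ≤ x. -/
namespace LargePrimes
open Finset ArithmeticFunction

noncomputable def chi (n : ℕ) : ℝ := ((ZMod.χ₄ (n : ZMod 4) : ℤ) : ℝ)

lemma chi_mul (a b : ℕ) : chi (a * b) = chi a * chi b := by
  unfold chi
  push_cast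
  rw [map_mul]
  push_cast
  rfl

lemma chi_cases (n : ℕ) : (n % 4 = 0 ∧ chi n = 0) ∨ (n % 4 = 1 ∧ chi n = 1) ∨
    (n % 4 = 2 ∧ chi n = 0) ∨ (n % 4 = 3 ∧ chi n = -1) := by
  have h : n % 4 < 4 := Nat.mod_lt _ (by norm_num)
  unfold chi
  rw [ZMod.χ₄_nat_eq_if_mod_four]
  have h2 : n % 2 = (n % 4) % 2 := by omega
  rw [h2]
  generalize n % 4 = r at h
  interval_cases r <;> simp

lemma abs_chi_le (n : ℕ) : |chi n| ≤ 1 := by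
  rcases chi_cases n with h | h | h | h <;> rw [h.2] <;> simp

noncomputable def chiS (n : ℕ) : ℝ := if n % 4 = 2 ∨ n % 4 = 3 then 1 else 0

lemma chiS_succ (n : ℕ) : chiS (n + 1) = chiS n + chi n := by
  rcases chi_cases n with h | h | h | h <;> rw [h.2] <;> unfold chiS <;>
    have := h.1 <;> simp [Nat.add_mod, this]

lemma chiS_diff (a b : ℕ) : |chiS a - chiS b| ≤ 1 := by
  unfold chiS; split_ifs <;> simp

lemma abel_chi (f : ℕ → ℝ) (a : ℕ) (hf : ∀ n, a ≤ n → f (n + 1) ≤ f n)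
    (h0 : ∀ n, a ≤ n → 0 ≤ f n) (N : ℕ) (hN : a ≤ N) :
    |∑ n ∈ Ico a N, chi n * f n| ≤ f a := by
  have key : |∑ n ∈ Ico a N, chi n * f n - f N * (chiS N - chiS a)| ≤ f a - f N := by
    induction N, hN using Nat.le_induction with
    | base => simp
    | succ n hn ih =>
      rw [sum_Ico_succ_top hn]
      have e : ∑ k ∈ Ico a n, chi k * f k + chi n * f n - f (n + 1) * (chiS (n + 1) - chiS a)
        = (∑ k ∈ Ico a n, chi k * f k - f n * (chiS n - chiS a)) +
          (f n - f (n + 1)) * (chiS (n + 1) - chiS a) := by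
        rw [chiS_succ]; ring
      rw [e]
      refine (abs_add_le _ _).trans ?_
      have h1 : |(f n - f (n + 1)) * (chiS (n + 1) - chiS a)| ≤ f n - f (n + 1) := by
        rw [abs_mul, abs_of_nonneg (sub_nonneg.2 (hf n hn))]
        exact mul_le_of_le_one_right (sub_nonneg.2 (hf n hn)) (chiS_diff _ _)
      linarith
  have h2 : |f N * (chiS N - chiS a)| ≤ f N := by
    rw [abs_mul, abs_of_nonneg (h0 N hN)]
    exact mul_le_of_le_one_right (h0 N hN) (chiS_diff _ _)
  rw [abs_le] at *
  constructor <;> linarith [key.1, key.2, h2.1, h2.2]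

noncomputable def chiA (N : ℕ) : ℝ := ∑ n ∈ Icc 1 N, chi n * (1 / (n : ℝ))

lemma chiA_diff (M N : ℕ) (h : M ≤ N) : |chiA N - chiA M| ≤ 1 / ((M : ℝ) + 1) := by
  have e : chiA N - chiA M = ∑ n ∈ Ico (M + 1) (N + 1), chi n * (1 / (n : ℝ)) := by
    unfold chiA
    have : ∀ K : ℕ, Icc 1 K = Ico 1 (K + 1) := fun K => by ext; simp
    rw [this, this, sub_eq_iff_eq_add, add_comm (∑ n ∈ _, _), sum_Ico_consecutive _ (by omega) (by omega)]
  rw [e]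
  have := abel_chi (fun n => 1 / (n : ℝ)) (M + 1) (fun n hn => by
    apply one_div_le_one_div_of_le
    · have : 0 < n := by omega
      exact_mod_cast this
    · push_cast; linarith) (fun n _ => by positivity) (N + 1) (by omega)
  simpa using this

lemma chi_one : chi 1 = 1 := by simp [chi]

lemma chiA_ge (N : ℕ) (h : 1 ≤ N) : 1 / 2 ≤ chiA N := by
  have h1 := chiA_diff 1 N h
  have : chiA 1 = 1 := by simp [chiA, chi_one]
  rw [this, abs_le] at h1
  norm_num at h1 ⊢
  linarith [h1.1]

lemma chi_log (N : ℕ) : |∑ n ∈ Icc 1 N, chi n * (Real.log n / n)| ≤ 1 := by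
  have h3 : Real.log (3 : ℕ) / (3 : ℕ) ≤ 1 := by
    rw [div_le_one (by norm_num)]
    exact (Real.log_le_self (by positivity))
  by_cases h : N < 3
  · have h2 : chi 2 = 0 := by have := chi_cases 2; norm_num at this; exact this
    interval_cases N <;> simp [sum_Icc_succ_top, h2]
  · have e : ∑ n ∈ Icc 1 N, chi n * (Real.log n / n)
        = ∑ n ∈ Ico 3 (N + 1), chi n * (Real.log n / n) := by
      have : Icc 1 N = Ico 1 (N + 1) := by ext; simp
      have h2 : chi 2 = 0 := by have := chi_cases 2; norm_num at this; exact this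
      rw [this, ← sum_Ico_consecutive _ (show 1 ≤ 3 by norm_num) (show 3 ≤ N + 1 by omega)]
      simp [sum_Ico_succ_top, h2]
    rw [e]
    refine le_trans (abel_chi (fun n => Real.log n / n) 3 (fun n hn => ?_) (fun n _ => ?_) (N + 1)
      (by omega)) h3
    · have h4 : (3 : ℝ) ≤ n := by exact_mod_cast hn
      have := Real.exp_one_lt_d9
      apply Real.log_div_self_antitoneOn
      · simp; linarith
      · simp; linarith
      · push_cast; linarith
    · have := Real.log_natCast_nonneg n
      positivity

/-- hyperbola style rearrangement -/
lemma sum_hyper (N : ℕ) (F : ℕ → ℕ → ℝ) :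
    ∑ n ∈ Icc 1 N, ∑ d ∈ n.divisors, F d (n / d) =
      ∑ d ∈ Icc 1 N, ∑ m ∈ Icc 1 (N / d), F d m := by
  rw [sum_sigma', sum_sigma']
  refine sum_bij' (fun a _ => ⟨a.2, a.1 / a.2⟩) (fun a _ => ⟨a.1 * a.2, a.1⟩) ?_ ?_ ?_ ?_ ?_
  · rintro ⟨n, d⟩ h
    simp only [mem_sigma, mem_Icc, Nat.mem_divisors] at h ⊢
    obtain ⟨⟨h1, h2⟩, h3, h4⟩ := h
    have hd : 0 < d := Nat.pos_of_dvd_of_pos h3 h1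
    have := Nat.le_of_dvd h1 h3
    exact ⟨⟨hd, this.trans h2⟩, Nat.div_pos this hd, Nat.div_le_div_right h2⟩
  · rintro ⟨d, m⟩ h
    simp only [mem_sigma, mem_Icc, Nat.mem_divisors] at h ⊢
    obtain ⟨⟨h1, h2⟩, h3, h4⟩ := h
    have := Nat.mul_pos h1 h3
    refine ⟨⟨this, ?_⟩, Dvd.intro _ rfl, by omega⟩
    rw [mul_comm]
    exact (Nat.le_div_iff_mul_le h1).1 h4
  · rintro ⟨n, d⟩ h
    simp only [mem_sigma, mem_Icc, Nat.mem_divisors] at h ⊢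
    simp [Nat.mul_div_cancel' h.2.1]
  · rintro ⟨d, m⟩ h
    simp only [mem_sigma, mem_Icc, Nat.mem_divisors] at h ⊢
    have : 0 < d := h.1.1
    simp [Nat.mul_div_cancel_left m this]
  · rintro ⟨n, d⟩ h
    rfl

lemma psi_Icc (N : ℕ) : ∑ d ∈ Icc 1 N, vonMangoldt d ≤ 6 * N := by
  have h := Chebyshev.psi_le_const_mul_self (x := N) (by positivity)
  have h2 : Chebyshev.psi N = ∑ d ∈ Icc 1 N, vonMangoldt d := by
    simp [Chebyshev.psi]; rfl
  have h3 : Real.log 4 ≤ 2 := by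
    have := Real.log_two_lt_d9
    rw [show (4:ℝ) = 2 ^ 2 by norm_num, Real.log_pow]; push_cast; linarith
  have : (0:ℝ) ≤ N := by positivity
  nlinarith

lemma mertens_all (N : ℕ) (hN : 1 ≤ N) : ∑ d ∈ Icc 1 N, vonMangoldt d / d ≤ Real.log N + 6 := by
  have hN' : (0:ℝ) < N := by exact_mod_cast hN
  have e : ∑ n ∈ Icc 1 N, Real.log n = ∑ d ∈ Icc 1 N, vonMangoldt d * ((N / d : ℕ) : ℝ) := by
    have := sum_hyper N (fun d _ => vonMangoldt d)
    simp only [vonMangoldt_sum, sum_const, Nat.card_Icc, nsmul_eq_mul, add_tsub_cancel_right] at this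
    rw [this]
    exact sum_congr rfl fun _ _ => mul_comm _ _
  have h1 : ∑ n ∈ Icc 1 N, Real.log n ≤ N * Real.log N := by
    have : ∑ n ∈ Icc 1 N, Real.log n ≤ ∑ n ∈ Icc 1 N, Real.log N := by
      refine sum_le_sum fun n hn => ?_
      rw [mem_Icc] at hn
      have : (0:ℝ) < n := by exact_mod_cast hn.1
      exact Real.log_le_log this (by exact_mod_cast hn.2)
    simpa using this
  have h2 : N * ∑ d ∈ Icc 1 N, vonMangoldt d / d ≤ ∑ d ∈ Icc 1 N, (vonMangoldt d * ((N / d : ℕ) : ℝ) + vonMangoldt d) := by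
    rw [mul_sum]
    refine sum_le_sum fun d hd => ?_
    have h3 : (N:ℝ) / d ≤ ((N / d : ℕ) : ℝ) + 1 := by
      rw [← Nat.floor_div_eq_div (K := ℝ)]
      exact (Nat.lt_floor_add_one _).le
    have := mul_le_mul_of_nonneg_left h3 (vonMangoldt_nonneg (n := d))
    calc _ = vonMangoldt d * ((N:ℝ) / d) := by ring
      _ ≤ _ := by linarith
  rw [sum_add_distrib, ← e] at h2
  have h4 := psi_Icc N
  have : N * ∑ d ∈ Icc 1 N, vonMangoldt d / d ≤ N * (Real.log N + 6) := by linarith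
  exact le_of_mul_le_mul_left this hN'

lemma mertens_chi (N : ℕ) (hN : 1 ≤ N) : ∑ d ∈ Icc 1 N, chi d * vonMangoldt d / d ≤ 14 := by
  have hN' : (0:ℝ) < N := by exact_mod_cast hN
  have e : ∑ n ∈ Icc 1 N, chi n * (Real.log n / n) =
      ∑ d ∈ Icc 1 N, chi d * vonMangoldt d / d * chiA (N / d) := by
    have := sum_hyper N (fun d m => chi d * vonMangoldt d / d * (chi m * (1 / (m:ℝ))))
    simp only [chiA, mul_sum]
    rw [← this]
    refine sum_congr rfl fun n hn => ?_
    rw [← vonMangoldt_sum, Finset.sum_div, mul_sum]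
    refine sum_congr rfl fun d hd => ?_
    obtain ⟨⟨m, rfl⟩, hn0⟩ := Nat.mem_divisors.1 hd
    have hd0 : d ≠ 0 := by rintro rfl; simp at hn0
    have hm0 : m ≠ 0 := by rintro rfl; simp at hn0
    rw [Nat.mul_div_cancel_left m (by omega), chi_mul]
    push_cast
    field_simp
  have h1 := chi_log N
  rw [e] at h1
  have h2 : |∑ d ∈ Icc 1 N, chi d * vonMangoldt d / d * (chiA N - chiA (N / d))| ≤ 6 := by
    refine (abs_sum_le_sum_abs _ _).trans ?_
    have : ∑ d ∈ Icc 1 N, |chi d * vonMangoldt d / d * (chiA N - chiA (N / d))| ≤ ∑ d ∈ Icc 1 N, vonMangoldt d / N := by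
      refine sum_le_sum fun d hd => ?_
      have hd0 : (0:ℝ) < d := by exact_mod_cast (mem_Icc.1 hd).1
      have h3 : (N:ℝ) / d ≤ ((N / d : ℕ) : ℝ) + 1 := by
        rw [← Nat.floor_div_eq_div (K := ℝ)]
        exact (Nat.lt_floor_add_one _).le
      have h4 : |chiA N - chiA (N / d)| ≤ d / N := by
        refine (chiA_diff (N / d) N (Nat.div_le_self _ _)).trans ?_
        rw [← one_div_div (N:ℝ) d]
        exact one_div_le_one_div_of_le (by positivity) h3
      rw [abs_mul, abs_div, abs_mul, abs_of_nonneg (vonMangoldt_nonneg (n := d)), abs_of_pos hd0]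
      have h5 : |chi d| * vonMangoldt d / d ≤ vonMangoldt d / d := by
        gcongr
        exact mul_le_of_le_one_left vonMangoldt_nonneg (abs_chi_le d)
      calc _ ≤ vonMangoldt d / d * (d / N) := by
            gcongr
        _ = _ := by field_simp
    refine this.trans ?_
    rw [← Finset.sum_div, div_le_iff₀ hN']
    exact psi_Icc N
  have h3 : (∑ d ∈ Icc 1 N, chi d * vonMangoldt d / d) * chiA N ≤ 7 := by
    have : (∑ d ∈ Icc 1 N, chi d * vonMangoldt d / d) * chiA N = 
      ∑ d ∈ Icc 1 N, chi d * vonMangoldt d / d * (chiA N - chiA (N / d)) + 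
      ∑ d ∈ Icc 1 N, chi d * vonMangoldt d / d * chiA (N / d) := by
      rw [← sum_add_distrib, sum_mul]
      refine sum_congr rfl fun _ _ => by ring
    rw [this]
    linarith [(abs_le.1 h1).2, (abs_le.1 h2).2]
  have h4 := chiA_ge N hN
  by_contra! h
  nlinarith

noncomputable def rr (q N : ℕ) : ℕ := #{n ∈ Icc 1 N | q ∣ n ^ 2 + 1}

lemma card_modEq (q N v : ℕ) (hq : 0 < q) :
    ((#{n ∈ Icc 1 N | n ≡ v [MOD q]} : ℕ) : ℝ) ≤ N / q + 1 := by
  have h := Nat.Ioc_filter_modEq_card 0 N hq v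
  have e : Icc 1 N = Ioc 0 N := by ext; simp [Nat.succ_le_iff]
  rw [e]
  have h2 : ((#{n ∈ Ioc 0 N | n ≡ v [MOD q]} : ℕ) : ℚ) ≤ N / q + 1 := by
    have : ((#{n ∈ Ioc 0 N | n ≡ v [MOD q]} : ℕ) : ℚ) =
      ((max (⌊((N:ℚ) - v) / q⌋ - ⌊(((0:ℕ):ℚ) - v) / q⌋) 0 : ℤ) : ℚ) := by
      rw [← h]; simp
    rw [this]
    push_cast
    apply max_le
    · have h1 := Int.floor_le (((N:ℚ) - v) / q)
      have h2 := Int.lt_floor_add_one ((0 - (v:ℚ)) / q)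
      have : ((N:ℚ) - v) / q = N / q + (0 - (v:ℚ)) / q := by ring
      linarith
    · positivity
  have h3 : (((#{n ∈ Ioc 0 N | n ≡ v [MOD q]} : ℕ) : ℚ) : ℝ) ≤ ((N / q + 1 : ℚ) : ℝ) := by
    exact_mod_cast h2
  push_cast at h3
  exact h3

lemma root_pm (p k m n : ℕ) (hp : p.Prime) (h2 : p ≠ 2) (hk : 0 < k)
    (hm : p ^ k ∣ m ^ 2 + 1) (hn : p ^ k ∣ n ^ 2 + 1) :
    n ≡ m [MOD p ^ k] ∨ n ≡ (p ^ k - 1) * m [MOD p ^ k] := by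
  have hpI : Prime (p : ℤ) := Nat.prime_iff_prime_int.1 hp
  have hm' : (p : ℤ) ^ k ∣ (m : ℤ) ^ 2 + 1 := by exact_mod_cast hm
  have hn' : (p : ℤ) ^ k ∣ (n : ℤ) ^ 2 + 1 := by exact_mod_cast hn
  have hd : (p : ℤ) ^ k ∣ ((m : ℤ) - n) * (m + n) := by
    have := dvd_sub hm' hn'
    have e : (m : ℤ) ^ 2 + 1 - (n ^ 2 + 1) = ((m : ℤ) - n) * (m + n) := by ring
    rwa [e] at this
  have hpos : 1 ≤ p ^ k := Nat.pos_of_ne_zero (pow_ne_zero _ hp.ne_zero)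
  by_cases h : (p : ℤ) ∣ (m : ℤ) - n
  · left
    have h' : ¬ (p : ℤ) ∣ (m : ℤ) + n := by
      intro h3
      have h4 := dvd_add h h3
      have e : (m : ℤ) - n + (m + n) = 2 * m := by ring
      rw [e] at h4
      rcases hpI.dvd_or_dvd h4 with h5 | h5
      · have h6 : p ∣ 2 := by exact_mod_cast h5
        exact h2 ((Nat.prime_dvd_prime_iff_eq hp Nat.prime_two).1 h6)
      · have h6 : (p : ℤ) ∣ (m : ℤ) ^ 2 + 1 := (dvd_pow_self _ hk.ne').trans hm'
        have h7 : (p : ℤ) ∣ 1 := (dvd_add_right (h5.trans (dvd_pow_self _ two_ne_zero))).1 h6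
        exact hpI.not_dvd_one h7
    rw [Nat.modEq_iff_dvd]
    push_cast
    exact hpI.pow_dvd_of_dvd_mul_right k h' hd
  · right
    rw [Nat.modEq_iff_dvd]
    push_cast [Nat.cast_sub hpos]
    have := hpI.pow_dvd_of_dvd_mul_left k h hd
    have e : ((p : ℤ) ^ k - 1) * m - n = p ^ k * m - (m + n) := by ring
    rw [e]
    exact dvd_sub (Dvd.intro _ rfl) this

lemma chi_nonneg_one (q : ℕ) : 0 ≤ 1 + chi q := by
  linarith [(abs_le.1 (abs_chi_le q)).1]

lemma chi_pow_one (p k : ℕ) (h : chi p = 1) : chi (p ^ k) = 1 := by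
  induction k with
  | zero => simp [chi_one]
  | succ k ih => rw [pow_succ, chi_mul, ih, h]; norm_num

lemma rr_bound (q N : ℕ) (hq : IsPrimePow q) (h2 : q ≠ 2) :
    (rr q N : ℝ) ≤ (1 + chi q) * (N / q + 1) := by
  have h0 : 0 ≤ (1 + chi q) * ((N:ℝ) / q + 1) :=
    mul_nonneg (chi_nonneg_one q) (by positivity)
  rcases Finset.eq_empty_or_nonempty ({n ∈ Icc 1 N | q ∣ n ^ 2 + 1}) with he | ⟨m, hm⟩
  · unfold rr; rw [he]; simpa using h0
  have hmq := (mem_filter.1 hm).2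
  obtain ⟨p, k, hp, hk, rfl⟩ := hq
  rw [← Nat.prime_iff] at hp
  have hp2 : p ≠ 2 := by
    rintro rfl
    have hk2 : 2 ≤ k := by
      by_contra!
      have : k = 1 := by omega
      subst this; simp at h2
    have h4 : 4 ∣ m ^ 2 + 1 := (pow_dvd_pow 2 hk2).trans hmq
    have : (m ^ 2 + 1) % 4 = 0 := Nat.mod_eq_zero_of_dvd h4
    have h5 : m % 4 < 4 := Nat.mod_lt _ (by norm_num)
    rw [Nat.add_mod, Nat.pow_mod] at this
    generalize m % 4 = r at *
    interval_cases r <;> simp at this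
  have hc : chi p = 1 := by
    haveI : Fact p.Prime := ⟨hp⟩
    have h3 : p % 4 ≠ 3 := by
      apply ZMod.mod_four_ne_three_of_sq_eq_neg_one (y := (m : ZMod p))
      have : ((m ^ 2 + 1 : ℕ) : ZMod p) = 0 :=
        (ZMod.natCast_eq_zero_iff _ _).2 ((dvd_pow_self _ hk.ne').trans hmq)
      push_cast at this
      exact eq_neg_of_add_eq_zero_left this
    have := hp.eq_two_or_odd
    rcases chi_cases p with h | h | h | h
    · omega
    · exact h.2
    · omega
    · omega
  rw [chi_pow_one p k hc]
  have hpos : 0 < p ^ k := Nat.pos_of_ne_zero (pow_ne_zero _ hp.ne_zero)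
  have hsub : {n ∈ Icc 1 N | p ^ k ∣ n ^ 2 + 1} ⊆ {n ∈ Icc 1 N | n ≡ m [MOD p ^ k]} ∪
      {n ∈ Icc 1 N | n ≡ (p ^ k - 1) * m [MOD p ^ k]} := by
    intro n hn
    rw [mem_filter] at hn
    rw [mem_union, mem_filter, mem_filter]
    rcases root_pm p k m n hp hp2 hk hmq hn.2 with h | h
    · exact Or.inl ⟨hn.1, h⟩
    · exact Or.inr ⟨hn.1, h⟩
  have h3 := (card_le_card hsub).trans (card_union_le _ _)
  have h4 : (rr (p ^ k) N : ℝ) ≤ ((#{n ∈ Icc 1 N | n ≡ m [MOD p ^ k]} : ℕ) : ℝ) +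
    ((#{n ∈ Icc 1 N | n ≡ (p ^ k - 1) * m [MOD p ^ k]} : ℕ) : ℝ) := by exact_mod_cast h3
  linarith [card_modEq (p ^ k) N m hpos, card_modEq (p ^ k) N ((p ^ k - 1) * m) hpos]

lemma L_rr (q N : ℕ) (h2 : q ≠ 2) :
    vonMangoldt q * rr q N ≤ vonMangoldt q * ((1 + chi q) * (N / q + 1)) := by
  by_cases h : IsPrimePow q
  · exact mul_le_mul_of_nonneg_left (rr_bound q N h h2) vonMangoldt_nonneg
  · rw [vonMangoldt_eq_zero_iff.2 h]; simp

lemma L_rr_large (q N : ℕ) (h2 : q ≠ 2) (hq : N < q) :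
    vonMangoldt q * rr q N ≤ 4 * vonMangoldt q := by
  refine (L_rr q N h2).trans ?_
  rw [mul_comm]
  refine mul_le_mul_of_nonneg_right ?_ vonMangoldt_nonneg
  have h1 : (N:ℝ) / q ≤ 1 := by
    rw [div_le_one (by exact_mod_cast (by omega : 0 < q))]
    exact_mod_cast hq.le
  have := (abs_le.1 (abs_chi_le q)).2
  have := chi_nonneg_one q
  nlinarith

lemma small_part (N : ℕ) (hN : 1 ≤ N) :
    ∑ q ∈ Icc 1 N, vonMangoldt q * rr q N ≤ N * Real.log N + 33 * N := by
  have hN' : (0:ℝ) < N := by exact_mod_cast hN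
  have h1 : ∑ q ∈ Icc 1 N, vonMangoldt q * rr q N ≤
      ∑ q ∈ Icc 1 N, (N * (vonMangoldt q / q) + N * (chi q * vonMangoldt q / q)
        + 2 * vonMangoldt q + if q = 2 then (N : ℝ) else 0) := by
    refine sum_le_sum fun q hq => ?_
    have hc := abs_le.1 (abs_chi_le q)
    have hL := vonMangoldt_nonneg (n := q)
    by_cases h : q = 2
    · subst h
      have h3 : chi 2 = 0 := by have := chi_cases 2; norm_num at this; exact this
      have h4 : vonMangoldt 2 ≤ 1 := by
        rw [vonMangoldt_apply_prime Nat.prime_two]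
        have := Real.log_two_lt_d9
        push_cast; linarith
      have h5 : (rr 2 N : ℝ) ≤ N := by
        have : rr 2 N ≤ N := by
          unfold rr
          refine (card_filter_le _ _).trans ?_
          simp
        exact_mod_cast this
      rw [h3]
      have h6 : vonMangoldt 2 * rr 2 N ≤ 1 * N := mul_le_mul h4 h5 (by positivity) (by norm_num)
      have : 0 ≤ N * (vonMangoldt 2 / (2:ℕ)) := by positivity
      simp only [if_true]
      linarith
    · simp only [h, if_false]
      refine (L_rr q N h).trans ?_
      have : vonMangoldt q * ((1 + chi q) * (N / q + 1)) = N * (vonMangoldt q / q)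
        + N * (chi q * vonMangoldt q / q) + (1 + chi q) * vonMangoldt q := by ring
      rw [this]
      nlinarith
  refine h1.trans ?_
  rw [sum_add_distrib, sum_add_distrib, sum_add_distrib, ← mul_sum, ← mul_sum, ← mul_sum]
  have h2 := mul_le_mul_of_nonneg_left (mertens_all N hN) hN'.le
  have h3 := mul_le_mul_of_nonneg_left (mertens_chi N hN) hN'.le
  have h4 := psi_Icc N
  have h5 : ∑ q ∈ Icc 1 N, (if q = 2 then (N : ℝ) else 0) ≤ N := by
    rw [sum_ite_eq']
    split_ifs <;> simp
  linarith

lemma log_swap (N : ℕ) : ∑ n ∈ Icc 1 N, Real.log ((n ^ 2 + 1 : ℕ) : ℝ) =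
    ∑ q ∈ Icc 1 (N ^ 2 + 1), vonMangoldt q * rr q N := by
  have h1 : ∀ n ∈ Icc 1 N, Real.log ((n ^ 2 + 1 : ℕ) : ℝ) =
      ∑ q ∈ Icc 1 (N ^ 2 + 1), if q ∣ n ^ 2 + 1 then vonMangoldt q else 0 := by
    intro n hn
    rw [← vonMangoldt_sum, ← sum_filter]
    refine sum_congr ?_ fun _ _ => rfl
    ext q
    simp only [Nat.mem_divisors, mem_filter, mem_Icc]
    constructor
    · rintro ⟨h, _⟩
      have h3 := Nat.pow_le_pow_left (mem_Icc.1 hn).2 2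
      exact ⟨⟨Nat.pos_of_dvd_of_pos h (by positivity),
        (Nat.le_of_dvd (by positivity) h).trans (by omega)⟩, h⟩
    · rintro ⟨_, h⟩
      exact ⟨h, by positivity⟩
  rw [sum_congr rfl h1, sum_comm]
  refine sum_congr rfl fun q _ => ?_
  rw [← sum_filter, sum_const, nsmul_eq_mul, mul_comm]
  rfl

lemma log_lower (N : ℕ) (hN : 1 ≤ N) : 2 * (N * Real.log N - N) ≤
    ∑ n ∈ Icc 1 N, Real.log ((n ^ 2 + 1 : ℕ) : ℝ) := by
  have h := Stirling.le_log_factorial_stirling (n := N) (by omega)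
  have h1 : 0 ≤ Real.log (2 * Real.pi) := Real.log_nonneg (by linarith [Real.pi_gt_three])
  have h2 := Real.log_natCast_nonneg N
  have h3 : Real.log (N.factorial : ℝ) = ∑ n ∈ Icc 1 N, Real.log n := by
    clear h h1 h2 hN
    induction N with
    | zero => simp
    | succ k ih =>
      rw [sum_Icc_succ_top (by omega), ← ih, Nat.factorial_succ, Nat.cast_mul,
        Real.log_mul (by positivity) (by positivity), add_comm]
  have h4 : ∑ n ∈ Icc 1 N, 2 * Real.log n ≤ ∑ n ∈ Icc 1 N, Real.log ((n ^ 2 + 1 : ℕ) : ℝ) := by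
    refine sum_le_sum fun n hn => ?_
    have hn0 : (0:ℝ) < n := by exact_mod_cast (mem_Icc.1 hn).1
    have : 2 * Real.log n = Real.log ((n:ℝ) ^ 2) := by rw [Real.log_pow]; norm_num
    rw [this]
    apply Real.log_le_log (by positivity)
    push_cast; linarith
  rw [← mul_sum, ← h3] at h4
  linarith

noncomputable def SS (N : ℕ) (Y : ℝ) : Finset ℕ :=
  {p ∈ Icc 1 (N ^ 2 + 1) | p.Prime ∧ Y ≤ p ∧ ∃ n ∈ Icc 1 N, p ∣ n ^ 2 + 1}

lemma main_ineq : ∃ C : ℝ, ∀ (N : ℕ) (Y : ℝ), 2 ≤ N → 0 ≤ Y →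
    N * Real.log N ≤ C * N + 8 * Y + 4 * #(SS N Y) * Real.log ((N ^ 2 + 1 : ℕ) : ℝ) := by
  obtain ⟨C, hC⟩ := Chebyshev.psi_sub_theta_le_mul_sqrt
  refine ⟨35 + 8 * |C|, fun N Y hN hY => ?_⟩
  have hN' : (2:ℝ) ≤ N := by exact_mod_cast hN
  have h1 := log_lower N (by omega)
  rw [log_swap] at h1
  have hlog : 0 ≤ Real.log ((N ^ 2 + 1 : ℕ) : ℝ) := Real.log_natCast_nonneg _
  have hterm : ∀ q ∈ Icc 1 (N ^ 2 + 1), vonMangoldt q * rr q N ≤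
      (if q ≤ N then vonMangoldt q * rr q N else 0) + (if ¬ q.Prime then 4 * vonMangoldt q else 0)
      + (if q ∈ (Ioc 0 ⌊Y⌋₊).filter Nat.Prime then 4 * Real.log q else 0)
      + (if q ∈ SS N Y then 4 * Real.log ((N ^ 2 + 1 : ℕ) : ℝ) else 0) := by
    intro q hq
    have hL := vonMangoldt_nonneg (n := q)
    have hlq := Real.log_natCast_nonneg q
    have n1 : 0 ≤ (if q ≤ N then vonMangoldt q * rr q N else 0) := by
      split_ifs <;> positivity
    have n2 : 0 ≤ (if ¬ q.Prime then 4 * vonMangoldt q else 0) := by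
      split_ifs <;> positivity
    have n3 : 0 ≤ (if q ∈ (Ioc 0 ⌊Y⌋₊).filter Nat.Prime then 4 * Real.log q else 0) := by
      split_ifs <;> positivity
    have n4 : 0 ≤ (if q ∈ SS N Y then 4 * Real.log ((N ^ 2 + 1 : ℕ) : ℝ) else 0) := by
      split_ifs <;> positivity
    by_cases c1 : q ≤ N
    · rw [if_pos c1] at n1 ⊢; linarith
    have hb := L_rr_large q N (by omega) (by omega)
    by_cases c2 : q.Prime
    swap
    · rw [if_pos c2] at n2 ⊢; linarith
    rw [vonMangoldt_apply_prime c2] at hb ⊢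
    by_cases c3 : q ∈ (Ioc 0 ⌊Y⌋₊).filter Nat.Prime
    · rw [if_pos c3] at n3 ⊢; rw [vonMangoldt_apply_prime c2] at n1 n2; linarith
    by_cases c4 : q ∈ SS N Y
    · rw [if_pos c4] at n4 ⊢
      have : Real.log q ≤ Real.log ((N ^ 2 + 1 : ℕ) : ℝ) := by
        apply Real.log_le_log
        · exact_mod_cast c2.pos
        · exact_mod_cast (mem_Icc.1 hq).2
      rw [vonMangoldt_apply_prime c2] at n1 n2
      linarith
    · have hr : rr q N = 0 := by
        unfold rr
        rw [card_eq_zero, filter_eq_empty_iff]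
        intro n hn hdv
        apply c4
        unfold SS
        rw [mem_filter]
        refine ⟨hq, c2, ?_, n, hn, hdv⟩
        by_contra! hlt
        apply c3
        rw [mem_filter, mem_Ioc]
        exact ⟨⟨c2.pos, Nat.le_floor hlt.le⟩, c2⟩
      rw [vonMangoldt_apply_prime c2] at n1 n2
      rw [hr] at n1 ⊢
      simp only [Nat.cast_zero, mul_zero] at n1 ⊢
      linarith
  have h2 := sum_le_sum hterm
  rw [sum_add_distrib, sum_add_distrib, sum_add_distrib] at h2
  have s1 : ∑ q ∈ Icc 1 (N ^ 2 + 1), (if q ≤ N then vonMangoldt q * rr q N else 0)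
      ≤ N * Real.log N + 33 * N := by
    rw [← sum_filter]
    have : (Icc 1 (N ^ 2 + 1)).filter (· ≤ N) = Icc 1 N := by
      ext q
      simp only [mem_filter, mem_Icc]
      have : N ≤ N ^ 2 + 1 := by nlinarith
      omega
    rw [this]
    exact small_part N (by omega)
  have s2 : ∑ q ∈ Icc 1 (N ^ 2 + 1), (if ¬ q.Prime then 4 * vonMangoldt q else 0)
      ≤ 8 * |C| * N := by
    have h := hC ((N ^ 2 + 1 : ℕ) : ℝ)
    rw [Chebyshev.psi_sub_theta_eq_sum_not_prime, Nat.floor_natCast] at h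
    rw [← sum_filter, ← mul_sum]
    have e : Icc 1 (N ^ 2 + 1) = Ioc 0 (N ^ 2 + 1) := by ext; simp [Nat.succ_le_iff]
    rw [e]
    have hs : √((N ^ 2 + 1 : ℕ) : ℝ) ≤ 2 * N := by
      rw [Real.sqrt_le_left (by positivity)]
      push_cast; nlinarith
    have h3 : C * √((N ^ 2 + 1 : ℕ) : ℝ) ≤ |C| * (2 * N) :=
      mul_le_mul (le_abs_self C) hs (Real.sqrt_nonneg _) (abs_nonneg _)
    linarith
  have s3 : ∑ q ∈ Icc 1 (N ^ 2 + 1), (if q ∈ (Ioc 0 ⌊Y⌋₊).filter Nat.Prime then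
      4 * Real.log q else 0) ≤ 8 * Y := by
    rw [← sum_filter]
    have h := Chebyshev.theta_le_log4_mul_x hY
    have h3 : Real.log 4 ≤ 2 := by
      have := Real.log_two_lt_d9
      rw [show (4:ℝ) = 2 ^ 2 by norm_num, Real.log_pow]; push_cast; linarith
    have h4 : ∑ q ∈ (Icc 1 (N ^ 2 + 1)).filter (· ∈ (Ioc 0 ⌊Y⌋₊).filter Nat.Prime),
        4 * Real.log q ≤ ∑ q ∈ (Ioc 0 ⌊Y⌋₊).filter Nat.Prime, 4 * Real.log q := by
      apply sum_le_sum_of_subset_of_nonneg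
      · intro q hq; exact (mem_filter.1 hq).2
      · intro q _ _
        have := Real.log_natCast_nonneg q
        positivity
    refine h4.trans ?_
    rw [← mul_sum]
    unfold Chebyshev.theta at h
    nlinarith
  have s4 : ∑ q ∈ Icc 1 (N ^ 2 + 1), (if q ∈ SS N Y then
      4 * Real.log ((N ^ 2 + 1 : ℕ) : ℝ) else 0) ≤ 4 * #(SS N Y) * Real.log ((N ^ 2 + 1 : ℕ) : ℝ) := by
    rw [← sum_filter, sum_const, nsmul_eq_mul]
    have : #((Icc 1 (N ^ 2 + 1)).filter (· ∈ SS N Y)) ≤ #(SS N Y) := by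
      apply card_le_card
      intro q hq; exact (mem_filter.1 hq).2
    have h' : ((#((Icc 1 (N ^ 2 + 1)).filter (· ∈ SS N Y)) : ℕ) : ℝ) ≤ #(SS N Y) := by
      exact_mod_cast this
    have := mul_le_mul_of_nonneg_right h' (by positivity : 0 ≤ 4 * Real.log ((N ^ 2 + 1 : ℕ) : ℝ))
    linarith
  linarith

lemma SS_card_le (N : ℕ) (Y : ℝ) (h : (N : ℝ) + 1 ≤ Y) : #(SS N Y) ≤ N := by
  have hex : ∀ p, ∃ n, p ∈ SS N Y → n ∈ Icc 1 N ∧ p ∣ n ^ 2 + 1 := by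
    intro p
    by_cases hp : p ∈ SS N Y
    · obtain ⟨n, hn⟩ := (mem_filter.1 hp).2.2.2
      exact ⟨n, fun _ => hn⟩
    · exact ⟨0, fun h => absurd h hp⟩
  choose f hf using hex
  have := card_le_card_of_injOn (s := SS N Y) (t := Icc 1 N) f (fun p hp => (hf p hp).1) (by
    intro p hp q hq hpq
    by_contra hne
    have hp' := (mem_filter.1 hp).2
    have hq' := (mem_filter.1 hq).2
    have hc := (Nat.coprime_primes hp'.1 hq'.1).2 hne
    have h1 := (hf p hp).2
    have h2 := (hf q hq).2
    rw [← hpq] at h2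
    have h3 := Nat.le_of_dvd (by positivity) (hc.mul_dvd_of_dvd_of_dvd h1 h2)
    have h4 := (mem_Icc.1 (hf p hp).1).2
    have h4' := (mem_Icc.1 (hf p hp).1).1
    have h5 : N + 1 ≤ p := by exact_mod_cast h.trans hp'.2.1
    have h6 : N + 1 ≤ q := by exact_mod_cast h.trans hq'.2.1
    have h7 := Nat.mul_le_mul h5 h6
    have h8 := Nat.pow_le_pow_left h4 2
    nlinarith)
  simpa using this

lemma set_eq (x Y : ℝ) (hx : 0 ≤ x) : {p : ℕ | p.Prime ∧ Y ≤ (p : ℝ) ∧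
          ∃ n : ℕ, 1 ≤ n ∧ (n : ℝ) ≤ x ∧ p ∣ (n^2 + 1)} = (SS ⌊x⌋₊ Y : Set ℕ) := by
  ext p
  simp only [SS, Set.mem_ofPred_eq, coe_filter, mem_Icc]
  constructor
  · rintro ⟨h1, h2, n, h3, h4, h5⟩
    have h6 := Nat.le_floor h4
    refine ⟨⟨h1.one_le, ?_⟩, h1, h2, n, ⟨h3, h6⟩, h5⟩
    have := Nat.pow_le_pow_left h6 2
    exact (Nat.le_of_dvd (by positivity) h5).trans (by omega)
  · rintro ⟨_, h1, h2, n, ⟨h3, h4⟩, h5⟩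
    exact ⟨h1, h2, n, h3, (Nat.le_floor_iff hx).1 h4, h5⟩
end LargePrimes

/-- The number of primes `p ≥ δ x log x` dividing `n²+1` for some positive integer `n ≤ x`
is of order `x`. -/
theorem count_large_primes_dividing_values
    : ∃ δ : ℝ, 0 < δ ∧ ∃ c : ℝ, 0 < c ∧ ∃ x₀ : ℝ, ∀ x : ℝ, x₀ ≤ x →
      c * x ≤
        ({p : ℕ | p.Prime ∧ δ * x * Real.log x ≤ (p : ℝ) ∧
          ∃ n : ℕ, 1 ≤ n ∧ (n : ℝ) ≤ x ∧ p ∣ (n^2 + 1)}.ncard : ℝ) ∧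
      ({p : ℕ | p.Prime ∧ δ * x * Real.log x ≤ (p : ℝ) ∧
          ∃ n : ℕ, 1 ≤ n ∧ (n : ℝ) ≤ x ∧ p ∣ (n^2 + 1)}.ncard : ℝ) ≤ x := by
  obtain ⟨C, hC⟩ := LargePrimes.main_ineq
  refine ⟨1 / 100, by norm_num, 1 / 100, by norm_num, Real.exp (300 + 4 * |C|), fun x hx => ?_⟩
  have hC0 := abs_nonneg C
  have hxpos : 0 < x := (Real.exp_pos _).trans_le hx
  have hlx : 300 + 4 * |C| ≤ Real.log x := (Real.le_log_iff_exp_le hxpos).2 hx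
  have hx300 : 300 ≤ x := by
    have := Real.add_one_le_exp (300 + 4 * |C|)
    linarith
  rw [LargePrimes.set_eq x _ hxpos.le, Set.ncard_coe_finset]
  set N := ⌊x⌋₊ with hN
  have hNx : (N : ℝ) ≤ x := Nat.floor_le hxpos.le
  have hxN : x < N + 1 := Nat.lt_floor_add_one x
  have hN2 : 2 ≤ N := Nat.le_floor (by push_cast; linarith)
  have hN2' : (299 : ℝ) ≤ N := by linarith
  set Y := 1 / 100 * x * Real.log x with hY
  constructor
  · have h := hC N Y hN2 (mul_nonneg (by positivity) (by linarith))
    set s : ℝ := ((LargePrimes.SS N Y).card : ℝ)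
    have hs : 0 ≤ s := by positivity
    have hl : Real.log x ≤ Real.log N + 1 := by
      have h1 : Real.log x ≤ Real.log (2 * N) := Real.log_le_log hxpos (by linarith)
      rw [Real.log_mul (by norm_num) (by linarith)] at h1
      linarith [Real.log_two_lt_d9]
    set l := Real.log N
    have hlN : Real.log ((N ^ 2 + 1 : ℕ) : ℝ) ≤ 3 * l := by
      have : 3 * l = Real.log ((N : ℝ) ^ 3) := by rw [Real.log_pow]; norm_num; rfl
      rw [this]
      apply Real.log_le_log (by positivity)
      push_cast
      nlinarith [sq_nonneg (N : ℝ)]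
    have h2 : 299 + 4 * |C| ≤ l := by linarith
    have hY2 : 8 * Y ≤ 1 / 3 * (N * l) := by
      have : x * Real.log x ≤ (2 * N) * (2 * l) := by
        apply mul_le_mul <;> linarith
      rw [hY]; nlinarith
    have h3 : C * N ≤ 1 / 4 * (N * l) := by
      have : C ≤ l / 4 := by linarith [le_abs_self C]
      nlinarith
    have h4 : 4 * s * Real.log ((N ^ 2 + 1 : ℕ) : ℝ) ≤ 12 * s * l := by nlinarith
    have h5 : 5 / 12 * N * l ≤ 12 * s * l := by nlinarith
    have h6 : 5 / 12 * (N:ℝ) ≤ 12 * s := le_of_mul_le_mul_right h5 (by linarith)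
    linarith
  · have h : (N : ℝ) + 1 ≤ Y := by
      rw [hY]
      nlinarith
    have := LargePrimes.SS_card_le N Y h
    calc ((LargePrimes.SS N Y).card : ℝ) ≤ N := by exact_mod_cast this
      _ ≤ x := hNx
end
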